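/- Let K be a global function field of characteristic different from 2, i.e. a finite extension of 𝔽_q(t) where q is odd. Then the set {(a₁, a₂) ∈ (Kˣ)² : −a₁a₂ is not a square in K} is diophantine over K. -/

import Mathlib

/-- A subset `S ⊆ K^ι` is diophantine over `K` if there are `m ∈ ℕ` and a polynomial
`f` in the variables `y_i` (`i : ι`) and `x_1, …, x_m` with coefficients in `K` such that
`a ∈ S` iff `f(a, x) = 0` has a solution `x ∈ K^m`. -/
def IsDiophantine {K : Type*} [Field K] {ι : Type*} [Fintype ι] (S : Set (ι → K)) : Prop :=
  ∃ (m : ℕ) (f : MvPolynomial (ι ⊕ Fin m) K),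
    ∀ a : ι → K, a ∈ S ↔ ∃ x : Fin m → K, MvPolynomial.eval (Sum.elim a x) f = 0

/-!
A power of Frobenius embeds `K` into its subfield `S` of elements separable over `𝔽_q(t)`, makes
`S` finite over `K`, and reflects squares; so we may assume that `K` is separable over `𝔽_q(t)`.

If `ε` is a nonsquare constant, then `x` is not a square in `K` iff `x` is not a square in `K(√ε)`
or `x ∈ ε K^{×2}`, so `K` may be replaced by `K(√ε)`. If `ε` is a square modulo a place `v`, then
`v` splits in `K(√ε)`: its residue field stays the same while the field of constants, which embeds
in it, grows. So after finitely many steps some constant `ε` is a nonresidue at some place `v₀`.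

Then `x` is not a square iff a certain system of norm equations for `√ε` is solvable in `K[√x]`.
If `x` is a square, then `K` is a quotient of `K[√x]`; but in `K` the system forces an unknown `f`
to have odd order, among the places where `ε` is a nonresidue (those of odd degree), at `v₀` only,
although principal divisors have degree `0`. If `x` is not a square, the field `K(√x)` has at `v₀`
either no such place of odd ramification or a pair of conjugate ones, a suitable `f` exists there,
and the equations are solvable because an element whose order is even wherever `ε` is a nonresidue
is a norm from `K(√x, √ε)`. This case of Hasse's norm theorem follows from the triviality of the
Herbrand quotient of the finite group of divisor classes of degree `0`.
-/

namespace NonsquareDiophantine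

open IsDedekindDomain
open scoped Polynomial

universe u

/-! ### Discrete places -/

/-- A discrete place of a field: a normalized discrete valuation `ord`, with the junk value
`ord 0 = 0`. Statements in which `0` should have infinite order use `Place.OrdGE`. -/
@[ext]
structure Place (L : Type*) [Field L] where
  ord : L → ℤ
  ord_zero : ord 0 = 0
  ord_mul : ∀ x y, x ≠ 0 → y ≠ 0 → ord (x * y) = ord x + ord y
  ord_add : ∀ x y, x ≠ 0 → y ≠ 0 → x + y ≠ 0 → min (ord x) (ord y) ≤ ord (x + y)
  exists_uniformizer : ∃ x, x ≠ 0 ∧ ord x = 1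

namespace Place

variable {L : Type*} [Field L] (v : Place L)

/-- The relation `n ≤ ord x`, with the convention `ord 0 = ∞`. -/
def OrdGE (x : L) (n : ℤ) : Prop := x = 0 ∨ n ≤ v.ord x

theorem ord_one : v.ord 1 = 0 := by
  have h := v.ord_mul 1 1 one_ne_zero one_ne_zero
  rw [mul_one] at h
  lia

theorem ord_neg_one : v.ord (-1) = 0 := by
  have h := v.ord_mul (-1) (-1) (by simp) (by simp)
  rw [neg_one_mul, neg_neg, v.ord_one] at h
  lia

theorem ord_neg (x : L) : v.ord (-x) = v.ord x := by
  obtain rfl | hx := eq_or_ne x 0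
  · rw [neg_zero]
  · rw [← neg_one_mul, v.ord_mul _ _ (by simp) hx, v.ord_neg_one, zero_add]

theorem ord_inv (x : L) : v.ord x⁻¹ = -v.ord x := by
  obtain rfl | hx := eq_or_ne x 0
  · simp [v.ord_zero]
  · have h := v.ord_mul x x⁻¹ hx (inv_ne_zero hx)
    rw [mul_inv_cancel₀ hx, v.ord_one] at h
    lia

theorem ord_div {x y : L} (hx : x ≠ 0) (hy : y ≠ 0) : v.ord (x / y) = v.ord x - v.ord y := by
  rw [div_eq_mul_inv, v.ord_mul _ _ hx (inv_ne_zero hy), v.ord_inv, sub_eq_add_neg]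

theorem ord_pow (x : L) (n : ℕ) : v.ord (x ^ n) = n * v.ord x := by
  obtain rfl | hx := eq_or_ne x 0
  · obtain rfl | hn := n.eq_zero_or_pos
    · simp [v.ord_one]
    · simp [zero_pow hn.ne', v.ord_zero]
  · induction n with
    | zero => simp [v.ord_one]
    | succ n ih =>
      rw [pow_succ, v.ord_mul _ _ (pow_ne_zero _ hx) hx, ih]
      push_cast
      ring

theorem ord_zpow (x : L) (n : ℤ) : v.ord (x ^ n) = n * v.ord x := by
  cases n with
  | ofNat n => simpa using v.ord_pow x n
  | negSucc n =>
    rw [zpow_negSucc, v.ord_inv, v.ord_pow, Int.negSucc_eq]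
    push_cast
    ring

theorem ord_eq_zero_of_pow_eq_one {x : L} {n : ℕ} (hn : n ≠ 0) (h : x ^ n = 1) :
    v.ord x = 0 := by
  have hord := v.ord_pow x n
  rw [h, v.ord_one] at hord
  exact (mul_eq_zero.mp hord.symm).resolve_left (mod_cast hn)

theorem ordGE_zero (n : ℤ) : v.OrdGE 0 n := Or.inl rfl

variable {v}

theorem OrdGE.mono {x : L} {m n : ℤ} (h : v.OrdGE x n) (hmn : m ≤ n) : v.OrdGE x m :=
  h.imp id hmn.trans

theorem OrdGE.le {x : L} {n : ℤ} (h : v.OrdGE x n) (hx : x ≠ 0) : n ≤ v.ord x :=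
  h.resolve_left hx

theorem ordGE_ord (x : L) : v.OrdGE x (v.ord x) := Or.inr le_rfl

theorem ordGE_iff {x : L} (hx : x ≠ 0) {n : ℤ} : v.OrdGE x n ↔ n ≤ v.ord x := by
  simp [OrdGE, hx]

theorem not_ordGE_iff {x : L} {n : ℤ} : ¬ v.OrdGE x n ↔ x ≠ 0 ∧ v.ord x < n := by
  simp [OrdGE]

theorem OrdGE.neg {x : L} {n : ℤ} (h : v.OrdGE x n) : v.OrdGE (-x) n :=
  h.imp neg_eq_zero.mpr fun h => by rwa [v.ord_neg]

theorem OrdGE.add {x y : L} {n : ℤ} (hx : v.OrdGE x n) (hy : v.OrdGE y n) :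
    v.OrdGE (x + y) n := by
  obtain rfl | hx0 := eq_or_ne x 0
  · simpa using hy
  obtain rfl | hy0 := eq_or_ne y 0
  · simpa using hx
  by_cases hxy : x + y = 0
  · exact Or.inl hxy
  · exact Or.inr ((le_min (hx.le hx0) (hy.le hy0)).trans (v.ord_add x y hx0 hy0 hxy))

theorem OrdGE.sub {x y : L} {n : ℤ} (hx : v.OrdGE x n) (hy : v.OrdGE y n) :
    v.OrdGE (x - y) n := by
  rw [sub_eq_add_neg]
  exact hx.add hy.neg

theorem OrdGE.mul {x y : L} {m n : ℤ} (hx : v.OrdGE x m) (hy : v.OrdGE y n) :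
    v.OrdGE (x * y) (m + n) := by
  obtain rfl | hx0 := eq_or_ne x 0
  · simpa using v.ordGE_zero _
  obtain rfl | hy0 := eq_or_ne y 0
  · simpa using v.ordGE_zero _
  · exact Or.inr ((add_le_add (hx.le hx0) (hy.le hy0)).trans_eq (v.ord_mul x y hx0 hy0).symm)

theorem ordGE_one : v.OrdGE 1 0 := Or.inr v.ord_one.ge

theorem OrdGE.pow {x : L} {m : ℤ} (hx : v.OrdGE x m) (n : ℕ) : v.OrdGE (x ^ n) (n * m) := by
  induction n with
  | zero => simpa using ordGE_one
  | succ n ih =>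
    rw [pow_succ]
    exact (ih.mul hx).mono (by push_cast; linarith)

theorem OrdGE.sum {ι : Type*} {s : Finset ι} {f : ι → L} {n : ℤ} (h : ∀ i ∈ s, v.OrdGE (f i) n) :
    v.OrdGE (∑ i ∈ s, f i) n :=
  Finset.sum_induction f (v.OrdGE · n) (fun _ _ => OrdGE.add) (v.ordGE_zero n) h

theorem ord_eq_of_ordGE_sub {x y : L} (hx : x ≠ 0) (h : v.OrdGE (x - y) (v.ord x + 1)) :
    y ≠ 0 ∧ v.ord y = v.ord x := by
  have hy : y ≠ 0 := by
    rintro rfl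
    have := h.le (by simpa using hx)
    simp at this
  refine ⟨hy, le_antisymm ?_ ?_⟩
  · by_contra! hlt
    have hx' : v.OrdGE x (v.ord x + 1) := by
      simpa using h.add ((ordGE_ord y).mono (Int.add_one_le_iff.mpr hlt))
    linarith [hx'.le hx]
  · have hy' : v.OrdGE y (v.ord x) := by
      simpa using (ordGE_ord x).sub (h.mono (by lia))
    exact hy'.le hy

theorem ord_add_eq_of_ordGE {x y : L} (hx : x ≠ 0) (h : v.OrdGE y (v.ord x + 1)) :
    x + y ≠ 0 ∧ v.ord (x + y) = v.ord x :=
  ord_eq_of_ordGE_sub hx (by simpa using h.neg)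

theorem ord_add_eq_of_lt {x y : L} (hx : x ≠ 0) (h : v.ord x < v.ord y) :
    x + y ≠ 0 ∧ v.ord (x + y) = v.ord x :=
  ord_add_eq_of_ordGE hx (Or.inr h)

theorem OrdGE.inv_of_not {x : L} (h : ¬ v.OrdGE x 0) : v.OrdGE x⁻¹ 1 := by
  have hlt := (not_ordGE_iff.mp h).2
  exact Or.inr (by rw [v.ord_inv]; lia)

variable (v) in
theorem exists_ord_eq (n : ℤ) : ∃ x, x ≠ 0 ∧ v.ord x = n := by
  obtain ⟨π, hπ, hord⟩ := v.exists_uniformizer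
  exact ⟨π ^ n, zpow_ne_zero _ hπ, by rw [v.ord_zpow, hord, mul_one]⟩

theorem eq_of_forall_ordGE_zero_imp {w : Place L} (h : ∀ x, v.OrdGE x 0 → w.OrdGE x 0) :
    v = w := by
  have unit_imp_unit : ∀ x, x ≠ 0 → v.ord x = 0 → w.ord x = 0 := by
    intro x hx h0
    have hle := (h x (Or.inr h0.ge)).le hx
    have hge := (h x⁻¹ (Or.inr (by rw [v.ord_inv]; lia))).le (inv_ne_zero hx)
    rw [w.ord_inv] at hge
    lia
  obtain ⟨π, hπ, hordπ⟩ := v.exists_uniformizer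
  have ord_eq_mul : ∀ x, x ≠ 0 → w.ord x = v.ord x * w.ord π := by
    intro x hx
    have hπx := zpow_ne_zero (v.ord x) hπ
    have hunit := unit_imp_unit (x / π ^ v.ord x) (div_ne_zero hx hπx) (by
      rw [v.ord_div hx hπx, v.ord_zpow, hordπ]; ring)
    rw [w.ord_div hx hπx, w.ord_zpow] at hunit
    lia
  have hwπ : w.ord π = 1 := by
    obtain ⟨y, hy, hordy⟩ := w.exists_uniformizer
    refine Int.eq_one_of_dvd_one ((h π (Or.inr (by lia))).le hπ) ⟨v.ord y, ?_⟩
    rw [← hordy, ord_eq_mul y hy, mul_comm]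
  ext x
  obtain rfl | hx := eq_or_ne x 0
  · rw [v.ord_zero, w.ord_zero]
  · rw [ord_eq_mul x hx, hwπ, mul_one]

theorem exists_ord_pos_ord_neg {w : Place L} (h : v ≠ w) :
    ∃ u, u ≠ 0 ∧ 0 < v.ord u ∧ w.ord u < 0 := by
  have exists_separating : ∀ v w : Place L, v ≠ w → ∃ x, v.OrdGE x 0 ∧ ¬ w.OrdGE x 0 := by
    intro v w h
    by_contra! hle
    exact h (eq_of_forall_ordGE_zero_imp hle)
  obtain ⟨x, hvx, hwx⟩ := exists_separating v w h
  obtain ⟨y, hwy, hvy⟩ := exists_separating w v h.symm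
  obtain ⟨hx0, hwx⟩ := not_ordGE_iff.mp hwx
  obtain ⟨hy0, hvy⟩ := not_ordGE_iff.mp hvy
  have hvx := hvx.le hx0
  have hwy := hwy.le hy0
  refine ⟨x / y, div_ne_zero hx0 hy0, ?_, ?_⟩
  · rw [v.ord_div hx0 hy0]
    lia
  · rw [w.ord_div hx0 hy0]
    lia

theorem ord_pow_add_neg {u y : L} {N : ℕ} (hu0 : u ≠ 0) (hy0 : y ≠ 0) (hu : v.ord u < 0)
    (hN : -v.ord u < N) : v.ord (y ^ N + u) < 0 := by
  have hpow := v.ord_pow y N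
  rcases lt_or_ge (v.ord y) 0 with hy | hy
  · have hlt : v.ord (y ^ N) < v.ord u := by
      rw [hpow]
      nlinarith
    rw [(ord_add_eq_of_lt (pow_ne_zero N hy0) hlt).2]
    lia
  · have hlt : v.ord u < v.ord (y ^ N) := hu.trans_le (by rw [hpow]; positivity)
    rwa [add_comm, (ord_add_eq_of_lt hu0 hlt).2]

theorem exists_ord_pos_forall_ord_neg (v : Place L) (S : Finset (Place L)) (hS : v ∉ S) :
    ∃ u, u ≠ 0 ∧ 0 < v.ord u ∧ ∀ w ∈ S, w.ord u < 0 := by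
  classical
  induction S using Finset.induction_on with
  | empty =>
    obtain ⟨π, hπ, hord⟩ := v.exists_uniformizer
    exact ⟨π, hπ, by lia, by simp⟩
  | insert w S _ ih =>
    obtain ⟨u, hu0, huv, huS⟩ := ih fun h => hS (by simp [h])
    by_cases hwu : w.ord u < 0
    · exact ⟨u, hu0, huv, (Finset.forall_mem_insert _ _ _).mpr ⟨hwu, huS⟩⟩
    obtain ⟨y, hy0, hyv, hyw⟩ := exists_ord_pos_ord_neg (v := v) (w := w)
      fun h => hS (by simp [h])
    obtain ⟨N, hN0, hN⟩ : ∃ N : ℕ, 0 < N ∧ ∀ w' ∈ S, -w'.ord u < N := by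
      refine ⟨1 + ∑ w' ∈ S, (w'.ord u).natAbs, by lia, fun w' hw' => ?_⟩
      have := Finset.single_le_sum (f := fun w' : Place L => (w'.ord u).natAbs)
        (fun _ _ => Nat.zero_le _) hw'
      lia
    have hyN := pow_ne_zero N hy0
    have hwyN : w.ord (y ^ N) < 0 := by
      rw [w.ord_pow]
      exact mul_neg_of_pos_of_neg (mod_cast hN0) hyw
    have hvyN : 0 < v.ord (y ^ N) := by
      rw [v.ord_pow]
      exact mul_pos (mod_cast hN0) hyv
    obtain ⟨hne, hord⟩ := ord_add_eq_of_lt (v := w) (y := u) hyN (by lia)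
    refine ⟨y ^ N + u, hne, (lt_min hvyN huv).trans_le (v.ord_add _ _ hyN hu0 hne),
      (Finset.forall_mem_insert _ _ _).mpr ⟨hord ▸ hwyN, fun w' hw' => ?_⟩⟩
    exact ord_pow_add_neg hu0 hy0 (huS w' hw') (hN w' hw')

theorem exists_ordGE_sub_one_forall_ordGE (v : Place L) (S : Finset (Place L)) (hS : v ∉ S)
    (n : ℤ) : ∃ x, v.OrdGE (x - 1) n ∧ ∀ w ∈ S, w.OrdGE x n := by
  obtain ⟨u, hu0, huv, huS⟩ := exists_ord_pos_forall_ord_neg v S hS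
  obtain ⟨N, hN0, hN⟩ : ∃ N : ℕ, 0 < (N : ℤ) ∧ n ≤ N := ⟨n.toNat + 1, by lia, by lia⟩
  have huN := pow_ne_zero N hu0
  obtain ⟨hne, hord⟩ : 1 + u ^ N ≠ 0 ∧ v.ord (1 + u ^ N) = v.ord 1 :=
    ord_add_eq_of_lt one_ne_zero (by rw [v.ord_one, v.ord_pow]; positivity)
  refine ⟨(1 + u ^ N)⁻¹, ?_, fun w hw => Or.inr ?_⟩
  · have hsub : (1 + u ^ N)⁻¹ - 1 = -(u ^ N / (1 + u ^ N)) := by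
      field_simp
      ring
    rw [hsub]
    refine OrdGE.neg (Or.inr ?_)
    rw [v.ord_div huN hne, hord, v.ord_one, v.ord_pow]
    nlinarith
  · have hwu := huS w hw
    have hlt : w.ord (u ^ N) < w.ord 1 := by
      rw [w.ord_one, w.ord_pow]
      exact mul_neg_of_pos_of_neg hN0 hwu
    rw [w.ord_inv, add_comm, (ord_add_eq_of_lt huN hlt).2, w.ord_pow]
    nlinarith

theorem weak_approximation (S : Finset (Place L)) (a : Place L → L) (n : ℤ) :
    ∃ x, ∀ v ∈ S, v.OrdGE (x - a v) n := by
  classical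
  obtain ⟨N, hN⟩ : ∃ N : ℤ, ∀ v ∈ S, ∀ w ∈ S, n ≤ N + w.ord (a v) := by
    refine ⟨n + ∑ v ∈ S, ∑ w ∈ S, |w.ord (a v)|, fun v hv w hw => ?_⟩
    have hinner := Finset.single_le_sum (f := fun w : Place L => |w.ord (a v)|)
      (fun _ _ => abs_nonneg _) hw
    have houter := Finset.single_le_sum (f := fun v => ∑ w ∈ S, |w.ord (a v)|)
      (fun _ _ => Finset.sum_nonneg fun _ _ => abs_nonneg _) hv
    linarith [neg_abs_le (w.ord (a v))]
  choose x hx_one hx_small using fun v : Place L =>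
    exists_ordGE_sub_one_forall_ordGE v (S.erase v) (by simp) N
  refine ⟨∑ v ∈ S, x v * a v, fun v hv => ?_⟩
  have hsum : ∑ w ∈ S, x w * a w - a v = ∑ w ∈ S, (x w * a w - if w = v then a v else 0) := by
    rw [Finset.sum_sub_distrib, Finset.sum_ite_eq' S v]
    simp [hv]
  rw [hsum]
  refine OrdGE.sum fun w hw => ?_
  by_cases hwv : w = v
  · subst hwv
    rw [if_pos rfl, show x w * a w - a w = (x w - 1) * a w by ring]
    exact ((hx_one w).mul (ordGE_ord _)).mono (hN w hw w hw)
  · rw [if_neg hwv, sub_zero]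
    have hvw : v ∈ S.erase w := Finset.mem_erase.mpr ⟨Ne.symm hwv, hv⟩
    exact ((hx_small w v hvw).mul (ordGE_ord _)).mono (hN w hw v hv)

end Place

namespace Place

variable {M N : Type*} [Field M] [Field N]

theorem exists_ord_map_eq_mul (f : M →+* N) (w : Place N) {x : M}
    (hord : w.ord (f x) ≠ 0) : ∃ (v : Place M) (e : ℤ), 0 < e ∧ ∀ x, w.ord (f x) = e * v.ord x := by
  have map_ne {x : M} (hx : x ≠ 0) : f x ≠ 0 := (map_ne_zero f).mpr hx
  let H : AddSubgroup ℤ :=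
    { carrier := {n | ∃ x : M, x ≠ 0 ∧ w.ord (f x) = n}
      zero_mem' := ⟨1, one_ne_zero, by rw [map_one, w.ord_one]⟩
      add_mem' := by
        rintro _ _ ⟨x, hx, rfl⟩ ⟨y, hy, rfl⟩
        exact ⟨x * y, mul_ne_zero hx hy, by rw [map_mul, w.ord_mul _ _ (map_ne hx) (map_ne hy)]⟩
      neg_mem' := by
        rintro _ ⟨x, hx, rfl⟩
        exact ⟨x⁻¹, inv_ne_zero hx, by rw [map_inv₀, w.ord_inv]⟩ }
  obtain ⟨g, hg⟩ := Int.subgroup_cyclic H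
  have mem_H (n : ℤ) : n ∈ H ↔ |g| ∣ n := by
    rw [hg, AddSubgroup.mem_closure_singleton, abs_dvd]
    exact exists_congr fun m => by rw [smul_eq_mul, mul_comm, eq_comm]
  have hdvd (x : M) : |g| ∣ w.ord (f x) := by
    obtain rfl | hx := eq_or_ne x 0
    · simp [w.ord_zero]
    · exact (mem_H _).mp ⟨x, hx, rfl⟩
  have hpos : 0 < |g| := by
    refine abs_pos.mpr fun h => hord ?_
    simpa [h] using hdvd x
  choose o ho using hdvd
  refine ⟨⟨o, ?_, fun x y hx hy => ?_, fun x y hx hy hxy => ?_, ?_⟩, |g|, hpos, ho⟩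
  · have h := ho 0
    rw [map_zero, w.ord_zero] at h
    exact (mul_eq_zero.mp h.symm).resolve_left hpos.ne'
  · have h := w.ord_mul _ _ (map_ne hx) (map_ne hy)
    rw [← map_mul, ho, ho, ho, ← mul_add] at h
    exact mul_left_cancel₀ hpos.ne' h
  · have h := w.ord_add _ _ (map_ne hx) (map_ne hy) (by rw [← map_add]; exact map_ne hxy)
    rw [← map_add, ho, ho, ho, ← mul_min_of_nonneg _ _ hpos.le] at h
    exact le_of_mul_le_mul_left h hpos
  · obtain ⟨x, hx, h⟩ := (mem_H |g|).mpr dvd_rfl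
    rw [ho] at h
    exact ⟨x, hx, mul_left_cancel₀ hpos.ne' (by rw [h, mul_one])⟩

/-- The residue class of `ε` at `v` is not a square; used for `ε` of order `0` at `v`. -/
def IsNonresidue {L : Type*} [Field L] (v : Place L) (ε : L) : Prop :=
  ∀ c : L, ¬ v.OrdGE (c * c - ε) 1

end Place

/-! ### Quadratic extensions and their places -/

/-- The data exhibiting `N` as a quadratic extension `M(√a)` in characteristic not `2`: a square
root of a nonsquare `a` generating `N` over `M`, and the nontrivial automorphism `σ`. -/
structure SqrtExt (M N : Type*) [Field M] [Field N] [Algebra M N] (a : M) where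
  root : N
  root_mul_self : root * root = algebraMap M N a
  exists_eq_add_mul_root :
    ∀ z : N, ∃ x y : M, z = algebraMap M N x + algebraMap M N y * root
  not_isSquare : ¬ IsSquare a
  two_ne_zero : (2 : M) ≠ 0
  σ : N →+* N
  σ_algebraMap : ∀ x : M, σ (algebraMap M N x) = algebraMap M N x
  σ_root : σ root = -root

namespace SqrtExt

variable {M N : Type*} [Field M] [Field N] [Algebra M N] {a : M} (Q : SqrtExt M N a)

local notation "ι" => algebraMap M N

theorem σ_σ (z : N) : Q.σ (Q.σ z) = z := by
  obtain ⟨x, y, rfl⟩ := Q.exists_eq_add_mul_root z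
  simp [Q.σ_algebraMap, Q.σ_root]

include Q in
theorem ext_two_ne_zero : (2 : N) ≠ 0 := by
  rw [← map_ofNat ι]
  exact (map_ne_zero ι).mpr Q.two_ne_zero

theorem exists_eq_algebraMap {z : N} (h : Q.σ z = z) : ∃ x : M, z = ι x := by
  obtain ⟨x, y, rfl⟩ := Q.exists_eq_add_mul_root z
  have hy : 2 * (ι y * Q.root) = 0 := by
    simp only [map_add, map_mul, Q.σ_algebraMap, Q.σ_root] at h
    linear_combination -h
  exact ⟨x, by rw [(mul_eq_zero.mp hy).resolve_left Q.ext_two_ne_zero, add_zero]⟩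

theorem exists_add_σ_eq (z : N) : ∃ t : M, z + Q.σ z = ι t :=
  Q.exists_eq_algebraMap (by rw [map_add, Q.σ_σ, add_comm])

theorem exists_mul_σ_eq (z : N) : ∃ n : M, z * Q.σ z = ι n :=
  Q.exists_eq_algebraMap (by rw [map_mul, Q.σ_σ, mul_comm])

theorem exists_sub_σ_mul_root_eq (z : N) : ∃ s : M, (z - Q.σ z) * Q.root = ι s :=
  Q.exists_eq_algebraMap (by rw [map_mul, map_sub, Q.σ_σ, Q.σ_root]; ring)

theorem root_ne_zero : Q.root ≠ 0 := by
  intro h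
  have ha : ι a = 0 := by rw [← Q.root_mul_self, h, mul_zero]
  exact Q.not_isSquare ((map_eq_zero ι).mp ha ▸ IsSquare.zero)

theorem coord_unique {x y x' y' : M} (h : ι x + ι y * Q.root = ι x' + ι y' * Q.root) :
    x = x' ∧ y = y' := by
  have hσ := congrArg Q.σ h
  simp only [map_add, map_mul, Q.σ_algebraMap, Q.σ_root] at hσ
  have hx : ι x = ι x' := mul_left_cancel₀ Q.ext_two_ne_zero (by linear_combination h + hσ)
  rw [hx, add_right_inj] at h
  exact ⟨(algebraMap M N).injective hx, (algebraMap M N).injective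
    (mul_right_cancel₀ Q.root_ne_zero h)⟩

/-- The place `w ∘ σ` conjugate to `w`. -/
def conjPlace (w : Place N) : Place N where
  ord x := w.ord (Q.σ x)
  ord_zero := by rw [map_zero, w.ord_zero]
  ord_mul x y hx hy := by
    rw [map_mul, w.ord_mul _ _ ((map_ne_zero _).mpr hx) ((map_ne_zero _).mpr hy)]
  ord_add x y hx hy hxy := by
    rw [map_add]
    apply w.ord_add _ _ ((map_ne_zero _).mpr hx) ((map_ne_zero _).mpr hy)
    rw [← map_add]
    exact (map_ne_zero _).mpr hxy
  exists_uniformizer := by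
    obtain ⟨x, hx, h⟩ := w.exists_uniformizer
    exact ⟨Q.σ x, (map_ne_zero _).mpr hx, by rw [Q.σ_σ, h]⟩

theorem conjPlace_ord (w : Place N) (x : N) : (Q.conjPlace w).ord x = w.ord (Q.σ x) := rfl

theorem conjPlace_conjPlace (w : Place N) : Q.conjPlace (Q.conjPlace w) = w := by
  ext x
  rw [Q.conjPlace_ord, Q.conjPlace_ord, Q.σ_σ]

theorem conjPlace_ordGE (w : Place N) (x : N) (n : ℤ) :
    (Q.conjPlace w).OrdGE x n ↔ w.OrdGE (Q.σ x) n := by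
  rw [Place.OrdGE, Place.OrdGE, Q.conjPlace_ord, map_eq_zero]

include Q in
theorem exists_ord_algebraMap_ne_zero (w : Place N) : ∃ x : M, w.ord (ι x) ≠ 0 := by
  by_contra! h
  obtain ⟨z, hz, hordz⟩ := w.exists_uniformizer
  obtain ⟨t, ht⟩ := Q.exists_add_σ_eq z
  obtain ⟨n, hn⟩ := Q.exists_mul_σ_eq z
  have hn0 : n ≠ 0 := by
    rintro rfl
    rw [map_zero] at hn
    exact mul_ne_zero hz ((map_ne_zero _).mpr hz) hn
  have hz1 : w.OrdGE z 1 := Or.inr hordz.ge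
  have htrace : w.OrdGE (ι t) 0 := Or.inr (h t).ge
  have hnorm : ι n = ι t * z - z * z := by rw [← hn, ← ht]; ring
  have hn1 : w.OrdGE (ι n) 1 := by
    rw [hnorm]
    exact ((htrace.mul hz1).mono (by lia)).sub ((hz1.mul hz1).mono (by lia))
  have := hn1.le ((map_ne_zero ι).mpr hn0)
  rw [h n] at this
  lia

include Q in
theorem exists_restriction (w : Place N) :
    ∃ (v : Place M) (e : ℤ), 0 < e ∧ ∀ x, w.ord (ι x) = e * v.ord x := by
  obtain ⟨x, hx⟩ := Q.exists_ord_algebraMap_ne_zero w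
  exact w.exists_ord_map_eq_mul ι hx

/-- The place of `M` below the place `w` of `N`. -/
noncomputable def restrict (w : Place N) : Place M := (Q.exists_restriction w).choose

/-- The ramification index of `w` over `M`. -/
noncomputable def ramificationIdx (w : Place N) : ℤ :=
  (Q.exists_restriction w).choose_spec.choose

theorem ramificationIdx_pos (w : Place N) : 0 < Q.ramificationIdx w :=
  (Q.exists_restriction w).choose_spec.choose_spec.1

theorem ord_algebraMap (w : Place N) (x : M) :
    w.ord (ι x) = Q.ramificationIdx w * (Q.restrict w).ord x :=
  (Q.exists_restriction w).choose_spec.choose_spec.2 x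

theorem ordGE_algebraMap_zero (w : Place N) (x : M) :
    w.OrdGE (ι x) 0 ↔ (Q.restrict w).OrdGE x 0 := by
  rw [Place.OrdGE, Place.OrdGE, map_eq_zero, Q.ord_algebraMap,
    mul_nonneg_iff_of_pos_left (Q.ramificationIdx_pos w)]

theorem ordGE_algebraMap_one (w : Place N) (x : M) :
    w.OrdGE (ι x) 1 ↔ (Q.restrict w).OrdGE x 1 := by
  rw [Place.OrdGE, Place.OrdGE, map_eq_zero, Q.ord_algebraMap, Order.one_le_iff_pos,
    mul_pos_iff_of_pos_left (Q.ramificationIdx_pos w), Order.one_le_iff_pos]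

theorem restrict_eq {w : Place N} {v : Place M} (h : ∀ x, w.OrdGE (ι x) 0 → v.OrdGE x 0) :
    Q.restrict w = v :=
  Place.eq_of_forall_ordGE_zero_imp fun x hx => h x ((Q.ordGE_algebraMap_zero w x).mpr hx)

theorem restrict_conjPlace (w : Place N) : Q.restrict (Q.conjPlace w) = Q.restrict w := by
  refine Q.restrict_eq fun x hx => ?_
  rw [Q.conjPlace_ordGE, Q.σ_algebraMap] at hx
  exact (Q.ordGE_algebraMap_zero w x).mp hx

theorem ramificationIdx_conjPlace (w : Place N) :
    Q.ramificationIdx (Q.conjPlace w) = Q.ramificationIdx w := by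
  obtain ⟨x, _, hx⟩ := (Q.restrict w).exists_uniformizer
  have h := Q.ord_algebraMap (Q.conjPlace w) x
  rw [Q.conjPlace_ord, Q.σ_algebraMap, Q.restrict_conjPlace, hx, Q.ord_algebraMap, hx] at h
  lia

/- An element close to `1` at `w`, `σw` and to `0` at `w'`, `σw'` would have a norm in `M` which
is a unit at the place below `w` but not at the place below `w'`. -/
theorem eq_or_eq_conjPlace {w w' : Place N} (h : Q.restrict w = Q.restrict w') :
    w' = w ∨ w' = Q.conjPlace w := by
  classical
  by_contra! ⟨hne, hneσ⟩
  have hσne : Q.conjPlace w' ≠ w := fun hw => hneσ (by rw [← hw, Q.conjPlace_conjPlace])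
  have hσneσ : Q.conjPlace w' ≠ Q.conjPlace w := fun hw =>
    hne (by rw [← Q.conjPlace_conjPlace w', hw, Q.conjPlace_conjPlace])
  obtain ⟨z, hz⟩ := Place.weak_approximation {w, Q.conjPlace w, w', Q.conjPlace w'}
    (fun u => if u = w ∨ u = Q.conjPlace w then (1 : N) else 0) 1
  have hzw : w.OrdGE (z - 1) 1 := by simpa using hz w (by simp)
  have hσzw : w.OrdGE (Q.σ z - 1) 1 := by
    simpa [Q.conjPlace_ordGE] using hz (Q.conjPlace w) (by simp)
  have hzw' : w'.OrdGE z 1 := by simpa [hne, hneσ] using hz w' (by simp)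
  have hσzw' : w'.OrdGE (Q.σ z) 1 := by
    simpa [hσne, hσneσ, Q.conjPlace_ordGE] using hz (Q.conjPlace w') (by simp)
  have unit_of_sub_one (y : N) (hy : w.OrdGE (y - 1) 1) : y ≠ 0 ∧ w.ord y = 0 := by
    have := Place.ord_eq_of_ordGE_sub (v := w) (x := 1) (y := y) one_ne_zero (by
      rw [w.ord_one]; simpa using hy.neg)
    rwa [w.ord_one] at this
  obtain ⟨hz0, hordz⟩ := unit_of_sub_one _ hzw
  obtain ⟨hσz0, hordσz⟩ := unit_of_sub_one _ hσzw
  obtain ⟨n, hn⟩ := Q.exists_mul_σ_eq z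
  have hn0 : n ≠ 0 := by
    rintro rfl
    exact mul_ne_zero hz0 hσz0 (hn.trans (map_zero _))
  have hnw : w.ord (ι n) = 0 := by rw [← hn, w.ord_mul _ _ hz0 hσz0, hordz, hordσz, add_zero]
  have hnw' : w'.OrdGE (ι n) 1 := by
    rw [← hn]
    exact (hzw'.mul hσzw').mono (by lia)
  rw [Q.ordGE_algebraMap_one, ← h, ← Q.ordGE_algebraMap_one] at hnw'
  have := hnw'.le ((map_ne_zero ι).mpr hn0)
  lia

theorem ord_root {w : Place N} (ha : w.ord (ι a) = 0) : w.ord Q.root = 0 := by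
  have h := w.ord_mul _ _ Q.root_ne_zero Q.root_ne_zero
  rw [Q.root_mul_self, ha] at h
  lia

theorem ramificationIdx_eq_one_of_conjPlace_ne {w : Place N} (hw : Q.conjPlace w ≠ w) :
    Q.ramificationIdx w = 1 := by
  classical
  obtain ⟨π, hπ, hordπ⟩ := w.exists_uniformizer
  obtain ⟨z, hz⟩ := Place.weak_approximation {w, Q.conjPlace w} (fun u => if u = w then π else 0) 2
  have hzw : w.OrdGE (z - π) 2 := by simpa using hz w (by simp)
  have hσzw : w.OrdGE (Q.σ z) 2 := by
    simpa [hw, Q.conjPlace_ordGE] using hz (Q.conjPlace w) (by simp)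
  obtain ⟨t, ht⟩ := Q.exists_add_σ_eq z
  have hclose : w.OrdGE (π - ι t) (w.ord π + 1) := by
    rw [hordπ, ← ht, show π - (z + Q.σ z) = -(z - π + Q.σ z) by ring]
    exact (hzw.add hσzw).neg
  have hordt : w.ord (ι t) = 1 := by rw [(Place.ord_eq_of_ordGE_sub hπ hclose).2, hordπ]
  rw [Q.ord_algebraMap] at hordt
  exact Int.eq_one_of_dvd_one (Q.ramificationIdx_pos w).le ⟨_, hordt.symm⟩

/- If `w` were ramified and fixed by `σ`, then for a uniformizer `π` both `π + σπ` and
`(π - σπ) √a`, lying in `M`, would have order at least `2`, and hence so would `2π`. -/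
theorem ramificationIdx_eq_one_of_conjPlace_eq {w : Place N} (h2 : w.ord 2 = 0)
    (ha : w.ord (ι a) = 0) (hw : Q.conjPlace w = w) : Q.ramificationIdx w = 1 := by
  by_contra hram
  have ordGE_two_of_one {x : M} (hx : w.OrdGE (ι x) 1) : w.OrdGE (ι x) 2 := by
    obtain h0 | hx := (Q.ordGE_algebraMap_one w x).mp hx
    · exact Or.inl (by rw [h0, map_zero])
    · refine Or.inr ?_
      have := Q.ramificationIdx_pos w
      rw [Q.ord_algebraMap]
      nlinarith [show 2 ≤ Q.ramificationIdx w by lia]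
  obtain ⟨π, hπ, hordπ⟩ := w.exists_uniformizer
  have hπ1 : w.OrdGE π 1 := Or.inr hordπ.ge
  have hσπ1 : w.OrdGE (Q.σ π) 1 := by rwa [← Q.conjPlace_ordGE, hw]
  have hroot : w.OrdGE Q.root 0 := Or.inr (Q.ord_root ha).ge
  have hroot_inv : w.OrdGE Q.root⁻¹ 0 := Or.inr (by rw [w.ord_inv, Q.ord_root ha, neg_zero])
  obtain ⟨t, ht⟩ := Q.exists_add_σ_eq π
  obtain ⟨s, hs⟩ := Q.exists_sub_σ_mul_root_eq π
  have ht2 : w.OrdGE (π + Q.σ π) 2 := by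
    rw [ht]
    exact ordGE_two_of_one (ht ▸ hπ1.add hσπ1)
  have hs2 : w.OrdGE ((π - Q.σ π) * Q.root) 2 := by
    rw [hs]
    exact ordGE_two_of_one (hs ▸ (hπ1.sub hσπ1).mul hroot)
  have h2π : w.OrdGE (2 * π) 2 := by
    have hsub : (π - Q.σ π) * Q.root * Q.root⁻¹ = π - Q.σ π :=
      mul_inv_cancel_right₀ Q.root_ne_zero _
    have hsum : 2 * π = (π + Q.σ π) + (π - Q.σ π) * Q.root * Q.root⁻¹ := by rw [hsub]; ring
    rw [hsum]
    exact ht2.add ((hs2.mul hroot_inv).mono (by lia))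
  have := h2π.le (mul_ne_zero Q.ext_two_ne_zero hπ)
  rw [w.ord_mul _ _ Q.ext_two_ne_zero hπ, h2, hordπ] at this
  lia

theorem ramificationIdx_eq_one {w : Place N} (h2 : w.ord 2 = 0) (ha : w.ord (ι a) = 0) :
    Q.ramificationIdx w = 1 := by
  by_cases hw : Q.conjPlace w = w
  · exact Q.ramificationIdx_eq_one_of_conjPlace_eq h2 ha hw
  · exact Q.ramificationIdx_eq_one_of_conjPlace_ne hw

theorem isNonresidue_restrict_of_conjPlace_eq {w : Place N} (h2 : w.ord 2 = 0)
    (ha : w.ord (ι a) = 0) (hw : Q.conjPlace w = w) : (Q.restrict w).IsNonresidue a := by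
  intro c hc
  rw [← Q.ordGE_algebraMap_one] at hc
  have hfactor : ι (c * c - a) = (ι c - Q.root) * (ι c + Q.root) := by
    rw [map_sub, map_mul, ← Q.root_mul_self]
    ring
  have hσ : Q.σ (ι c - Q.root) = ι c + Q.root := by simp [Q.σ_algebraMap, Q.σ_root]
  have hminus : w.OrdGE (ι c - Q.root) 1 := by
    by_contra hlt
    obtain ⟨hne, hlt⟩ := Place.not_ordGE_iff.mp hlt
    have hord : w.ord (ι c + Q.root) = w.ord (ι c - Q.root) := by
      rw [← hσ, ← Q.conjPlace_ord, hw]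
    have hne' : ι c + Q.root ≠ 0 := hσ ▸ (map_ne_zero _).mpr hne
    rw [hfactor] at hc
    have := hc.le (mul_ne_zero hne hne')
    rw [w.ord_mul _ _ hne hne', hord] at this
    lia
  have hplus : w.OrdGE (ι c + Q.root) 1 := by rwa [← hσ, ← Q.conjPlace_ordGE, hw]
  have h2root : w.OrdGE (2 * Q.root) 1 := by
    convert hplus.sub hminus using 1
    ring
  have := h2root.le (mul_ne_zero Q.ext_two_ne_zero Q.root_ne_zero)
  rw [w.ord_mul _ _ Q.ext_two_ne_zero Q.root_ne_zero, h2, Q.ord_root ha] at this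
  lia

theorem isNonresidue_restrict {w : Place N} {ε : M} (h : w.IsNonresidue (ι ε)) :
    (Q.restrict w).IsNonresidue ε := by
  intro c hc
  rw [← Q.ordGE_algebraMap_one] at hc
  exact h (ι c) (by simpa using hc)

end SqrtExt

namespace Place

variable (k : Type*) {L : Type*} [Field k] [Finite k] [Field L] [Algebra k L] (v : Place L)

/-! ### Residue fields -/

theorem ord_algebraMap (c : k) : v.ord (algebraMap k L c) = 0 := by
  obtain rfl | hc := eq_or_ne c 0
  · rw [map_zero, v.ord_zero]
  · have := Fintype.ofFinite k
    refine v.ord_eq_zero_of_pow_eq_one (n := Fintype.card k - 1) ?_ ?_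
    · have := Fintype.one_lt_card (α := k)
      lia
    · rw [← map_pow, FiniteField.pow_card_sub_one_eq_one c hc, map_one]

theorem ordGE_algebraMap (c : k) : v.OrdGE (algebraMap k L c) 0 := Or.inr (v.ord_algebraMap k c).ge

variable {k v} in
theorem OrdGE.smul {x : L} {n : ℤ} (h : v.OrdGE x n) (c : k) : v.OrdGE (c • x) n := by
  rw [Algebra.smul_def]
  exact ((v.ordGE_algebraMap k c).mul h).mono (by lia)

/-- The valuation ring of `v`, as an algebra over the finite field `k`. -/
def valuationSubalgebra : Subalgebra k L where
  carrier := {x | v.OrdGE x 0}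
  mul_mem' hx hy := (OrdGE.mul hx hy).mono (by lia)
  add_mem' hx hy := OrdGE.add hx hy
  algebraMap_mem' c := v.ordGE_algebraMap k c

/-- The maximal ideal of the valuation ring of `v`. -/
def maxIdeal : Ideal (v.valuationSubalgebra k) where
  carrier := {x | v.OrdGE (x : L) 1}
  add_mem' hx hy := OrdGE.add hx hy
  zero_mem' := v.ordGE_zero _
  smul_mem' c x hx := (OrdGE.mul c.2 hx).mono (by lia)

theorem mem_maxIdeal {x : v.valuationSubalgebra k} : x ∈ v.maxIdeal k ↔ v.OrdGE (x : L) 1 := Iff.rfl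

instance : (v.maxIdeal k).IsMaximal := by
  rw [Ideal.isMaximal_iff]
  constructor
  · rw [mem_maxIdeal]
    intro h
    have := h.le (by simp)
    simp [v.ord_one] at this
  · intro J x _ hx hJ
    rw [mem_maxIdeal] at hx
    obtain ⟨hx0, hlt⟩ := not_ordGE_iff.mp hx
    have hinv : v.OrdGE ((x : L)⁻¹) 0 := Or.inr (by rw [v.ord_inv]; lia)
    have hmul : (1 : v.valuationSubalgebra k) = ⟨(x : L)⁻¹, hinv⟩ * x := by
      ext
      simp [inv_mul_cancel₀ hx0]
    rw [hmul]
    exact J.mul_mem_left _ hJ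

/-- The residue field of `v`. -/
abbrev ResidueField := v.valuationSubalgebra k ⧸ v.maxIdeal k

noncomputable instance : Field (v.ResidueField k) := Ideal.Quotient.field _

/-- The degree of `v` over `k`; it is `0` when the residue field is infinite over `k`. -/
noncomputable def deg : ℕ := Module.finrank k (v.ResidueField k)

variable {k v} in
theorem residue_mk_eq_iff {x y : v.valuationSubalgebra k} :
    Ideal.Quotient.mk (v.maxIdeal k) x = Ideal.Quotient.mk (v.maxIdeal k) y ↔
      v.OrdGE ((x : L) - y) 1 := by
  rw [Ideal.Quotient.eq, mem_maxIdeal]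
  rfl

theorem finite_residueField (h : ∃ S : Finset L, ∀ x, v.OrdGE x 0 → ∃ s ∈ S, v.OrdGE (x - s) 1) :
    Finite (v.ResidueField k) := by
  obtain ⟨S, hS⟩ := h
  choose! s hsS hs using hS
  let rep (y : v.ResidueField k) : v.valuationSubalgebra k := Quotient.out y
  have mk_rep (y : v.ResidueField k) : Ideal.Quotient.mk (v.maxIdeal k) (rep y) = y :=
    Quotient.out_eq y
  refine Finite.of_injective (fun y => (⟨s (rep y), hsS _ (rep y).2⟩ : S)) fun y y' h => ?_
  have heq : s (rep y) = s (rep y') := congrArg Subtype.val h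
  rw [← mk_rep y, ← mk_rep y', residue_mk_eq_iff]
  simpa [heq] using (hs _ (rep y).2).sub (hs _ (rep y').2)

/- The map sends `x` to the residue class of `π ^ (-n) * x`, for a uniformizer `π`. -/
theorem exists_leadingCoeff (n : ℤ) (W : Submodule k L) (hW : ∀ x ∈ W, v.OrdGE x n) :
    ∃ φ : W →ₗ[k] v.ResidueField k, (∀ x : W, φ x = 0 ↔ v.OrdGE (x : L) (n + 1)) ∧
      ((∀ y, v.OrdGE y n → ∃ x ∈ W, v.OrdGE (x - y) (n + 1)) → Function.Surjective φ) := by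
  obtain ⟨p, hp, hpn⟩ := v.exists_ord_eq (-n)
  let ψ : W →ₗ[k] v.valuationSubalgebra k :=
    { toFun := fun x => ⟨p * x, ((ordGE_ord p).mul (hW x x.2)).mono (by lia)⟩
      map_add' := fun x y => by ext; simp [mul_add]
      map_smul' := fun c x => by ext; simp }
  refine ⟨(Ideal.Quotient.mkₐ k (v.maxIdeal k)).toLinearMap ∘ₗ ψ, fun x => ?_, fun hsurj y => ?_⟩
  · change Ideal.Quotient.mk (v.maxIdeal k) (ψ x) = 0 ↔ _
    rw [Ideal.Quotient.eq_zero_iff_mem, mem_maxIdeal]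
    change v.OrdGE (p * x) 1 ↔ _
    by_cases hx : (x : L) = 0
    · simp [hx, ordGE_zero]
    · rw [ordGE_iff (mul_ne_zero hp hx), ordGE_iff hx, v.ord_mul _ _ hp hx]
      lia
  · obtain ⟨⟨y, hy⟩, rfl⟩ := Ideal.Quotient.mk_surjective y
    have hyp : v.OrdGE (y / p) n := by
      rw [div_eq_mul_inv]
      exact (OrdGE.mul hy (ordGE_ord p⁻¹)).mono (by rw [v.ord_inv]; lia)
    obtain ⟨x, hxW, hx⟩ := hsurj _ hyp
    refine ⟨⟨x, hxW⟩, residue_mk_eq_iff.mpr ?_⟩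
    change v.OrdGE (p * x - y) 1
    have := (ordGE_ord (v := v) p).mul hx
    rw [mul_sub, mul_div_cancel₀ _ hp] at this
    exact this.mono (by lia)

theorem finrank_le_add_deg [Finite (v.ResidueField k)] {n : ℤ} {W W' : Submodule k L}
    (hW : ∀ x ∈ W, v.OrdGE x n) (hW' : ∀ x, x ∈ W' ↔ x ∈ W ∧ v.OrdGE x (n + 1))
    [Module.Finite k W'] :
    Module.Finite k W ∧ Module.finrank k W ≤ Module.finrank k W' + v.deg k := by
  obtain ⟨φ, hφ, -⟩ := v.exists_leadingCoeff k n W hW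
  have hker : Submodule.map W.subtype (LinearMap.ker φ) = W' := by
    ext x
    simp only [Submodule.mem_map, LinearMap.mem_ker, Subtype.exists, hW']
    constructor
    · rintro ⟨y, hy, h, rfl⟩
      exact ⟨hy, (hφ _).mp h⟩
    · rintro ⟨hx, hx'⟩
      exact ⟨x, hx, (hφ ⟨x, hx⟩).mpr hx', rfl⟩
  have e : LinearMap.ker φ ≃ₗ[k] W' :=
    (Submodule.equivMapOfInjective _ W.injective_subtype (LinearMap.ker φ)).trans
      (LinearEquiv.ofEq _ _ hker)
  have : Module.Finite k (LinearMap.ker φ) := Module.Finite.equiv e.symm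
  have : Module.Finite k (v.ResidueField k) := Module.Finite.of_finite
  have hfin : Module.Finite k W := by
    rw [Module.finite_def]
    refine Submodule.fg_of_fg_map_of_fg_inf_ker φ (IsNoetherian.noetherian _) ?_
    rw [top_inf_eq]
    exact Module.Finite.iff_fg.mp ‹_›
  refine ⟨hfin, ?_⟩
  rw [← LinearMap.finrank_range_add_finrank_ker φ, e.finrank_eq, add_comm]
  exact Nat.add_le_add_left (Submodule.finrank_le _) _

end Place

/-! ### Divisors and Riemann–Roch spaces -/

/-- The group of divisors of `L`. -/
abbrev Divisor (L : Type*) [Field L] := Place L →₀ ℤ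

theorem effective_induction {α : Type*} {P : (α →₀ ℤ) → Prop} (zero : P 0)
    (add_single : ∀ v E, 0 ≤ E → P E → P (E + Finsupp.single v 1)) :
    ∀ E, 0 ≤ E → P E := by
  classical
  have add_single_nat (v : α) (n : ℕ) (E : α →₀ ℤ) (hE : 0 ≤ E) (hP : P E) :
      P (E + Finsupp.single v (n : ℤ)) := by
    induction n with
    | zero => simpa using hP
    | succ n ih =>
      have heff : 0 ≤ E + Finsupp.single v (n : ℤ) :=
        add_nonneg hE (Finsupp.single_nonneg.mpr n.cast_nonneg)
      simpa [Finsupp.single_add, add_assoc] using add_single v _ heff ih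
  have of_nat (f : α →₀ ℕ) : P (f.mapRange Nat.cast Nat.cast_zero) := by
    induction f using Finsupp.induction with
    | zero => simpa using zero
    | single_add v n f _ _ ih =>
      rw [Finsupp.mapRange_add Nat.cast_add, Finsupp.mapRange_single, add_comm]
      exact add_single_nat v n _ (fun w => by simp) ih
  intro E hE
  have hcast : (E.mapRange Int.toNat rfl).mapRange Nat.cast Nat.cast_zero = E := by
    ext v
    simpa using hE v
  exact hcast ▸ of_nat _

/-- The properties of a global function field `L` with exact field of constants `k` that the
theory of divisors rests on, stated in terms of discrete places. -/
structure IsGlobalFunctionField (k L : Type*) [Field k] [Finite k] [Field L] [Algebra k L] :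
    Prop where
  finite_support : ∀ f : L, f ≠ 0 → {v : Place L | v.ord f ≠ 0}.Finite
  exists_residue_representatives :
    ∀ v : Place L, ∃ S : Finset L, ∀ x, v.OrdGE x 0 → ∃ s ∈ S, v.OrdGE (x - s) 1
  exists_place_le : ∀ A : ValuationSubring L, A ≠ ⊤ → ∃ v : Place L, ∀ x, v.OrdGE x 0 → x ∈ A
  exists_algebraMap_eq : ∀ f : L, (∀ v : Place L, v.OrdGE f 0) → ∃ c : k, algebraMap k L c = f
  nonempty_place : Nonempty (Place L)

section Divisors

variable {k L : Type*} [Field k] [Finite k] [Field L] [Algebra k L]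

variable (k) in
/-- The degree of a divisor over `k`. -/
noncomputable def degree : Divisor L →ₗ[ℤ] ℤ :=
  Finsupp.linearCombination ℤ fun v => (v.deg k : ℤ)

theorem degree_single (v : Place L) (n : ℤ) : degree k (Finsupp.single v n) = n * v.deg k := by
  simp [degree]

theorem degree_nonneg {E : Divisor L} (hE : 0 ≤ E) : 0 ≤ degree k E := by
  simp only [degree, Finsupp.linearCombination_apply, Finsupp.sum]
  exact Finset.sum_nonneg fun v _ => mul_nonneg (hE v) (by positivity)

theorem degree_mono {D E : Divisor L} (h : D ≤ E) : degree k D ≤ degree k E := by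
  have := degree_nonneg (k := k) (sub_nonneg.mpr h)
  rw [map_sub] at this
  lia

variable (k) in
/-- The Riemann–Roch space `L(D)` of functions with poles bounded by `D`. -/
def riemannRochSpace (D : Divisor L) : Submodule k L where
  carrier := {f | ∀ v : Place L, v.OrdGE f (-D v)}
  add_mem' hx hy v := (hx v).add (hy v)
  zero_mem' v := v.ordGE_zero _
  smul_mem' c _ hx v := (hx v).smul c

theorem mem_riemannRochSpace {D : Divisor L} {f : L} :
    f ∈ riemannRochSpace k D ↔ ∀ v : Place L, v.OrdGE f (-D v) := Iff.rfl

theorem riemannRochSpace_mono {D E : Divisor L} (h : D ≤ E) :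
    riemannRochSpace k D ≤ riemannRochSpace k E :=
  fun _ hf v => (hf v).mono (neg_le_neg (h v))

theorem mem_riemannRochSpace_iff_add_single {D : Divisor L} {v : Place L} {f : L} :
    f ∈ riemannRochSpace k D ↔
      f ∈ riemannRochSpace k (D + Finsupp.single v 1) ∧ v.OrdGE f (-D v) := by
  refine ⟨fun hf => ⟨riemannRochSpace_mono ?_ hf, hf v⟩, fun ⟨hf, hv⟩ w => ?_⟩
  · exact le_add_of_nonneg_right (Finsupp.single_nonneg.mpr zero_le_one)
  · obtain rfl | hw := eq_or_ne v w
    · exact hv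
    · simpa [Finsupp.single_eq_of_ne' hw] using hf w

variable (k) in
/-- The dimension `ℓ(D)` of the Riemann–Roch space of `D`. -/
noncomputable def ell (D : Divisor L) : ℕ := Module.finrank k (riemannRochSpace k D)

namespace IsGlobalFunctionField

section

variable (hF : IsGlobalFunctionField k L)
include hF

theorem finite_residueField (v : Place L) : Finite (v.ResidueField k) :=
  v.finite_residueField k (hF.exists_residue_representatives v)

theorem deg_pos (v : Place L) : 0 < v.deg k := by
  have := hF.finite_residueField v
  have : Module.Finite k (v.ResidueField k) := Module.Finite.of_finite
  exact Module.finrank_pos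

theorem ell_add_le {D : Divisor L} (hD : Module.Finite k (riemannRochSpace k D)) :
    ∀ E, 0 ≤ E → Module.Finite k (riemannRochSpace k (D + E)) ∧
      (ell k (D + E) : ℤ) ≤ ell k D + degree k E := by
  refine effective_induction (by rw [add_zero]; exact ⟨hD, by simp⟩) fun v E _ ⟨hfin, hle⟩ => ?_
  have := hF.finite_residueField v
  obtain ⟨hfin', hle'⟩ := v.finrank_le_add_deg k (n := -(D v + E v + 1))
    (W := riemannRochSpace k (D + E + Finsupp.single v 1)) (W' := riemannRochSpace k (D + E))
    (fun x hx => by simpa using hx v)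
    (fun x => by simpa using mem_riemannRochSpace_iff_add_single (D := D + E) (v := v))
  rw [← add_assoc]
  refine ⟨hfin', ?_⟩
  rw [map_add, degree_single]
  unfold ell at hle ⊢
  lia

theorem riemannRochSpace_zero :
    riemannRochSpace k (0 : Divisor L) = LinearMap.range (Algebra.linearMap k L) := by
  ext f
  constructor
  · intro hf
    exact hF.exists_algebraMap_eq f fun v => by simpa using hf v
  · rintro ⟨c, rfl⟩ v
    simpa using v.ordGE_algebraMap k c

theorem ell_zero : Module.Finite k (riemannRochSpace k (0 : Divisor L)) ∧
    ell k (0 : Divisor L) = 1 := by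
  have e : k ≃ₗ[k] riemannRochSpace k (0 : Divisor L) := by
    rw [hF.riemannRochSpace_zero]
    exact LinearEquiv.ofInjective _ (algebraMap k L).injective
  exact ⟨Module.Finite.equiv e, by rw [ell, ← e.finrank_eq, Module.finrank_self]⟩

theorem finite_riemannRochSpace (D : Divisor L) : Module.Finite k (riemannRochSpace k D) := by
  have hfin := (hF.ell_add_le hF.ell_zero.1 (D ⊔ 0) le_sup_right).1
  rw [zero_add] at hfin
  exact Submodule.finiteDimensional_of_le (riemannRochSpace_mono (k := k) (le_sup_left : D ≤ D ⊔ 0))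

theorem degree_sub_ell_mono {D E : Divisor L} (h : D ≤ E) :
    degree k D - ell k D ≤ degree k E - ell k E := by
  have hle := (hF.ell_add_le (hF.finite_riemannRochSpace D) (E - D) (sub_nonneg.mpr h)).2
  rw [add_sub_cancel, map_sub] at hle
  lia

theorem ell_le_degree_add_one {E : Divisor L} (h : 0 ≤ E) : (ell k E : ℤ) ≤ degree k E + 1 := by
  have hle := hF.degree_sub_ell_mono h
  rw [map_zero, hF.ell_zero.2] at hle
  lia

end

variable (hF : IsGlobalFunctionField k L)

/-- The divisor of a function, with the junk value `0` at the function `0`. -/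
noncomputable def divisor (f : L) : Divisor L :=
  Finsupp.ofSupportFinite (fun v => v.ord f) (by
    obtain rfl | hf := eq_or_ne f 0
    · simp [Function.support, Place.ord_zero]
    · exact hF.finite_support f hf)

theorem divisor_apply (v : Place L) (f : L) : hF.divisor f v = v.ord f := rfl

theorem divisor_mul {f g : L} (hf : f ≠ 0) (hg : g ≠ 0) :
    hF.divisor (f * g) = hF.divisor f + hF.divisor g := by
  ext v
  exact v.ord_mul f g hf hg

theorem divisor_inv (f : L) : hF.divisor f⁻¹ = -hF.divisor f := by
  ext v
  exact v.ord_inv f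

theorem divisor_one : hF.divisor 1 = 0 := by
  ext v
  exact v.ord_one

/-- The divisor of zeros of a function; the divisor of poles of `f` is that of zeros of `f⁻¹`. -/
noncomputable def zeroDivisor (f : L) : Divisor L := hF.divisor f ⊔ 0

theorem zeroDivisor_nonneg (f : L) : 0 ≤ hF.zeroDivisor f := le_sup_right

theorem zeroDivisor_apply (f : L) (v : Place L) : hF.zeroDivisor f v = max (v.ord f) 0 := rfl

theorem divisor_eq_sub (f : L) : hF.divisor f = hF.zeroDivisor f - hF.zeroDivisor f⁻¹ := by
  ext v
  rw [Finsupp.sub_apply, zeroDivisor_apply, zeroDivisor_apply, divisor_apply, v.ord_inv]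
  lia

theorem mul_mem_riemannRochSpace {f g : L} (hg : g ≠ 0) (D : Divisor L) :
    g * f ∈ riemannRochSpace k (D - hF.divisor g) ↔ f ∈ riemannRochSpace k D := by
  rw [mem_riemannRochSpace, mem_riemannRochSpace]
  refine forall_congr' fun v => ?_
  by_cases hf : f = 0
  · simp [hf, Place.ordGE_zero]
  · rw [Place.ordGE_iff (mul_ne_zero hg hf), Place.ordGE_iff hf, v.ord_mul _ _ hg hf,
      Finsupp.sub_apply, divisor_apply]
    lia

theorem ell_sub_divisor {g : L} (hg : g ≠ 0) (D : Divisor L) :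
    ell k (D - hF.divisor g) = ell k D := by
  let e : L ≃ₗ[k] L := (LinearEquiv.smulOfNeZero L L g hg).restrictScalars k
  have hmap : Submodule.map (e : L →ₗ[k] L) (riemannRochSpace k D) =
      riemannRochSpace k (D - hF.divisor g) := by
    ext y
    rw [Submodule.mem_map]
    constructor
    · rintro ⟨x, hx, rfl⟩
      exact (hF.mul_mem_riemannRochSpace hg D).mpr hx
    · intro hy
      refine ⟨g⁻¹ * y, ?_, mul_inv_cancel_left₀ hg y⟩
      rwa [← hF.mul_mem_riemannRochSpace hg D, mul_inv_cancel_left₀ hg]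
  rw [ell, ell, ← hmap]
  exact (Submodule.equivMapOfInjective (e : L →ₗ[k] L) e.injective _).finrank_eq.symm

end IsGlobalFunctionField

/-! ### The product formula -/

variable (k) in
/-- The functions whose order at each place `v` of `T` is at least `E v`. -/
def semilocalSubmodule (T : Finset (Place L)) (E : Divisor L) : Submodule k L where
  carrier := {x | ∀ v ∈ T, v.OrdGE x (E v)}
  add_mem' hx hy v hv := (hx v hv).add (hy v hv)
  zero_mem' v _ := v.ordGE_zero _
  smul_mem' c _ hx v hv := (hx v hv).smul c

theorem semilocalSubmodule_anti (T : Finset (Place L)) {D E : Divisor L} (h : D ≤ E) :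
    semilocalSubmodule k T E ≤ semilocalSubmodule k T D :=
  fun _ hx v hv => (hx v hv).mono (h v)

theorem exists_mem_semilocalSubmodule_ordGE_sub {T : Finset (Place L)} {v : Place L} (hv : v ∈ T)
    (E : Divisor L) {y : L} (hy : v.OrdGE y (E v)) :
    ∃ x ∈ semilocalSubmodule k T E, v.OrdGE (x - y) (E v + 1) := by
  classical
  obtain ⟨B, hB⟩ := (T.image fun w => E w + 1).bddAbove
  replace hB : ∀ w ∈ T, E w + 1 ≤ B := fun w hw => hB (by simpa using ⟨w, hw, rfl⟩)
  obtain ⟨x, hx⟩ := Place.weak_approximation T (fun w => if w = v then y else 0) B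
  have hxv : v.OrdGE (x - y) (E v + 1) := by simpa using (hx v hv).mono (hB v hv)
  refine ⟨x, fun w hw => ?_, hxv⟩
  by_cases hwv : w = v
  · subst hwv
    simpa using (hxv.mono (by lia : E w ≤ E w + 1)).add hy
  · have := (hx w hw).mono (hB w hw)
    simp only [hwv, if_false, sub_zero] at this
    exact this.mono (by lia)

theorem exists_linearIndependent_residues (v : Place L) [Finite (v.ResidueField k)]
    {T : Finset (Place L)} (hv : v ∈ T) (E : Divisor L) :
    ∃ x : Fin (v.deg k) → L, (∀ j, x j ∈ semilocalSubmodule k T E) ∧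
      ∀ c : Fin (v.deg k) → k, v.OrdGE (∑ j, c j • x j) (E v + 1) → ∀ j, c j = 0 := by
  obtain ⟨φ, hφ, hsurj⟩ := v.exists_leadingCoeff k (E v) (semilocalSubmodule k T E)
    (fun x hx => hx v hv)
  have hsurj := hsurj fun y hy => exists_mem_semilocalSubmodule_ordGE_sub hv E hy
  have : Module.Finite k (v.ResidueField k) := Module.Finite.of_finite
  have : Module.Free k (v.ResidueField k) := Module.Free.of_divisionRing k _
  let b : Module.Basis (Fin (v.deg k)) k (v.ResidueField k) := Module.finBasis k _
  choose x hx using fun j => hsurj (b j)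
  refine ⟨fun j => x j, fun j => (x j).2, fun c hc => ?_⟩
  have hker : φ (∑ j, c j • x j) = 0 := by
    rw [hφ]
    simpa using hc
  rw [map_sum] at hker
  simp only [map_smul, hx] at hker
  exact Fintype.linearIndependent_iff.mp b.linearIndependent _ hker

omit [Finite k] in
theorem linearIndependent_pow_mul {ι : Type*} [Fintype ι] {u : ι → L} {s : L} (hs : s ≠ 0)
    {W : Submodule k L} (hu : ∀ (n : ℕ) i, s ^ n * u i ∈ W)
    (hindep : ∀ c : ι → k, (∃ x ∈ W, ∑ i, c i • u i = s * x) → ∀ i, c i = 0) (m : ℕ) :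
    LinearIndependent k fun p : ι × Fin m => s ^ (p.2 : ℕ) * u p.1 := by
  rw [Fintype.linearIndependent_iff]
  intro c hc
  rw [Fintype.sum_prod_type] at hc
  suffices ∀ i j, c (i, j) = 0 from fun p => this p.1 p.2
  induction m with
  | zero => exact fun i j => j.elim0
  | succ m ih =>
    have hsplit : ∑ i, c (i, 0) • u i +
        s * ∑ i, ∑ j : Fin m, c (i, j.succ) • (s ^ (j : ℕ) * u i) = 0 := by
      rw [← hc, Finset.mul_sum, ← Finset.sum_add_distrib]
      refine Finset.sum_congr rfl fun i _ => ?_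
      rw [Fin.sum_univ_succ, Finset.mul_sum]
      simp only [Fin.val_zero, pow_zero, one_mul, Fin.val_succ, pow_succ', Algebra.mul_smul_comm,
        mul_assoc]
    have hmem : ∑ i, ∑ j : Fin m, c (i, j.succ) • (s ^ (j : ℕ) * u i) ∈ W :=
      sum_mem fun i _ => sum_mem fun j _ => W.smul_mem _ (hu j i)
    have hzero := hindep (fun i => c (i, 0))
      ⟨_, W.neg_mem hmem, by rw [mul_neg]; exact eq_neg_of_add_eq_zero_left hsplit⟩
    have hsucc := ih (fun p => c (p.1, p.2.succ)) (by
      simp only [hzero, zero_smul, Finset.sum_const_zero, zero_add] at hsplit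
      exact (mul_eq_zero.mp hsplit).resolve_left hs)
    exact fun i j => Fin.cases (hzero i) (hsucc i) j

namespace IsGlobalFunctionField

section

variable (hF : IsGlobalFunctionField k L)
include hF

theorem exists_linearIndependent_mod (T : Finset (Place L)) :
    ∀ E : Divisor L, 0 ≤ E → E.support ⊆ T →
      ∃ (ι : Type) (_ : Fintype ι) (u : ι → L), (Fintype.card ι : ℤ) = degree k E ∧
        (∀ i, u i ∈ semilocalSubmodule k T 0) ∧
        ∀ c : ι → k, ∑ i, c i • u i ∈ semilocalSubmodule k T E → ∀ i, c i = 0 := by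
  refine effective_induction (fun _ => ⟨Empty, inferInstance, fun i => i.elim, by simp,
    fun i => i.elim, fun _ _ i => i.elim⟩) fun v E hE ih hT => ?_
  have hle : E ≤ E + Finsupp.single v 1 :=
    le_add_of_nonneg_right (Finsupp.single_nonneg.mpr zero_le_one)
  have hEv : 0 ≤ E v := hE v
  have hv : v ∈ T := hT (by
    rw [Finsupp.mem_support_iff, Finsupp.add_apply, Finsupp.single_eq_same]
    lia)
  obtain ⟨ι, _, u, hcard, hreg, hindep⟩ := ih fun w hw => hT (by
    have hEw : 0 ≤ E w := hE w
    have := hle w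
    rw [Finsupp.mem_support_iff] at hw ⊢
    lia)
  have := hF.finite_residueField v
  obtain ⟨x, hx, hxindep⟩ := exists_linearIndependent_residues (k := k) v hv E
  refine ⟨ι ⊕ Fin (v.deg k), inferInstance, Sum.elim u x, ?_, ?_, fun c hc => ?_⟩
  · rw [map_add, degree_single, Fintype.card_sum, Fintype.card_fin, ← hcard]
    push_cast
    ring
  · rintro (i | j)
    · exact hreg i
    · exact semilocalSubmodule_anti T hE (hx j)
  · simp only [Fintype.sum_sum_type, Sum.elim_inl, Sum.elim_inr] at hc
    have hinl : ∀ i, c (Sum.inl i) = 0 := by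
      refine hindep _ ?_
      have hsum : ∑ j, c (Sum.inr j) • x j ∈ semilocalSubmodule k T E :=
        sum_mem fun j _ => Submodule.smul_mem _ _ (hx j)
      exact ((Submodule.add_mem_iff_left _ hsum).mp (semilocalSubmodule_anti T hle hc))
    have hinr : ∀ j, c (Sum.inr j) = 0 := by
      simp only [hinl, zero_smul, Finset.sum_const_zero, zero_add] at hc
      exact hxindep _ (by simpa using hc v hv)
    rintro (i | j)
    · exact hinl i
    · exact hinr j

end

variable (hF : IsGlobalFunctionField k L)

theorem exists_linearIndependent_pow_mul {s : L} (hs : s ≠ 0) :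
    ∃ (ι : Type) (_ : Fintype ι) (u : ι → L),
      (Fintype.card ι : ℤ) = degree k (hF.zeroDivisor s) ∧
      ∀ m, LinearIndependent k fun p : ι × Fin m => s ^ (p.2 : ℕ) * u p.1 := by
  set T := (hF.zeroDivisor s).support
  obtain ⟨ι, _, u, hcard, hreg, hindep⟩ := hF.exists_linearIndependent_mod T (hF.zeroDivisor s)
    (hF.zeroDivisor_nonneg s) subset_rfl
  have hpos : ∀ v ∈ T, 0 ≤ v.ord s ∧ hF.zeroDivisor s v = v.ord s := by
    intro v hv
    have : hF.zeroDivisor s v ≠ 0 := Finsupp.mem_support_iff.mp hv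
    rw [zeroDivisor_apply] at this ⊢
    lia
  refine ⟨ι, inferInstance, u, hcard, linearIndependent_pow_mul hs
    (W := semilocalSubmodule k T 0) (fun n i v hv => ?_) fun c ⟨x, hx, hcx⟩ => hindep c ?_⟩
  · have hsv : v.OrdGE s 0 := Or.inr (hpos v hv).1
    exact ((hsv.pow n).mul (hreg i v hv)).mono (by simp)
  · intro v hv
    rw [hcx, (hpos v hv).2]
    exact ((Place.ordGE_ord s).mul (hx v hv)).mono (by simp)

include hF in
theorem exists_forall_mem_riemannRochSpace {ι : Type*} [Finite ι] (u : ι → L) :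
    ∃ D : Divisor L, 0 ≤ D ∧ ∀ i, u i ∈ riemannRochSpace k D := by
  have := Fintype.ofFinite ι
  have hnonneg : ∀ i ∈ Finset.univ, 0 ≤ hF.zeroDivisor (u i)⁻¹ :=
    fun i _ => hF.zeroDivisor_nonneg _
  refine ⟨∑ i, hF.zeroDivisor (u i)⁻¹, Finset.sum_nonneg hnonneg, fun i v => Or.inr ?_⟩
  have hle := Finset.single_le_sum hnonneg (Finset.mem_univ i) v
  rw [zeroDivisor_apply, v.ord_inv] at hle
  lia

theorem pow_mul_mem_riemannRochSpace {h u : L} {D : Divisor L} (hu : u ∈ riemannRochSpace k D)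
    {j m : ℕ} (hjm : j ≤ m) :
    h ^ j * u ∈ riemannRochSpace k (m • hF.zeroDivisor h⁻¹ + D) := by
  intro v
  have hpole : v.OrdGE h (-hF.zeroDivisor h⁻¹ v) :=
    Or.inr (by rw [zeroDivisor_apply, v.ord_inv]; lia)
  refine ((hpole.pow j).mul (hu v)).mono ?_
  have hnonneg : 0 ≤ hF.zeroDivisor h⁻¹ v := hF.zeroDivisor_nonneg _ v
  have hmul := mul_le_mul_of_nonneg_right (Int.ofNat_le.mpr hjm) hnonneg
  simp only [Finsupp.add_apply, Finsupp.smul_apply, nsmul_eq_mul]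
  linarith

theorem exists_degree_zeroDivisor_mul_le_ell {h : L} (hh : h ≠ 0) :
    ∃ D : Divisor L, 0 ≤ D ∧ ∀ m : ℕ,
      degree k (hF.zeroDivisor h) * (m + 1) ≤ ell k (m • hF.zeroDivisor h⁻¹ + D) := by
  obtain ⟨ι, _, u, hcard, hindep⟩ := hF.exists_linearIndependent_pow_mul hh
  obtain ⟨D, hD, hu⟩ := hF.exists_forall_mem_riemannRochSpace u
  refine ⟨D, hD, fun m => ?_⟩
  let w (p : ι × Fin (m + 1)) : riemannRochSpace k (m • hF.zeroDivisor h⁻¹ + D) :=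
    ⟨h ^ (p.2 : ℕ) * u p.1, hF.pow_mul_mem_riemannRochSpace (hu p.1) (by lia)⟩
  have hw : LinearIndependent k w := LinearIndependent.of_comp (Submodule.subtype _) (hindep _)
  have := hF.finite_riemannRochSpace (m • hF.zeroDivisor h⁻¹ + D)
  have hle := hw.fintype_card_le_finrank
  rw [Fintype.card_prod, Fintype.card_fin] at hle
  rw [← hcard, ell]
  exact_mod_cast hle

/- For large `m`, the lower bound `(m + 1) deg (h)₀` of `ℓ(m (h)_∞ + D)` grows at most as fast as
the upper bound `m deg (h)_∞ + deg D + 1`. -/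
theorem degree_zeroDivisor_le {h : L} (hh : h ≠ 0) :
    degree k (hF.zeroDivisor h) ≤ degree k (hF.zeroDivisor h⁻¹) := by
  obtain ⟨D, hD, hle⟩ := hF.exists_degree_zeroDivisor_mul_le_ell hh
  by_contra! hlt
  obtain ⟨d, hd⟩ := Int.eq_ofNat_of_zero_le (degree_nonneg (k := k) hD)
  have hupper := hF.ell_le_degree_add_one (E := (d + 1) • hF.zeroDivisor h⁻¹ + D)
    (add_nonneg (nsmul_nonneg (hF.zeroDivisor_nonneg _) _) hD)
  have hlower := hle (d + 1)
  have hnonneg := degree_nonneg (k := k) (hF.zeroDivisor_nonneg h⁻¹)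
  rw [map_add, map_nsmul, hd, nsmul_eq_mul] at hupper
  push_cast at hupper hlower
  nlinarith

theorem degree_divisor (h : L) : degree k (hF.divisor h) = 0 := by
  obtain rfl | hh := eq_or_ne h 0
  · have hdiv : hF.divisor 0 = 0 := by
      ext v
      rw [divisor_apply, v.ord_zero, Finsupp.zero_apply]
    rw [hdiv, map_zero]
  · have hle := hF.degree_zeroDivisor_le hh
    have hge := hF.degree_zeroDivisor_le (inv_ne_zero hh)
    rw [inv_inv] at hge
    rw [hF.divisor_eq_sub, map_sub, le_antisymm hle hge, sub_self]

end IsGlobalFunctionField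

/-! ### Riemann's inequality and effective divisors -/

theorem Place.natCard_residueField (v : Place L) [Finite (v.ResidueField k)] :
    Nat.card (v.ResidueField k) = Nat.card k ^ v.deg k :=
  have : Module.Finite k (v.ResidueField k) := Module.Finite.of_finite
  have : Module.Free k (v.ResidueField k) := Module.Free.of_divisionRing k _
  Module.natCard_eq_pow_finrank

theorem Place.ordGE_pow_card_sub (v : Place L) [Finite (v.ResidueField k)] {x : L}
    (hx : v.OrdGE x 0) : v.OrdGE (x ^ (Nat.card k ^ v.deg k) - x) 1 := by
  have : Fintype (v.ResidueField k) := Fintype.ofFinite _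
  have hfrob := FiniteField.pow_card (Ideal.Quotient.mk (v.maxIdeal k) ⟨x, hx⟩)
  rw [← map_pow, Place.residue_mk_eq_iff, ← Nat.card_eq_fintype_card,
    v.natCard_residueField] at hfrob
  exact hfrob

theorem Place.pow_sub_ne_zero {v : Place L} {t : L} (ht : v.ord t = -1) {n : ℕ} (hn : 1 < n) :
    t ^ n - t ≠ 0 := by
  intro h
  have hord : v.ord (t ^ n) = v.ord t := by rw [sub_eq_zero.mp h]
  rw [v.ord_pow, ht] at hord
  lia

theorem exists_le_nsmul {α : Type*} {D B : α →₀ ℤ} (hB : 0 ≤ B) (h : ∀ a, B a = 0 → D a ≤ 0) :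
    ∃ m : ℕ, D ≤ m • B := by
  refine ⟨D.support.sup fun a => (D a).toNat, fun a => ?_⟩
  have hBa : 0 ≤ B a := hB a
  rw [Finsupp.smul_apply, nsmul_eq_mul]
  by_cases hD : D a ≤ 0
  · exact hD.trans (by positivity)
  · have hle := Finset.le_sup (f := fun a => (D a).toNat)
      (Finsupp.mem_support_iff.mpr (show D a ≠ 0 by lia))
    have hle' : D a ≤ (D.support.sup fun a => (D a).toNat : ℕ) := by lia
    have : 1 ≤ B a := by
      by_contra hlt
      exact hD (h a (by lia))
    nlinarith

theorem mul_deg_le_degree {E : Divisor L} (hE : 0 ≤ E) (v : Place L) :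
    E v * v.deg k ≤ degree k E := by
  rw [← degree_single]
  refine degree_mono fun w => ?_
  obtain rfl | hvw := eq_or_ne v w
  · simp
  · simpa [Finsupp.single_eq_of_ne' hvw] using hE w

namespace IsGlobalFunctionField

variable (hF : IsGlobalFunctionField k L)

include hF in
theorem one_lt_card_pow_deg (v : Place L) : 1 < Nat.card k ^ v.deg k :=
  Nat.one_lt_pow (hF.deg_pos v).ne' Finite.one_lt_card

include hF in
theorem exists_pole : ∃ (v : Place L) (t : L), t ≠ 0 ∧ v.ord t = -1 := by
  obtain ⟨v⟩ := hF.nonempty_place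
  obtain ⟨t, ht⟩ := v.exists_ord_eq (-1)
  exact ⟨v, t, ht⟩

include hF in
theorem exists_ord_ge_of_regular {v₀ : Place L} {t : L} (ht : v₀.ord t = -1) :
    ∀ D : Divisor L, 0 ≤ D → ∃ h : L, h ≠ 0 ∧ ∀ w : Place L, 0 ≤ w.ord t → D w ≤ w.ord h := by
  refine effective_induction ⟨1, one_ne_zero, fun w _ => by simp [w.ord_one]⟩
    fun v D _ ⟨h, hh, hle⟩ => ?_
  have := hF.finite_residueField v
  set n := Nat.card k ^ v.deg k
  have hg := Place.pow_sub_ne_zero ht (hF.one_lt_card_pow_deg v)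
  refine ⟨h * (t ^ n - t), mul_ne_zero hh hg, fun w hw => ?_⟩
  have htw : w.OrdGE t 0 := Or.inr hw
  have hDw := hle w hw
  rw [w.ord_mul _ _ hh hg, Finsupp.add_apply]
  refine add_le_add hDw ?_
  obtain rfl | hvw := eq_or_ne v w
  · simpa using (v.ordGE_pow_card_sub (k := k) htw).le hg
  · simpa [Finsupp.single_eq_of_ne' hvw] using (((htw.pow n).mono (by simp)).sub htw).le hg

include hF in
theorem exists_degree_le_ell_add : ∃ C : ℤ, ∀ D : Divisor L, degree k D ≤ ell k D + C := by
  obtain ⟨v₀, t, ht0, ht⟩ := hF.exists_pole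
  obtain ⟨D₀, hD₀, hle⟩ := hF.exists_degree_zeroDivisor_mul_le_ell ht0
  set B := hF.zeroDivisor t⁻¹ with hB
  have hBdeg : degree k (hF.zeroDivisor t) = degree k B := by
    have := hF.degree_divisor t
    rwa [hF.divisor_eq_sub, map_sub, sub_eq_zero] at this
  have hmultiple (m : ℕ) : degree k (m • B) ≤ ell k (m • B) + degree k D₀ := by
    have hadd := (hF.ell_add_le (hF.finite_riemannRochSpace (m • B)) D₀ hD₀).2
    have hlem := hle m
    have hnonneg := degree_nonneg (k := k) (hF.zeroDivisor_nonneg t⁻¹)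
    rw [map_nsmul, nsmul_eq_mul]
    rw [hBdeg] at hlem
    linarith
  refine ⟨degree k D₀, fun D => ?_⟩
  obtain ⟨h, hh, hDh⟩ := hF.exists_ord_ge_of_regular ht (D ⊔ 0) le_sup_right
  obtain ⟨m, hm⟩ : ∃ m : ℕ, D - hF.divisor h ≤ m • B := by
    refine exists_le_nsmul (hF.zeroDivisor_nonneg _) fun w hw => ?_
    rw [hB, zeroDivisor_apply, w.ord_inv] at hw
    have hDw := hDh w (by lia)
    rw [Finsupp.sup_apply, Finsupp.zero_apply] at hDw
    rw [Finsupp.sub_apply, divisor_apply]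
    lia
  have hmono := hF.degree_sub_ell_mono hm
  rw [map_sub, hF.degree_divisor, hF.ell_sub_divisor hh] at hmono
  have := hmultiple m
  lia

theorem ell_add_divisor {f : L} (hf : f ≠ 0) (D : Divisor L) :
    ell k (D + hF.divisor f) = ell k D := by
  rw [← hF.ell_sub_divisor hf (D + hF.divisor f), add_sub_cancel_right]

theorem mem_riemannRochSpace_iff {f : L} (hf : f ≠ 0) (D : Divisor L) :
    f ∈ riemannRochSpace k D ↔ 0 ≤ D + hF.divisor f :=
  forall_congr' fun v => by
    rw [Place.ordGE_iff hf, Finsupp.add_apply, divisor_apply, Finsupp.zero_apply,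
      neg_le_iff_add_nonneg']

theorem exists_effective_of_ell_pos {D : Divisor L} (h : 0 < ell k D) :
    ∃ f : L, f ≠ 0 ∧ 0 ≤ D + hF.divisor f := by
  have := hF.finite_riemannRochSpace D
  have := Module.finrank_pos_iff.mp h
  obtain ⟨⟨f, hf⟩, hne⟩ := exists_ne (0 : riemannRochSpace k D)
  have hf0 : f ≠ 0 := fun h => hne (Subtype.ext h)
  exact ⟨f, hf0, (hF.mem_riemannRochSpace_iff hf0 D).mp hf⟩

include hF in
/- A divisor `D₁` maximizing `deg - ℓ` exists by Riemann's inequality, and every `D` of large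
degree is equivalent to a divisor above `D₁`. -/
theorem exists_ell_eq_degree_sub : ∃ c n₀ : ℤ, ∀ D : Divisor L, n₀ ≤ degree k D →
    (ell k D : ℤ) = degree k D - c := by
  obtain ⟨C, hC⟩ := hF.exists_degree_le_ell_add
  obtain ⟨c, ⟨D₁, hD₁⟩, hc⟩ := Int.exists_greatest_of_bdd
    (P := fun z => ∃ D : Divisor L, degree k D - ell k D = z)
    ⟨C, by rintro z ⟨D, rfl⟩; linarith [hC D]⟩ ⟨_, 0, rfl⟩
  refine ⟨c, degree k D₁ + C + 1, fun D hD => ?_⟩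
  have hpos := hC (D - D₁)
  rw [map_sub] at hpos
  obtain ⟨f, hf, hfD⟩ := hF.exists_effective_of_ell_pos (D := D - D₁) (by lia)
  have hle : D₁ ≤ D + hF.divisor f := by
    rw [← sub_nonneg, add_sub_right_comm]
    exact hfD
  have hmono := hF.degree_sub_ell_mono hle
  rw [map_add, hF.degree_divisor, hF.ell_add_divisor hf] at hmono
  have := hc _ ⟨D, rfl⟩
  lia

include hF in
theorem finite_setOf_deg_le (n : ℕ) : {v : Place L | v.deg k ≤ n}.Finite := by
  classical
  obtain ⟨v₀, t, _, ht⟩ := hF.exists_pole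
  refine (Finset.finite_toSet ((hF.divisor t).support ∪ (Finset.Icc 1 n).biUnion fun d =>
    (hF.divisor (t ^ (Nat.card k ^ d) - t)).support)).subset fun v hv => ?_
  rw [Finset.mem_coe, Finset.mem_union, Finsupp.mem_support_iff, divisor_apply, Finset.mem_biUnion]
  refine or_iff_not_imp_left.mpr fun htv => ⟨v.deg k, Finset.mem_Icc.mpr ⟨hF.deg_pos v, hv⟩, ?_⟩
  have := hF.finite_residueField v
  have hord := (v.ordGE_pow_card_sub (k := k) (Or.inr (not_not.mp htv).ge)).le
    (Place.pow_sub_ne_zero ht (hF.one_lt_card_pow_deg v))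
  rw [Finsupp.mem_support_iff, divisor_apply]
  lia

include hF in
theorem finite_effective_degree_le (n : ℤ) :
    {E : Divisor L | 0 ≤ E ∧ degree k E ≤ n}.Finite := by
  classical
  let S := (hF.finite_setOf_deg_le n.toNat).toFinset
  let M : Divisor L := Finsupp.indicator S fun _ _ => n
  refine (Finset.finite_toSet (Finset.Icc 0 M)).subset ?_
  rintro E ⟨hE, hn⟩
  rw [Finset.coe_Icc]
  refine ⟨hE, fun v => ?_⟩
  have hEv : 0 ≤ E v := hE v
  have hle := (mul_deg_le_degree (k := k) hE v).trans hn
  have hdeg := hF.deg_pos v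
  by_cases hv : v ∈ S
  · rw [Finsupp.indicator_of_mem hv]
    nlinarith
  · rw [Finsupp.indicator_of_notMem hv]
    have : n.toNat < v.deg k := by simpa [S] using hv
    by_contra! hpos
    nlinarith [show n < v.deg k by lia]

end IsGlobalFunctionField

/-! ### Divisors with even coefficients at the places of odd degree -/

variable (k) in
/-- The divisors with even coefficients at all places of odd degree. The divisor of a norm from
the constant quadratic extension is of this kind. -/
def EvenAtOddDegree (E : Divisor L) : Prop :=
  ∀ v : Place L, Odd (v.deg k) → Even (E v)

variable (k) in
/-- The sign `(-1) ^ deg E` of a divisor. -/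
noncomputable def sign (E : Divisor L) : ℤ := ((degree k E).negOnePow : ℤ)

theorem sign_sum {α : Type*} (s : Finset α) (E : α → Divisor L) :
    sign k (∑ a ∈ s, E a) = ∏ a ∈ s, sign k (E a) := by
  classical
  induction s using Finset.induction with
  | empty => simp [sign]
  | insert a s ha ih =>
    rw [Finset.sum_insert ha, Finset.prod_insert ha, ← ih]
    simp [sign, Int.negOnePow_add]

variable (k) in
open Classical in
/-- The sum of the signs of the effective divisors below `E`: the coefficient at `E` of the
product of the zeta series of `L` and its twist by `sign`. -/
noncomputable def signSum (E : Divisor L) : ℤ := ∑ F ∈ Finset.Icc 0 E, sign k F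

theorem signSum_eq_prod (E : Divisor L) :
    signSum k E = ∏ v ∈ E.support, ∑ j ∈ Finset.Icc 0 (E v), sign k (Finsupp.single v j) := by
  classical
  have hIcc : Finset.Icc 0 E = E.support.finsupp fun v => Finset.Icc 0 (E v) := by
    ext F
    rw [Finset.mem_Icc, Finset.mem_finsupp_iff]
    refine ⟨fun h => ⟨fun v hv => ?_, fun v _ => Finset.mem_Icc.mpr ⟨h.1 v, h.2 v⟩⟩,
      fun ⟨hsupp, h⟩ => ⟨fun v => ?_, fun v => ?_⟩⟩
    · rw [Finsupp.mem_support_iff] at hv ⊢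
      intro hE
      exact hv (le_antisymm (hE ▸ h.2 v) (h.1 v))
    all_goals
      by_cases hv : v ∈ E.support
      · have hFv := Finset.mem_Icc.mp (h v hv)
        first | exact hFv.1 | exact hFv.2
      · have hF : F v = 0 := Finsupp.notMem_support_iff.mp fun hF => hv (hsupp hF)
        simp [hF, Finsupp.notMem_support_iff.mp hv]
  rw [signSum, hIcc, Finset.finsupp, Finset.sum_map, Finset.prod_sum]
  refine Finset.sum_congr rfl fun f _ => ?_
  rw [Function.Embedding.coeFn_mk, Finsupp.indicator_eq_sum_attach_single, sign_sum]

theorem sum_sign_single (v : Place L) (n : ℕ) :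
    ∑ j ∈ Finset.Icc (0 : ℤ) n, sign k (Finsupp.single v j) =
      if Odd (v.deg k) then (if Even n then (1 : ℤ) else 0) else (n : ℤ) + 1 := by
  have hsign (j : ℕ) : sign k (Finsupp.single v (j : ℤ)) = ((-1) ^ v.deg k) ^ j := by
    rw [sign, degree_single, ← pow_mul, mul_comm]
    exact congrArg Units.val (zpow_natCast (-1 : ℤˣ) (v.deg k * j))
  rw [Int.Icc_eq_finset_map, Finset.sum_map]
  simp only [Function.Embedding.trans_apply, Nat.castEmbedding_apply, addLeftEmbedding_apply,
    zero_add, sub_zero, hsign]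
  rw [show ((n : ℤ) + 1).toNat = n + 1 by lia]
  split_ifs with hodd hn
  · rw [hodd.neg_one_pow, neg_one_geom_sum, if_neg (by simpa [Nat.even_add_one] using hn)]
  · rw [hodd.neg_one_pow, neg_one_geom_sum, if_pos (by simpa [Nat.even_add_one] using hn)]
  · simp [(Nat.not_odd_iff_even.mp hodd).neg_one_pow]

theorem signSum_pos {E : Divisor L} (hE : 0 ≤ E) (heven : EvenAtOddDegree k E) :
    0 < signSum k E := by
  rw [signSum_eq_prod]
  refine Finset.prod_pos fun v _ => ?_
  obtain ⟨n, hn⟩ := Int.eq_ofNat_of_zero_le (hE v)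
  have hev := heven v
  rw [hn, Int.even_coe_nat] at hev
  rw [hn, sum_sign_single]
  split_ifs with hodd hn'
  · exact one_pos
  · exact absurd (hev hodd) hn'
  · positivity

theorem signSum_eq_zero {E : Divisor L} (hE : 0 ≤ E) (heven : ¬ EvenAtOddDegree k E) :
    signSum k E = 0 := by
  obtain ⟨v, hodd, hv⟩ : ∃ v : Place L, Odd (v.deg k) ∧ ¬ Even (E v) := by
    simpa [EvenAtOddDegree] using heven
  rw [signSum_eq_prod]
  refine Finset.prod_eq_zero (Finsupp.mem_support_iff.mpr fun h : E v = 0 => hv (by simp [h])) ?_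
  obtain ⟨n, hn⟩ := Int.eq_ofNat_of_zero_le (hE v)
  rw [hn, Int.even_coe_nat] at hv
  rw [hn, sum_sign_single, if_pos hodd, if_neg hv]

theorem signSum_nonneg {E : Divisor L} (hE : 0 ≤ E) : 0 ≤ signSum k E := by
  by_cases heven : EvenAtOddDegree k E
  · exact (signSum_pos hE heven).le
  · exact (signSum_eq_zero hE heven).ge

/-- The weights, supported on the degrees `j` with `2 * j ≤ n`, obtained from `(-1) ^ j` by folding
the interval `[0, n]` along `j ↦ n - j`. -/
def foldedSign (n j : ℤ) : ℤ :=
  (if 2 * j ≤ n then (j.negOnePow : ℤ) else 0) +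
    if 2 * j < n then ((n - j).negOnePow : ℤ) else 0

theorem foldedSign_eq_zero {n j : ℤ} (h : n < 2 * j) : foldedSign n j = 0 := by
  rw [foldedSign, if_neg (by lia), if_neg (by lia), add_zero]

theorem sum_Icc_zero_sub {M : Type*} [AddCommMonoid M] (A : Divisor L) (g : Divisor L → M)
    [DecidableEq (Place L)] : ∑ E ∈ Finset.Icc 0 A, g (A - E) = ∑ E ∈ Finset.Icc 0 A, g E := by
  have hmem : ∀ E ∈ Finset.Icc 0 A, A - E ∈ Finset.Icc 0 A := fun E hE => by
    rw [Finset.mem_Icc] at hE ⊢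
    exact ⟨sub_nonneg.mpr hE.2, sub_le_self _ hE.1⟩
  exact Finset.sum_nbij' (A - ·) (A - ·) hmem hmem (by simp) (by simp) (by simp)

open Classical in
theorem signSum_eq_sum_foldedSign (A : Divisor L) :
    signSum k A = ∑ E ∈ Finset.Icc 0 A, foldedSign (degree k A) (degree k E) := by
  have hfold : ∑ E ∈ Finset.Icc 0 A,
      (if 2 * degree k E ≤ degree k A then 0 else ((degree k E).negOnePow : ℤ)) =
      ∑ E ∈ Finset.Icc 0 A, if 2 * degree k E < degree k A
        then ((degree k A - degree k E).negOnePow : ℤ) else 0 := by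
    rw [← sum_Icc_zero_sub]
    refine Finset.sum_congr rfl fun E _ => ?_
    rw [map_sub]
    split_ifs <;> first | rfl | lia
  simp only [foldedSign]
  rw [Finset.sum_add_distrib, ← hfold, ← Finset.sum_add_distrib]
  refine Finset.sum_congr rfl fun E _ => ?_
  rw [sign]
  split_ifs <;> simp

namespace IsGlobalFunctionField

variable (hF : IsGlobalFunctionField k L)

include hF in
theorem finite_coe_riemannRochSpace (D : Divisor L) :
    (riemannRochSpace k D : Set L).Finite :=
  have := hF.finite_riemannRochSpace D
  have : Finite (riemannRochSpace k D) := Module.finite_of_finite k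
  Set.toFinite _

open Classical in
/-- The nonzero elements of the Riemann–Roch space of `D`. -/
noncomputable def nonzeroSections (D : Divisor L) : Finset L :=
  (hF.finite_coe_riemannRochSpace D).toFinset.erase 0

open Classical in
theorem mem_nonzeroSections {D : Divisor L} {f : L} :
    f ∈ hF.nonzeroSections D ↔ f ≠ 0 ∧ 0 ≤ D + hF.divisor f := by
  rw [nonzeroSections, Finset.mem_erase, Set.Finite.mem_toFinset, SetLike.mem_coe]
  exact and_congr_right fun hf => hF.mem_riemannRochSpace_iff hf D

open Classical in
theorem card_nonzeroSections (D : Divisor L) :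
    ((hF.nonzeroSections D).card : ℤ) = (Nat.card k : ℤ) ^ ell k D - 1 := by
  have := hF.finite_riemannRochSpace D
  have hcard : Nat.card (riemannRochSpace k D) = Nat.card k ^ ell k D :=
    Module.natCard_eq_pow_finrank (K := k)
  have hpos : 0 < Nat.card k ^ ell k D := pow_pos Nat.card_pos _
  rw [nonzeroSections, Finset.card_erase_of_mem (by simp),
    ← Set.ncard_eq_toFinset_card _ (hF.finite_coe_riemannRochSpace D), ← Nat.card_coe_set_eq,
    SetLike.coe_sort_coe, hcard]
  push_cast [hpos]
  rfl

theorem sum_signSum_nonzeroSections (D : Divisor L) :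
    ∑ f ∈ hF.nonzeroSections D, signSum k (D + hF.divisor f) =
      ∑ E ∈ (hF.finite_effective_degree_le (degree k D)).toFinset,
        foldedSign (degree k D) (degree k E) * ((Nat.card k : ℤ) ^ ell k (D - E) - 1) := by
  classical
  have hdeg (f : L) : degree k (D + hF.divisor f) = degree k D := by
    rw [map_add, hF.degree_divisor, add_zero]
  simp only [signSum_eq_sum_foldedSign, hdeg]
  rw [Finset.sum_comm' (s' := fun E => hF.nonzeroSections (D - E))
    (t' := (hF.finite_effective_degree_le (degree k D)).toFinset)]
  · refine Finset.sum_congr rfl fun E _ => ?_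
    rw [Finset.sum_const, nsmul_eq_mul, hF.card_nonzeroSections, mul_comm]
  · intro f E
    have hsub : 0 ≤ D - E + hF.divisor f ↔ E ≤ D + hF.divisor f := by
      rw [← add_sub_right_comm, sub_nonneg]
    rw [mem_nonzeroSections, mem_nonzeroSections, Finset.mem_Icc, Set.Finite.mem_toFinset, hsub]
    refine ⟨fun ⟨⟨hf, _⟩, hE, hle⟩ => ⟨⟨hf, hle⟩, hE, hdeg f ▸ degree_mono hle⟩,
      fun ⟨⟨hf, hle⟩, hE, _⟩ => ⟨⟨hf, hE.trans hle⟩, hE, hle⟩⟩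

include hF in
/- In the folded sum only `E` with `2 deg E ≤ deg D` contribute, and for these `ℓ(D - E)` is
determined by the degree. -/
theorem sum_signSum_congr : ∃ n₁ : ℤ, ∀ D D' : Divisor L, n₁ ≤ degree k D →
    degree k D = degree k D' →
    ∑ f ∈ hF.nonzeroSections D, signSum k (D + hF.divisor f) =
      ∑ f ∈ hF.nonzeroSections D', signSum k (D' + hF.divisor f) := by
  obtain ⟨c, n₀, hell⟩ := hF.exists_ell_eq_degree_sub
  refine ⟨2 * n₀, fun D D' hD hDD' => ?_⟩
  rw [sum_signSum_nonzeroSections, sum_signSum_nonzeroSections, ← hDD']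
  refine Finset.sum_congr rfl fun E _ => ?_
  obtain hE | hE := lt_or_ge (degree k D) (2 * degree k E)
  · rw [foldedSign_eq_zero hE, zero_mul, zero_mul]
  · have hDE := hell (D - E) (by rw [map_sub]; lia)
    have hDE' := hell (D' - E) (by rw [map_sub]; lia)
    rw [map_sub] at hDE hDE'
    rw [show ell k (D - E) = ell k (D' - E) by lia]

include hF in
theorem exists_evenAtOddDegree_add_divisor : ∃ n₁ : ℤ, ∀ D D' : Divisor L, n₁ ≤ degree k D →
    degree k D = degree k D' → 0 ≤ D' → EvenAtOddDegree k D' →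
    ∃ f : L, f ≠ 0 ∧ 0 ≤ D + hF.divisor f ∧ EvenAtOddDegree k (D + hF.divisor f) := by
  obtain ⟨n₁, hn₁⟩ := hF.sum_signSum_congr
  refine ⟨n₁, fun D D' hD hDD' hD'₀ hD' => ?_⟩
  have hpos : 0 < ∑ f ∈ hF.nonzeroSections D', signSum k (D' + hF.divisor f) := by
    refine Finset.sum_pos' (fun f hf => signSum_nonneg (hF.mem_nonzeroSections.mp hf).2)
      ⟨1, hF.mem_nonzeroSections.mpr ⟨one_ne_zero, ?_⟩, ?_⟩
    · rwa [hF.divisor_one, add_zero]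
    · rw [hF.divisor_one, add_zero]
      exact signSum_pos hD'₀ hD'
  rw [← hn₁ D D' hD hDD'] at hpos
  obtain ⟨f, hf, hfsum⟩ := Finset.exists_ne_zero_of_sum_ne_zero hpos.ne'
  obtain ⟨hf0, hDf⟩ := hF.mem_nonzeroSections.mp hf
  exact ⟨f, hf0, hDf, not_imp_comm.mp (signSum_eq_zero hDf) hfsum⟩

end IsGlobalFunctionField

end Divisors

/-! ### Residue degrees and the class group of degree zero -/

theorem ringChar_ne_two {R : Type*} [NonAssocSemiring R] (h2 : (2 : R) ≠ 0) : ringChar R ≠ 2 :=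
  fun h => h2 (by simpa [h] using ringChar.Nat.cast_ringChar (R := R))

theorem pow_card_pow_half {R : Type*} [Monoid R] [HasDistribNeg R] {q : ℕ} (hq : Odd q) {ε : R}
    (hfrob : ε ^ q = ε) (hhalf : ε ^ (q / 2) = -1) (d : ℕ) : ε ^ (q ^ d / 2) = (-1) ^ d := by
  induction d with
  | zero => simp
  | succ d ih =>
    obtain ⟨m, hm⟩ := hq.pow (n := d)
    obtain ⟨r, rfl⟩ := hq
    have hsucc : (2 * r + 1) ^ (d + 1) / 2 = (2 * r + 1) * m + r := by
      have : (2 * r + 1) ^ (d + 1) = 2 * ((2 * r + 1) * m + r) + 1 := by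
        rw [pow_succ, hm]
        ring
      lia
    rw [hm, show (2 * m + 1) / 2 = m by lia] at ih
    rw [show (2 * r + 1) / 2 = r by lia] at hhalf
    rw [hsucc, pow_add, pow_mul, hfrob, ih, hhalf, pow_succ]

theorem isSquare_algebraMap_iff_even_finrank {F E : Type*} [Field F] [Field E] [Finite E]
    [Algebra F E] (h2 : (2 : F) ≠ 0) {ε : F} (hε : ¬ IsSquare ε) :
    IsSquare (algebraMap F E ε) ↔ Even (Module.finrank F E) := by
  have hinj := (algebraMap F E).injective
  have : Finite F := Finite.of_injective _ hinj
  have := Fintype.ofFinite F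
  have := Fintype.ofFinite E
  have hF := ringChar_ne_two h2
  have hE : ringChar E ≠ 2 := ringChar_ne_two fun h => h2 (hinj (by rw [map_ofNat, h, map_zero]))
  have hε0 : ε ≠ 0 := fun h => hε (h ▸ IsSquare.zero)
  have hhalf : ε ^ (Fintype.card F / 2) = -1 :=
    (FiniteField.pow_dichotomy hF hε0).resolve_left (mt (FiniteField.isSquare_iff hF hε0).mpr hε)
  have hodd : Odd (Fintype.card F) := Nat.odd_iff.mpr (FiniteField.odd_card_of_char_ne_two hF)
  have : Module.Finite F E := Module.Finite.of_finite
  rw [FiniteField.isSquare_iff hE (by simpa using hinj.ne hε0),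
    Module.card_eq_pow_finrank (K := F) (V := E), ← map_pow,
    pow_card_pow_half hodd (FiniteField.pow_card ε) hhalf, map_pow, map_neg, map_one,
    neg_one_pow_eq_one_iff_even (Ring.neg_one_ne_one_of_char_ne_two hE)]

theorem exists_eq_sq_sub_mul_sq {F : Type*} [Field F] [Finite F] (h2 : (2 : F) ≠ 0) {ε : F}
    (hε : ε ≠ 0) (u : F) : ∃ a b : F, u = a ^ 2 - ε * b ^ 2 := by
  have := Fintype.ofFinite F
  open Polynomial in
  obtain ⟨a, b, h⟩ := FiniteField.exists_root_sum_quadratic (R := F)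
    (f := X ^ 2 - C u) (g := C (-ε) * X ^ 2) (degree_X_pow_sub_C two_pos u)
    (degree_C_mul_X_pow 2 (neg_ne_zero.mpr hε))
    (FiniteField.odd_card_of_char_ne_two (ringChar_ne_two h2))
  refine ⟨a, b, ?_⟩
  simp only [Polynomial.eval_sub, Polynomial.eval_pow, Polynomial.eval_X, Polynomial.eval_C,
    Polynomial.eval_mul] at h
  linear_combination -h

/- For a cyclic group of order two acting on a finite group this is the triviality of the Herbrand
quotient, with `f` the norm and `g` the difference. -/
theorem ker_le_range_of_ker_le_range {G : Type*} [AddCommGroup G] [Finite G] {f g : G →+ G}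
    (hfg : f.comp g = 0) (hgf : g.comp f = 0) (h : g.ker ≤ f.range) : f.ker ≤ g.range := by
  have hcard (φ : G →+ G) : Nat.card φ.ker * Nat.card φ.range = Nat.card G := by
    rw [← AddSubgroup.index_ker, AddSubgroup.card_mul_index]
  have hrange : f.range = g.ker :=
    le_antisymm ((AddMonoidHom.range_le_ker_iff _ _).mpr hgf) h
  have hle : g.range ≤ f.ker := (AddMonoidHom.range_le_ker_iff _ _).mpr hfg
  refine (AddSubgroup.eq_of_le_of_card_ge hle ?_).ge
  have hf := hcard f
  rw [hrange, ← hcard g, mul_comm] at hf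
  exact (Nat.eq_of_mul_eq_mul_left Nat.card_pos hf).le

section ClassGroup

variable {k L : Type*} [Field k] [Finite k] [Field L] [Algebra k L]

theorem Place.isNonresidue_iff_not_isSquare (v : Place L) {x : L} (hx : v.OrdGE x 0) :
    v.IsNonresidue x ↔ ¬ IsSquare (Ideal.Quotient.mk (v.maxIdeal k) ⟨x, hx⟩) := by
  rw [← not_iff_not, not_not, Place.IsNonresidue]
  push Not
  constructor
  · rintro ⟨c, hc⟩
    have hc₀ : v.OrdGE c 0 := by
      by_contra hneg
      obtain ⟨hne, hlt⟩ := Place.not_ordGE_iff.mp hneg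
      have hsq : v.OrdGE (c * c) 0 := by simpa using (hc.mono zero_le_one).add hx
      have := hsq.le (mul_ne_zero hne hne)
      rw [v.ord_mul _ _ hne hne] at this
      lia
    refine ⟨Ideal.Quotient.mk (v.maxIdeal k) ⟨c, hc₀⟩, ?_⟩
    rw [← map_mul]
    exact ((Place.residue_mk_eq_iff (k := k)).mpr hc).symm
  · rintro ⟨y, hy⟩
    obtain ⟨⟨c, hc₀⟩, rfl⟩ := Ideal.Quotient.mk_surjective y
    rw [← map_mul] at hy
    exact ⟨c, Place.residue_mk_eq_iff.mp hy.symm⟩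

theorem Place.isNonresidue_algebraMap_iff (v : Place L) [Finite (v.ResidueField k)]
    (h2 : (2 : k) ≠ 0) {ε : k} (hε : ¬ IsSquare ε) :
    v.IsNonresidue (algebraMap k L ε) ↔ Odd (v.deg k) := by
  rw [v.isNonresidue_iff_not_isSquare (k := k) (v.ordGE_algebraMap k ε), ← Nat.not_even_iff_odd]
  exact (isSquare_algebraMap_iff_even_finrank (E := v.ResidueField k) h2 hε).not

theorem EvenAtOddDegree.even_single (v : Place L) {n : ℤ} (hn : Even n) :
    EvenAtOddDegree k (Finsupp.single v n) := by
  classical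
  intro w _
  rw [Finsupp.single_apply]
  split_ifs
  exacts [hn, Even.zero]

namespace IsGlobalFunctionField

variable (hF : IsGlobalFunctionField k L)

include hF in
theorem exists_forall_odd_ord_iff {P Q : Place L} (hPQ : P ≠ Q) (hdeg : P.deg k = Q.deg k) :
    ∃ g : L, g ≠ 0 ∧ ∀ v : Place L, Odd (v.deg k) → (Odd (v.ord g) ↔ v = P ∨ v = Q) := by
  classical
  obtain ⟨n₁, hn₁⟩ := hF.exists_evenAtOddDegree_add_divisor
  have hP : (1 : ℤ) ≤ P.deg k := mod_cast hF.deg_pos P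
  obtain ⟨m, hm⟩ : ∃ m : ℕ, n₁ ≤ m := ⟨_, Int.self_le_toNat n₁⟩
  obtain ⟨g, hg, -, heven⟩ := hn₁
    (Finsupp.single P (1 : ℤ) + Finsupp.single Q (1 : ℤ) + Finsupp.single P (2 * (m : ℤ)))
    (Finsupp.single P (2 * ((m : ℤ) + 1)))
    (by
      simp only [map_add, degree_single]
      nlinarith)
    (by
      simp only [map_add, degree_single, hdeg]
      ring)
    (Finsupp.single_nonneg.mpr (by positivity))
    (EvenAtOddDegree.even_single P (even_two_mul _))
  refine ⟨g, hg, fun v hv => ?_⟩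
  have hv := heven v hv
  simp only [Finsupp.add_apply, divisor_apply, Finsupp.single_apply, eq_comm (b := v)] at hv
  rw [Int.even_iff] at hv
  rw [Int.odd_iff]
  split_ifs at hv with hvP hvQ hvQ
  · exact absurd (hvP.symm.trans hvQ) hPQ
  all_goals simp only [hvP, hvQ, true_or, or_true, or_self, iff_true, iff_false]; lia

/-- The group of divisors of nonzero functions. -/
noncomputable def principalDivisors : AddSubgroup (Divisor L) where
  carrier := {D | ∃ f : L, f ≠ 0 ∧ D = hF.divisor f}
  zero_mem' := ⟨1, one_ne_zero, hF.divisor_one.symm⟩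
  add_mem' := by
    rintro _ _ ⟨f, hf, rfl⟩ ⟨g, hg, rfl⟩
    exact ⟨f * g, mul_ne_zero hf hg, (hF.divisor_mul hf hg).symm⟩
  neg_mem' := by
    rintro _ ⟨f, hf, rfl⟩
    exact ⟨f⁻¹, inv_ne_zero hf, (hF.divisor_inv f).symm⟩

variable (k L) in
/-- The group of divisors of degree zero. -/
noncomputable def degreeZero : AddSubgroup (Divisor L) := (degree k).toAddMonoidHom.ker

theorem mem_degreeZero {D : Divisor L} : D ∈ degreeZero k L ↔ degree k D = 0 := Iff.rfl

/-- The group of divisor classes of degree zero. -/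
abbrev ClassGroupZero := degreeZero k L ⧸ hF.principalDivisors.addSubgroupOf (degreeZero k L)

theorem classGroupZero_mk_eq_iff {D E : degreeZero k L} :
    (D : hF.ClassGroupZero) = E ↔ ∃ f : L, f ≠ 0 ∧ (E : Divisor L) = D + hF.divisor f := by
  rw [QuotientAddGroup.eq, AddSubgroup.mem_addSubgroupOf]
  exact exists_congr fun f => and_congr_right fun _ => neg_add_eq_iff_eq_add

theorem finite_classGroupZero : Finite hF.ClassGroupZero := by
  obtain ⟨C, hC⟩ := hF.exists_degree_le_ell_add
  obtain ⟨P⟩ := hF.nonempty_place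
  obtain ⟨m, hm⟩ : ∃ m : ℕ, C + 1 ≤ m := ⟨_, Int.self_le_toNat _⟩
  have hP : (1 : ℤ) ≤ P.deg k := mod_cast hF.deg_pos P
  have heffective (D : degreeZero k L) :
      ∃ f : L, f ≠ 0 ∧ 0 ≤ (D : Divisor L) + Finsupp.single P (m : ℤ) + hF.divisor f := by
    refine hF.exists_effective_of_ell_pos ?_
    have hD := hC ((D : Divisor L) + Finsupp.single P (m : ℤ))
    rw [map_add, degree_single, mem_degreeZero.mp D.2] at hD
    have : (0 : ℤ) < ell k ((D : Divisor L) + Finsupp.single P (m : ℤ)) := by nlinarith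
    exact_mod_cast this
  choose f hf hfD using heffective
  have := (hF.finite_effective_degree_le (m * P.deg k)).to_subtype
  let effective (x : hF.ClassGroupZero) : {E : Divisor L | 0 ≤ E ∧ degree k E ≤ m * P.deg k} :=
    ⟨_, hfD x.out, by
      rw [map_add, map_add, degree_single, hF.degree_divisor, mem_degreeZero.mp x.out.2]
      simp⟩
  refine Finite.of_injective effective fun x y hxy => ?_
  replace hxy : (x.out : Divisor L) + Finsupp.single P (m : ℤ) + hF.divisor (f x.out) =
    y.out + Finsupp.single P (m : ℤ) + hF.divisor (f y.out) := congrArg Subtype.val hxy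
  rw [← Quotient.out_eq x, ← Quotient.out_eq y]
  refine hF.classGroupZero_mk_eq_iff.mpr ⟨f x.out * (f y.out)⁻¹,
    mul_ne_zero (hf _) (inv_ne_zero (hf _)), ?_⟩
  rw [hF.divisor_mul (hf _) (inv_ne_zero (hf _)), hF.divisor_inv]
  rw [add_right_comm, add_right_comm (y.out : Divisor L)] at hxy
  rw [← add_assoc, add_right_cancel hxy, add_neg_cancel_right]

end IsGlobalFunctionField

end ClassGroup

/-! ### Norms from constant quadratic extensions -/

theorem Place.deg_le_of_hom {k L : Type*} [Field k] [Finite k] [Field L] [Algebra k L]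
    (v w : Place L) [Finite (v.ResidueField k)] [Finite (w.ResidueField k)] (s : L →+* L)
    (h₀ : ∀ x, v.OrdGE x 0 → w.OrdGE (s x) 0) (h₁ : ∀ x, v.OrdGE x 1 → w.OrdGE (s x) 1) :
    v.deg k ≤ w.deg k := by
  let f : v.valuationSubalgebra k →+* w.valuationSubalgebra k :=
    (s.comp (v.valuationSubalgebra k).val.toRingHom).codRestrict (w.valuationSubalgebra k)
      fun x => h₀ x x.2
  let g : v.ResidueField k →+* w.ResidueField k :=
    Ideal.quotientMap (w.maxIdeal k) f fun x hx => h₁ x hx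
  have hcard := Nat.card_le_card_of_injective g g.injective
  rwa [v.natCard_residueField, w.natCard_residueField,
    Nat.pow_le_pow_iff_right Finite.one_lt_card] at hcard

/-- The valuation ring of a place, as a valuation subring. -/
def Place.valuationSubring {L : Type*} [Field L] (v : Place L) : ValuationSubring L where
  carrier := {x | v.OrdGE x 0}
  mul_mem' hx hy := (hx.mul hy).mono (add_zero 0).ge
  one_mem' := v.ordGE_one
  add_mem' := Place.OrdGE.add
  zero_mem' := v.ordGE_zero 0
  neg_mem' := Place.OrdGE.neg
  mem_or_inv_mem' _ := or_iff_not_imp_left.mpr fun h =>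
    (Place.OrdGE.inv_of_not h).mono zero_le_one

theorem Place.exists_valuationSubring_ordGE {M N : Type*} [Field M] [Field N] [Algebra M N]
    (v : Place M) : ∃ B : ValuationSubring N, ∀ x, algebraMap M N x ∈ B → v.OrdGE x 0 := by
  obtain ⟨B, hB, hloc⟩ := IsLocalRing.exists_factor_valuationRing
    ((algebraMap M N).comp v.valuationSubring.subtype)
  refine ⟨B, fun x hx => ?_⟩
  by_contra hneg
  have hx0 : x ≠ 0 := (Place.not_ordGE_iff.mp hneg).1
  let y : v.valuationSubring := ⟨x⁻¹, (Place.OrdGE.inv_of_not hneg).mono zero_le_one⟩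
  have hunit : IsUnit y := hloc.map_nonunit y <|
    IsUnit.of_mul_eq_one ⟨algebraMap M N x, hx⟩ (Subtype.ext (by simp [y, hx0]))
  obtain ⟨z, hz⟩ := hunit.exists_right_inv
  refine hneg ?_
  have hz : x⁻¹ * z = 1 := congrArg Subtype.val hz
  rw [inv_mul_eq_one₀ hx0] at hz
  exact hz ▸ z.2

namespace IsGlobalFunctionField

variable {k L : Type*} [Field k] [Finite k] [Field L] [Algebra k L]
  (hF : IsGlobalFunctionField k L)

theorem exists_nsmul_eq_divisor {E : Divisor L} (hE : degree k E = 0) :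
    ∃ n : ℕ, n ≠ 0 ∧ ∃ g : L, g ≠ 0 ∧ n • E = hF.divisor g := by
  have := hF.finite_classGroupZero
  let E₀ : degreeZero k L := ⟨E, hE⟩
  have htorsion : ((0 : degreeZero k L) : hF.ClassGroupZero) =
      ((Nat.card hF.ClassGroupZero • E₀ : degreeZero k L) : hF.ClassGroupZero) :=
    (card_nsmul_eq_zero' (x := (E₀ : hF.ClassGroupZero))).symm
  obtain ⟨g, hg, hE⟩ := hF.classGroupZero_mk_eq_iff.mp htorsion
  exact ⟨_, Nat.card_pos.ne', g, hg, by simpa using hE⟩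

theorem exists_evenAtOddDegree_of_degree_eq_zero {D : Divisor L} (hD : degree k D = 0) :
    ∃ f : L, f ≠ 0 ∧ EvenAtOddDegree k (D + hF.divisor f) := by
  obtain ⟨n₁, hn₁⟩ := hF.exists_evenAtOddDegree_add_divisor
  obtain ⟨P⟩ := hF.nonempty_place
  obtain ⟨m, hm⟩ : ∃ m : ℕ, n₁ ≤ m := ⟨_, Int.self_le_toNat n₁⟩
  have hP : (1 : ℤ) ≤ P.deg k := mod_cast hF.deg_pos P
  have hsingle : EvenAtOddDegree k (Finsupp.single P (2 * (m : ℤ))) :=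
    EvenAtOddDegree.even_single P (even_two_mul _)
  obtain ⟨f, hf, -, heven⟩ := hn₁ (D + Finsupp.single P (2 * (m : ℤ)))
    (Finsupp.single P (2 * (m : ℤ)))
    (by
      rw [map_add, hD, degree_single]
      nlinarith)
    (by rw [map_add, hD, zero_add])
    (Finsupp.single_nonneg.mpr (by positivity)) hsingle
  refine ⟨f, hf, fun v hv => ?_⟩
  have := (heven v hv).sub (hsingle v hv)
  rwa [add_right_comm, Finsupp.add_apply _ (Finsupp.single _ _), add_sub_cancel_right] at this

end IsGlobalFunctionField

namespace SqrtExt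

variable {k M k' N : Type*} [Field k] [Finite k] [Field M] [Algebra k M]
  [Field k'] [Finite k'] [Field N] [Algebra k' N] [Algebra M N]

local notation "ι" => algebraMap M N

section Conjugation

variable {a : M} (Q : SqrtExt M N a)

/-- The action of conjugation on divisors. -/
noncomputable def conjDivisor : Divisor N →+ Divisor N :=
  (Finsupp.domCongr (Function.Involutive.toPerm Q.conjPlace Q.conjPlace_conjPlace)).toAddMonoidHom

theorem conjDivisor_apply (E : Divisor N) (w : Place N) :
    Q.conjDivisor E w = E (Q.conjPlace w) := rfl

theorem conjDivisor_conjDivisor (E : Divisor N) : Q.conjDivisor (Q.conjDivisor E) = E := by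
  ext w
  rw [conjDivisor_apply, conjDivisor_apply, Q.conjPlace_conjPlace]

theorem conjDivisor_single (w : Place N) (n : ℤ) :
    Q.conjDivisor (Finsupp.single w n) = Finsupp.single (Q.conjPlace w) n :=
  Finsupp.equivMapDomain_single _ _ _

theorem exists_mul_σ_eq_of_ne_zero {z : N} (hz : z ≠ 0) :
    ∃ n : M, n ≠ 0 ∧ z * Q.σ z = ι n := by
  obtain ⟨n, hn⟩ := Q.exists_mul_σ_eq z
  refine ⟨n, ?_, hn⟩
  rintro rfl
  exact mul_ne_zero hz ((map_ne_zero _).mpr hz) (hn.trans (map_zero _))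

theorem add_mul_root_mul_σ (y z : M) :
    (ι y + ι z * Q.root) * Q.σ (ι y + ι z * Q.root) = ι (y ^ 2 - a * z ^ 2) := by
  simp only [map_add, map_mul, map_sub, map_pow, Q.σ_algebraMap, Q.σ_root]
  linear_combination -(ι z) ^ 2 * Q.root_mul_self

/- Hilbert's Theorem 90 for a quadratic extension. -/
theorem exists_eq_mul_σ_of_mul_σ_eq_one {h : N} (hh : h * Q.σ h = 1) :
    ∃ τ : N, τ ≠ 0 ∧ τ = h * Q.σ τ := by
  by_cases h1 : h = -1
  · exact ⟨Q.root, Q.root_ne_zero, by rw [h1, Q.σ_root]; ring⟩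
  · refine ⟨1 + h, fun h2 => h1 (by linear_combination h2), ?_⟩
    rw [map_add, map_one]
    linear_combination -hh

variable (hN : IsGlobalFunctionField k' N)

theorem conjDivisor_divisor (h : N) : Q.conjDivisor (hN.divisor h) = hN.divisor (Q.σ h) := by
  ext w
  rfl

include hN

theorem deg_conjPlace (w : Place N) : (Q.conjPlace w).deg k' = w.deg k' := by
  have hle (w : Place N) : (Q.conjPlace w).deg k' ≤ w.deg k' := by
    have := hN.finite_residueField w
    have := hN.finite_residueField (Q.conjPlace w)
    exact Place.deg_le_of_hom (Q.conjPlace w) w Q.σ (fun _ => (Q.conjPlace_ordGE _ _ _).mp)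
      fun _ => (Q.conjPlace_ordGE _ _ _).mp
  refine le_antisymm (hle w) ?_
  simpa only [Q.conjPlace_conjPlace] using hle (Q.conjPlace w)

theorem degree_conjDivisor (E : Divisor N) : degree k' (Q.conjDivisor E) = degree k' E := by
  induction E using Finsupp.induction_linear with
  | zero => simp
  | add f g hf hg => rw [map_add, map_add, map_add, hf, hg]
  | single w n => rw [conjDivisor_single, degree_single, degree_single, Q.deg_conjPlace hN]

theorem exists_restrict_eq (v : Place M) : ∃ w : Place N, Q.restrict w = v := by
  obtain ⟨B, hB⟩ := v.exists_valuationSubring_ordGE (N := N)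
  obtain ⟨w, hw⟩ := hN.exists_place_le B (by
    rintro rfl
    obtain ⟨x, hx, hord⟩ := v.exists_ord_eq (-1)
    have := (hB x trivial).le hx
    lia)
  exact ⟨w, Q.restrict_eq fun x hx => hB x (hw _ hx)⟩

theorem exists_apply_restrict_eq {E : Divisor N} (hE : Q.conjDivisor E = E) :
    ∃ D : Divisor M, ∀ w, D (Q.restrict w) = E w := by
  choose s hs using Q.exists_restrict_eq hN
  refine ⟨Finsupp.comapDomain s E (Function.LeftInverse.injective hs).injOn, fun w => ?_⟩
  rw [Finsupp.comapDomain_apply]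
  obtain h | h := Q.eq_or_eq_conjPlace (w := w) (w' := s (Q.restrict w)) (hs _).symm
  · rw [h]
  · rw [h, ← Q.conjDivisor_apply, hE]

theorem exists_eq_add_conjDivisor {F : Divisor N} (hF : Q.conjDivisor F = F)
    (heven : ∀ w, Q.conjPlace w = w → Even (F w)) : ∃ E : Divisor N, F = E + Q.conjDivisor E := by
  classical
  choose s hs using Q.exists_restrict_eq hN
  /- Halve the coefficients at the fixed places, and keep one place of each conjugate pair. -/
  let c (w : Place N) : ℤ :=
    if Q.conjPlace w = w then F w / 2 else if s (Q.restrict w) = w then F w else 0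
  let E : Divisor N := Finsupp.onFinset F.support c fun w hw => by
    rw [Finsupp.mem_support_iff]
    rintro h
    simp [c, h] at hw
  have hE (w : Place N) : E w = c w := rfl
  refine ⟨E, Finsupp.ext fun w => ?_⟩
  have hFw : F (Q.conjPlace w) = F w := by rw [← Q.conjDivisor_apply, hF]
  rw [Finsupp.add_apply, Q.conjDivisor_apply, hE, hE]
  simp only [c, Q.conjPlace_conjPlace, Q.restrict_conjPlace, hFw]
  by_cases hw : Q.conjPlace w = w
  · obtain ⟨m, hm⟩ := heven w hw
    simp only [hw, if_true]
    lia
  · have hw' : ¬ w = Q.conjPlace w := fun h => hw h.symm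
    simp only [hw, hw', if_false]
    obtain h | h := Q.eq_or_eq_conjPlace (w := w) (w' := s (Q.restrict w)) (hs _).symm
    · simp [h, hw']
    · simp [h, hw]

end Conjugation

section ConstantExtension

variable {ε : k} (Q : SqrtExt M N (algebraMap k M ε)) (hM : IsGlobalFunctionField k M)
  (hN : IsGlobalFunctionField k' N)

omit [Finite k] in
include Q in
theorem constants_two_ne_zero : (2 : k) ≠ 0 := fun h =>
  Q.two_ne_zero (by rw [← map_ofNat (algebraMap k M), h, map_zero])

omit [Finite k] in
include Q in
theorem constants_not_isSquare : ¬ IsSquare ε :=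
  fun h => Q.not_isSquare (h.map (algebraMap k M))

include Q in
theorem ord_algebraMap_algebraMap (w : Place N) (c : k) : w.ord (ι (algebraMap k M c)) = 0 := by
  rw [Q.ord_algebraMap, (Q.restrict w).ord_algebraMap k, mul_zero]

include Q in
theorem ord_two (w : Place N) : w.ord 2 = 0 := by
  rw [← map_ofNat ι 2, ← map_ofNat (algebraMap k M) 2]
  exact Q.ord_algebraMap_algebraMap w 2

theorem ord_algebraMap_eq (w : Place N) (x : M) : w.ord (ι x) = (Q.restrict w).ord x := by
  rw [Q.ord_algebraMap, Q.ramificationIdx_eq_one (Q.ord_two w) (Q.ord_algebraMap_algebraMap w ε),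
    one_mul]

theorem divisor_restrict (w : Place N) (x : M) :
    hM.divisor x (Q.restrict w) = hN.divisor (ι x) w := by
  rw [IsGlobalFunctionField.divisor_apply, IsGlobalFunctionField.divisor_apply,
    Q.ord_algebraMap_eq]

include hM in
theorem odd_deg_restrict {w : Place N} (hw : Q.conjPlace w = w) :
    Odd ((Q.restrict w).deg k) := by
  have := hM.finite_residueField (Q.restrict w)
  rw [← (Q.restrict w).isNonresidue_algebraMap_iff Q.constants_two_ne_zero
    Q.constants_not_isSquare]
  exact Q.isNonresidue_restrict_of_conjPlace_eq (Q.ord_two w) (Q.ord_algebraMap_algebraMap w ε) hw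

include hM hN in
theorem exists_eq_add_conjDivisor_of_evenAtOddDegree {D : Divisor M} {F : Divisor N}
    (hDF : ∀ w, D (Q.restrict w) = F w) (hD : EvenAtOddDegree k D) :
    ∃ E : Divisor N, F = E + Q.conjDivisor E := by
  refine Q.exists_eq_add_conjDivisor hN (Finsupp.ext fun w => ?_) fun w hw => ?_
  · rw [Q.conjDivisor_apply, ← hDF, ← hDF, Q.restrict_conjPlace]
  · rw [← hDF]
    exact hD _ (Q.odd_deg_restrict hM hw)

theorem ordGE_add_mul_root (w : Place N) (a b : k) :
    w.OrdGE (ι (algebraMap k M a) + ι (algebraMap k M b) * Q.root) 0 := by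
  have hroot : w.OrdGE Q.root 0 := Or.inr (Q.ord_root (Q.ord_algebraMap_algebraMap w ε)).ge
  have hconst (c : k) : w.OrdGE (ι (algebraMap k M c)) 0 :=
    Or.inr (Q.ord_algebraMap_algebraMap w c).ge
  exact (hconst a).add (((hconst b).mul hroot).mono (add_zero 0).ge)

include hM in
theorem exists_mul_σ_eq_of_divisor_eq_zero {u : M} (hu : u ≠ 0) (hdiv : hN.divisor (ι u) = 0) :
    ∃ γ : N, γ ≠ 0 ∧ γ * Q.σ γ = ι u ∧ hN.divisor γ = 0 := by
  have hord (w : Place N) : w.ord (ι u) = 0 := DFunLike.congr_fun hdiv w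
  obtain ⟨c, rfl⟩ := hM.exists_algebraMap_eq u fun v => by
    obtain ⟨w, rfl⟩ := Q.exists_restrict_eq hN v
    exact Or.inr ((Q.ord_algebraMap_eq w u).symm.trans (hord w)).ge
  have hε : ε ≠ 0 := by
    rintro rfl
    exact Q.constants_not_isSquare IsSquare.zero
  obtain ⟨a, b, hab⟩ := exists_eq_sq_sub_mul_sq Q.constants_two_ne_zero hε c
  have hnorm := Q.add_mul_root_mul_σ (algebraMap k M a) (algebraMap k M b)
  have hintegral (w : Place N) := Q.ordGE_add_mul_root w a b
  simp only [← map_pow, ← map_mul, ← map_sub, ← hab] at hnorm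
  set γ := ι (algebraMap k M a) + ι (algebraMap k M b) * Q.root
  have hγ : γ ≠ 0 := by
    intro h
    rw [h, zero_mul] at hnorm
    exact (map_ne_zero ι).mpr hu hnorm.symm
  refine ⟨γ, hγ, hnorm, Finsupp.ext fun w => ?_⟩
  have hw := (hintegral w).le hγ
  have hw' := (hintegral (Q.conjPlace w)).le hγ
  have hsum := hord w
  rw [← hnorm, w.ord_mul _ _ hγ ((map_ne_zero _).mpr hγ), ← Q.conjPlace_ord] at hsum
  rw [IsGlobalFunctionField.divisor_apply, Finsupp.coe_zero, Pi.zero_apply]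
  lia

include hM in
theorem exists_conjDivisor_add_divisor_eq {E : Divisor N} {h : N} (hh : h ≠ 0)
    (hE : Q.conjDivisor E = E + hN.divisor h) :
    ∃ τ : N, τ ≠ 0 ∧ Q.conjDivisor (E + hN.divisor τ) = E + hN.divisor τ := by
  have hσh : Q.σ h ≠ 0 := (map_ne_zero _).mpr hh
  obtain ⟨u, hu₀, hu⟩ := Q.exists_mul_σ_eq_of_ne_zero hh
  have hdiv : hN.divisor (ι u) = 0 := by
    have hconj := Q.conjDivisor_conjDivisor E
    rw [hE, map_add, hE, Q.conjDivisor_divisor hN, add_assoc, ← hN.divisor_mul hh hσh, hu] at hconj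
    exact left_eq_add.mp hconj.symm
  obtain ⟨γ, hγ, hγu, hγdiv⟩ := Q.exists_mul_σ_eq_of_divisor_eq_zero hM hN hu₀ hdiv
  obtain ⟨τ, hτ, hτh⟩ := Q.exists_eq_mul_σ_of_mul_σ_eq_one (h := h / γ) (by
    rw [map_div₀, div_mul_div_comm, hu, hγu, div_self ((map_ne_zero ι).mpr hu₀)])
  have hστ : Q.σ τ ≠ 0 := (map_ne_zero _).mpr hτ
  have hdivτ : hN.divisor τ = hN.divisor h + hN.divisor (Q.σ τ) := by
    conv_lhs => rw [hτh]
    rw [div_eq_mul_inv, hN.divisor_mul (mul_ne_zero hh (inv_ne_zero hγ)) hστ,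
      hN.divisor_mul hh (inv_ne_zero hγ), hN.divisor_inv, hγdiv, neg_zero, add_zero]
  refine ⟨τ, hτ, ?_⟩
  rw [map_add, hE, Q.conjDivisor_divisor hN, hdivτ, add_assoc]

include hM hN in
theorem degree_eq_zero_of_apply_restrict_eq {D : Divisor M} {E : Divisor N}
    (hDE : ∀ w, D (Q.restrict w) = E w) (hE : degree k' E = 0) : degree k D = 0 := by
  obtain ⟨n, hn, g, hg, hgE⟩ := hN.exists_nsmul_eq_divisor hE
  obtain ⟨x, -, hx⟩ := Q.exists_mul_σ_eq_of_ne_zero hg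
  have hord (w : Place N) : w.ord g = n • D (Q.restrict w) := by
    rw [← hN.divisor_apply, ← hgE, hDE, Finsupp.smul_apply]
  have hdiv : (2 * n) • D = hM.divisor x := by
    ext v
    obtain ⟨w, rfl⟩ := Q.exists_restrict_eq hN v
    rw [Q.divisor_restrict hM hN, ← hx, hN.divisor_apply,
      w.ord_mul _ _ hg ((map_ne_zero _).mpr hg), ← Q.conjPlace_ord, hord, hord,
      Q.restrict_conjPlace, Finsupp.smul_apply, two_mul, add_nsmul]
  have hdegree := congrArg (degree k) hdiv
  rw [hM.degree_divisor, map_nsmul] at hdegree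
  exact (smul_eq_zero.mp hdegree).resolve_left (by lia)

include hM in
theorem exists_add_divisor_eq_add_conjDivisor {E : Divisor N} (hE : degree k' E = 0) {h : N}
    (hh : h ≠ 0) (hEh : Q.conjDivisor E = E + hN.divisor h) :
    ∃ (E' : Divisor N) (g : N), g ≠ 0 ∧ E + hN.divisor g = E' + Q.conjDivisor E' := by
  obtain ⟨τ, hτ, hfixed⟩ := Q.exists_conjDivisor_add_divisor_eq hM hN hh hEh
  obtain ⟨D, hD⟩ := Q.exists_apply_restrict_eq hN hfixed
  have hD₀ : degree k D = 0 := Q.degree_eq_zero_of_apply_restrict_eq hM hN hD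
    (by rw [map_add, hE, hN.degree_divisor, add_zero])
  obtain ⟨f, hf, heven⟩ := hM.exists_evenAtOddDegree_of_degree_eq_zero hD₀
  have hιf : ι f ≠ 0 := (map_ne_zero ι).mpr hf
  obtain ⟨E', hE'⟩ := Q.exists_eq_add_conjDivisor_of_evenAtOddDegree hM hN
    (F := E + hN.divisor τ + hN.divisor (ι f))
    (fun w => by rw [Finsupp.add_apply, hD, Q.divisor_restrict hM hN, ← Finsupp.add_apply]) heven
  exact ⟨E', τ * ι f, mul_ne_zero hτ hιf, by rw [hN.divisor_mul hτ hιf, ← add_assoc, hE']⟩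

/-- The action of conjugation on divisors of degree zero. -/
noncomputable def conjDegreeZero {a : M} (Q : SqrtExt M N a) (hN : IsGlobalFunctionField k' N) :
    IsGlobalFunctionField.degreeZero k' N →+ IsGlobalFunctionField.degreeZero k' N :=
  (Q.conjDivisor.comp (IsGlobalFunctionField.degreeZero k' N).subtype).codRestrict _ fun E =>
    (Q.degree_conjDivisor hN E).trans E.2

theorem coe_conjDegreeZero {a : M} (Q : SqrtExt M N a)
    (E : IsGlobalFunctionField.degreeZero k' N) :
    (Q.conjDegreeZero hN E : Divisor N) = Q.conjDivisor E := rfl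

/-- The action of conjugation on divisor classes of degree zero. -/
noncomputable def conjClass {a : M} (Q : SqrtExt M N a) (hN : IsGlobalFunctionField k' N) :
    hN.ClassGroupZero →+ hN.ClassGroupZero :=
  QuotientAddGroup.map _ _ (Q.conjDegreeZero hN) <| by
    rintro E ⟨g, hg, hE : (E : Divisor N) = hN.divisor g⟩
    exact ⟨Q.σ g, (map_ne_zero _).mpr hg,
      show Q.conjDivisor E = _ by rw [hE, Q.conjDivisor_divisor hN]⟩

theorem conjClass_mk {a : M} (Q : SqrtExt M N a) (E : IsGlobalFunctionField.degreeZero k' N) :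
    Q.conjClass hN E = (Q.conjDegreeZero hN E : hN.ClassGroupZero) := rfl

theorem conjClass_conjClass {a : M} (Q : SqrtExt M N a) (x : hN.ClassGroupZero) :
    Q.conjClass hN (Q.conjClass hN x) = x := by
  obtain ⟨E, rfl⟩ := QuotientAddGroup.mk_surjective x
  rw [conjClass_mk, conjClass_mk]
  exact congrArg _ (Subtype.ext (Q.conjDivisor_conjDivisor E))

include hM in
theorem exists_eq_add_conjClass_of_conjClass_eq {x : hN.ClassGroupZero}
    (hx : Q.conjClass hN x = x) : ∃ y, x = y + Q.conjClass hN y := by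
  obtain ⟨E, rfl⟩ := QuotientAddGroup.mk_surjective x
  obtain ⟨h, hh, hE⟩ := hN.classGroupZero_mk_eq_iff.mp hx.symm
  obtain ⟨E', g, hg, hE'⟩ := Q.exists_add_divisor_eq_add_conjDivisor hM hN E.2 hh hE
  have hdegree : degree k' E' = 0 := by
    have := congrArg (degree k') hE'
    rw [map_add, hN.degree_divisor, IsGlobalFunctionField.mem_degreeZero.mp E.2, map_add,
      Q.degree_conjDivisor hN] at this
    lia
  refine ⟨((⟨E', hdegree⟩ : IsGlobalFunctionField.degreeZero k' N) : hN.ClassGroupZero), ?_⟩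
  rw [conjClass_mk, ← QuotientAddGroup.mk_add]
  exact hN.classGroupZero_mk_eq_iff.mpr ⟨g, hg, hE'.symm⟩

include hM in
theorem exists_eq_sub_conjClass_of_add_conjClass_eq_zero {x : hN.ClassGroupZero}
    (hx : x + Q.conjClass hN x = 0) : ∃ y, x = y - Q.conjClass hN y := by
  have := hN.finite_classGroupZero
  let norm := AddMonoidHom.id hN.ClassGroupZero + Q.conjClass hN
  let diff := AddMonoidHom.id hN.ClassGroupZero - Q.conjClass hN
  have hle : norm.ker ≤ diff.range := by
    refine ker_le_range_of_ker_le_range (AddMonoidHom.ext fun y => ?_)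
      (AddMonoidHom.ext fun y => ?_) fun y hy => ?_
    · simp [norm, diff, Q.conjClass_conjClass hN, add_comm]
    · simp [norm, diff, Q.conjClass_conjClass hN, add_comm]
    · obtain ⟨z, hz⟩ := Q.exists_eq_add_conjClass_of_conjClass_eq hM hN (sub_eq_zero.mp hy).symm
      exact ⟨z, hz.symm⟩
  obtain ⟨y, hy⟩ := hle hx
  exact ⟨y, hy.symm⟩

include hM in
theorem exists_eq_sub_conjDivisor_add_divisor {E : Divisor N} {f : N} (hf : f ≠ 0)
    (hE : hN.divisor f = E + Q.conjDivisor E) :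
    ∃ (C : Divisor N) (g : N), g ≠ 0 ∧ E = C - Q.conjDivisor C + hN.divisor g := by
  have hE₀ : degree k' E = 0 := by
    have := congrArg (degree k') hE
    rw [hN.degree_divisor, map_add, Q.degree_conjDivisor hN] at this
    lia
  let E₀ : IsGlobalFunctionField.degreeZero k' N := ⟨E, hE₀⟩
  have hnorm : (E₀ : hN.ClassGroupZero) + Q.conjClass hN E₀ = 0 := by
    rw [conjClass_mk, ← QuotientAddGroup.mk_add, ← QuotientAddGroup.mk_zero]
    exact (hN.classGroupZero_mk_eq_iff.mpr ⟨f, hf, by simp [hE, E₀, coe_conjDegreeZero]⟩).symm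
  obtain ⟨y, hy⟩ := Q.exists_eq_sub_conjClass_of_add_conjClass_eq_zero hM hN hnorm
  obtain ⟨C, rfl⟩ := QuotientAddGroup.mk_surjective y
  rw [conjClass_mk, ← QuotientAddGroup.mk_sub] at hy
  obtain ⟨g, hg, hgE⟩ := hN.classGroupZero_mk_eq_iff.mp hy.symm
  exact ⟨C, g, hg, hgE⟩

include Q hM hN in
theorem exists_eq_sq_sub_mul_sq_of_evenAtOddDegree {f : M} (hf : f ≠ 0)
    (heven : EvenAtOddDegree k (hM.divisor f)) :
    ∃ y z : M, f = y ^ 2 - algebraMap k M ε * z ^ 2 := by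
  have hιf : ι f ≠ 0 := (map_ne_zero ι).mpr hf
  obtain ⟨E, hE⟩ := Q.exists_eq_add_conjDivisor_of_evenAtOddDegree hM hN
    (fun w => Q.divisor_restrict hM hN w f) heven
  obtain ⟨C, g, hg, hgE⟩ := Q.exists_eq_sub_conjDivisor_add_divisor hM hN hιf hE
  have hσg : Q.σ g ≠ 0 := (map_ne_zero _).mpr hg
  obtain ⟨n, hn, hgn⟩ := Q.exists_mul_σ_eq_of_ne_zero hg
  have hιn : ι n ≠ 0 := (map_ne_zero ι).mpr hn
  have hdiv : hN.divisor (ι f) = hN.divisor (ι n) := by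
    rw [hE, ← hgn, hN.divisor_mul hg hσg, hgE, map_add, map_sub, Q.conjDivisor_conjDivisor,
      Q.conjDivisor_divisor hN]
    abel
  obtain ⟨γ, -, hγ, -⟩ := Q.exists_mul_σ_eq_of_divisor_eq_zero hM hN (div_ne_zero hf hn) (by
    rw [map_div₀, div_eq_mul_inv, hN.divisor_mul hιf (inv_ne_zero hιn), hN.divisor_inv, hdiv,
      add_neg_cancel])
  obtain ⟨y, z, hyz⟩ := Q.exists_eq_add_mul_root (g * γ)
  refine ⟨y, z, (algebraMap M N).injective ?_⟩
  rw [← Q.add_mul_root_mul_σ, ← hyz, map_mul, mul_mul_mul_comm, hgn, hγ, ← map_mul,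
    mul_div_cancel₀ _ hn]

end ConstantExtension

end SqrtExt

/-! ### Places and maximal ideals of Dedekind domains -/

theorem Place.mem_valuationSubring {L : Type*} [Field L] {v : Place L} {x : L} :
    x ∈ v.valuationSubring ↔ v.OrdGE x 0 := Iff.rfl

theorem Place.valuationSubring_ne_top {L : Type*} [Field L] (v : Place L) :
    v.valuationSubring ≠ ⊤ := by
  obtain ⟨x, hx, hord⟩ := v.exists_ord_eq (-1)
  intro h
  have hx' : v.OrdGE x 0 := Place.mem_valuationSubring.mp (h ▸ ValuationSubring.mem_top x)
  have := hx'.le hx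
  lia

section HeightOneSpectrum

variable {B L : Type*} [CommRing B] [IsDedekindDomain B] [Field L] [Algebra B L]
  [IsFractionRing B L]

variable (L) in
/-- The place of `L` attached to a maximal ideal of `B`. -/
noncomputable def Place.ofPrime (P : HeightOneSpectrum B) : Place L where
  ord x := -WithZero.log (P.valuation L x)
  ord_zero := by simp
  ord_mul x y hx hy := by
    rw [map_mul, WithZero.log_mul (by simpa using hx) (by simpa using hy), neg_add]
  ord_add x y hx hy hxy := by
    have hx' : P.valuation L x ≠ 0 := by simpa using hx
    have hy' : P.valuation L y ≠ 0 := by simpa using hy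
    have hxy' : P.valuation L (x + y) ≠ 0 := by simpa only [ne_eq, Valuation.zero_iff] using hxy
    obtain h | h := le_max_iff.mp ((P.valuation L).map_add x y)
    · exact (min_le_left _ _).trans (neg_le_neg ((WithZero.log_le_log hxy' hx').mpr h))
    · exact (min_le_right _ _).trans (neg_le_neg ((WithZero.log_le_log hxy' hy').mpr h))
  exists_uniformizer := by
    obtain ⟨π, hπ⟩ := P.valuation_exists_uniformizer L
    refine ⟨π, ?_, by simp [hπ]⟩
    rintro rfl
    rw [map_zero] at hπ
    exact WithZero.exp_ne_zero hπ.symm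

theorem Place.ofPrime_ordGE_zero (P : HeightOneSpectrum B) (x : L) :
    (Place.ofPrime L P).OrdGE x 0 ↔ P.valuation L x ≤ 1 := by
  obtain rfl | hx := eq_or_ne x 0
  · simp [Place.OrdGE]
  · rw [← WithZero.log_le_log (by simpa using hx) one_ne_zero, WithZero.log_one, Place.OrdGE,
      or_iff_right hx]
    exact neg_nonneg

theorem Place.ofPrime_ordGE_one (P : HeightOneSpectrum B) (x : L) :
    (Place.ofPrime L P).OrdGE x 1 ↔ P.valuation L x < 1 := by
  obtain rfl | hx := eq_or_ne x 0
  · simp [Place.OrdGE]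
  · rw [← WithZero.log_lt_log (by simpa using hx) one_ne_zero, WithZero.log_one, Place.OrdGE,
      or_iff_right hx, ← neg_pos]
    exact Order.one_le_iff_pos

omit [IsDedekindDomain B] [IsFractionRing B L] in
theorem inv_algebraMap_mem_of_notMem_comap {A : ValuationSubring L} {g : B →+* A}
    (hg : ∀ b, (g b : L) = algebraMap B L b) {b : B}
    (hb : b ∉ (IsLocalRing.maximalIdeal A).comap g) : (algebraMap B L b)⁻¹ ∈ A := by
  have hunit : IsUnit (g b) := IsLocalRing.notMem_maximalIdeal.mp hb
  obtain ⟨c, hc⟩ := hunit.exists_right_inv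
  have hc : algebraMap B L b * (c : L) = 1 := hg b ▸ congrArg Subtype.val hc
  exact eq_inv_of_mul_eq_one_right hc ▸ c.2

theorem exists_ofPrime_le (A : ValuationSubring L) (hA : A ≠ ⊤)
    (hB : ∀ b : B, algebraMap B L b ∈ A) :
    ∃ P : HeightOneSpectrum B, ∀ x, (Place.ofPrime L P).OrdGE x 0 → x ∈ A := by
  let g : B →+* A := (algebraMap B L).codRestrict A.toSubring hB
  let p : Ideal B := (IsLocalRing.maximalIdeal A).comap g
  have hinv {b : B} (hb : b ∉ p) : (algebraMap B L b)⁻¹ ∈ A :=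
    inv_algebraMap_mem_of_notMem_comap (g := g) (fun _ => rfl) hb
  have hp : p ≠ ⊥ := by
    intro h
    refine hA (eq_top_iff.mpr fun x _ => ?_)
    obtain ⟨a, b, hb, rfl⟩ := IsFractionRing.div_surjective (A := B) x
    rw [div_eq_mul_inv]
    exact A.mul_mem _ _ (hB a) (hinv (by simpa [h] using hb))
  refine ⟨⟨p, Ideal.comap_isPrime g _, hp⟩, fun x hx => ?_⟩
  rw [Place.ofPrime_ordGE_zero] at hx
  obtain ⟨n, d, hd⟩ := HeightOneSpectrum.exists_primeCompl_mul_eq_of_integer _ x hx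
  have hd₀ : algebraMap B L (d : B) ≠ 0 := by
    rw [map_ne_zero_iff _ (IsFractionRing.injective B L)]
    exact fun h => d.2 (h ▸ Ideal.zero_mem _)
  rw [eq_div_of_mul_eq hd₀ hd, div_eq_mul_inv]
  exact A.mul_mem _ _ (hB n) (hinv d.2)

theorem exists_ofPrime_eq (v : Place L) (hB : ∀ b : B, v.OrdGE (algebraMap B L b) 0) :
    ∃ P : HeightOneSpectrum B, Place.ofPrime L P = v := by
  obtain ⟨P, hP⟩ := exists_ofPrime_le v.valuationSubring v.valuationSubring_ne_top hB
  exact ⟨P, Place.eq_of_forall_ordGE_zero_imp hP⟩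

theorem mem_support_of_ord_ofPrime_neg {P : HeightOneSpectrum B} {x : L}
    (h : (Place.ofPrime L P).ord x < 0) : P ∈ HeightOneSpectrum.Support B x := by
  have hx : x ≠ 0 := by
    rintro rfl
    exact h.ne (Place.ofPrime L P).ord_zero
  change 1 < P.valuation L x
  rw [← not_le, ← Place.ofPrime_ordGE_zero, Place.not_ordGE_iff]
  exact ⟨hx, h⟩

variable (B) in
theorem finite_setOf_ord_ne_zero (f : L) :
    {v : Place L | (∀ b : B, v.OrdGE (algebraMap B L b) 0) ∧ v.ord f ≠ 0}.Finite := by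
  refine (((HeightOneSpectrum.Support.finite B f).union
    (HeightOneSpectrum.Support.finite B f⁻¹)).image (Place.ofPrime L)).subset ?_
  rintro v ⟨hB, hf⟩
  obtain ⟨P, rfl⟩ := exists_ofPrime_eq v hB
  refine ⟨P, ?_, rfl⟩
  obtain h | h := lt_or_gt_of_ne hf
  · exact Or.inl (mem_support_of_ord_ofPrime_neg h)
  · exact Or.inr (mem_support_of_ord_ofPrime_neg (by rwa [Place.ord_inv, neg_lt_zero]))

theorem exists_ofPrime_ordGE_sub_one {P : HeightOneSpectrum B} {x : L}
    (hx : (Place.ofPrime L P).OrdGE x 0) :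
    ∃ c : B ⧸ P.asIdeal, ∀ b : B, Ideal.Quotient.mk P.asIdeal b = c →
      (Place.ofPrime L P).OrdGE (x - algebraMap B L b) 1 := by
  rw [Place.ofPrime_ordGE_zero] at hx
  obtain ⟨n, d, hd⟩ := HeightOneSpectrum.exists_primeCompl_mul_eq_of_integer _ x hx
  have hmax : P.asIdeal.IsMaximal := P.isMaximal
  obtain ⟨c, hc⟩ := Ideal.Quotient.exists_inv (I := P.asIdeal)
    (a := Ideal.Quotient.mk P.asIdeal d) fun h => d.2 (Ideal.Quotient.eq_zero_iff_mem.mp h)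
  refine ⟨Ideal.Quotient.mk _ n * c, fun b hb => ?_⟩
  have hmem : n - b * d ∈ P.asIdeal := by
    rw [← Ideal.Quotient.eq_zero_iff_mem, map_sub, map_mul, hb, mul_assoc, mul_comm c, hc,
      mul_one, sub_self]
  have hval : P.valuation L (x - algebraMap B L b) =
      P.valuation L (algebraMap B L (n - b * d)) := by
    rw [map_sub (algebraMap B L), map_mul, ← hd, ← sub_mul, Valuation.map_mul,
      (HeightOneSpectrum.valuation_eq_one_iff_notMem P).mpr d.2, mul_one]
  rwa [Place.ofPrime_ordGE_one, hval, HeightOneSpectrum.valuation_lt_one_iff_mem]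

theorem exists_residue_representatives_ofPrime (P : HeightOneSpectrum B)
    [Finite (B ⧸ P.asIdeal)] :
    ∃ S : Finset L, ∀ x, (Place.ofPrime L P).OrdGE x 0 →
      ∃ s ∈ S, (Place.ofPrime L P).OrdGE (x - s) 1 := by
  classical
  have := Fintype.ofFinite (B ⧸ P.asIdeal)
  choose s hs using Ideal.Quotient.mk_surjective (I := P.asIdeal)
  refine ⟨Finset.univ.image fun c => algebraMap B L (s c), fun x hx => ?_⟩
  obtain ⟨c, hc⟩ := exists_ofPrime_ordGE_sub_one hx
  exact ⟨_, Finset.mem_image_of_mem _ (Finset.mem_univ c), hc _ (hs c)⟩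

end HeightOneSpectrum

/-! ### Global function fields have enough places -/

theorem mem_valuationSubring_of_isIntegral {R L : Type*} [CommRing R] [Field L] [Algebra R L]
    {A : ValuationSubring L} (hR : ∀ r : R, algebraMap R L r ∈ A) {x : L} (hx : IsIntegral R x) :
    x ∈ A := by
  let g : R →+* A := (algebraMap R L).codRestrict A.toSubring hR
  obtain ⟨p, hp, hp₀⟩ := hx
  have hxA : IsIntegral A x := ⟨p.map g, hp.map g, by rwa [Polynomial.eval₂_map]⟩
  obtain ⟨y, rfl⟩ := (IsIntegrallyClosed.isIntegral_iff (R := A) (K := L)).mp hxA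
  exact y.2

theorem mem_valuationSubring_of_isIntegral_int {L : Type*} [Field L] (A : ValuationSubring L)
    {x : L} (hx : IsIntegral ℤ x) : x ∈ A :=
  mem_valuationSubring_of_isIntegral (fun n => by simp) hx

theorem isIntegral_int_of_finite {k₀ L : Type*} [Field k₀] [Finite k₀] [Field L] [Algebra k₀ L]
    {x : L} (hx : IsIntegral k₀ x) : IsIntegral ℤ x :=
  have : Module.Finite ℤ k₀ := Module.Finite.of_finite
  isIntegral_trans x hx

theorem algebraMap_polynomial_mem_valuationSubring {k₀ L : Type*} [Field k₀] [Finite k₀] [Field L]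
    [Algebra k₀[X] L] {A : ValuationSubring L} (hX : algebraMap k₀[X] L Polynomial.X ∈ A)
    (p : k₀[X]) : algebraMap k₀[X] L p ∈ A := by
  have : Module.Finite ℤ k₀ := Module.Finite.of_finite
  have hC (c : k₀) : algebraMap k₀[X] L (Polynomial.C c) ∈ A :=
    mem_valuationSubring_of_isIntegral_int A <|
      map_isIntegral_int ((algebraMap k₀[X] L).comp Polynomial.C) (Algebra.IsIntegral.isIntegral c)
  induction p using Polynomial.induction_on' with
  | add p q hp hq => exact map_add (algebraMap k₀[X] L) p q ▸ A.add_mem _ _ hp hq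
  | monomial n c =>
    rw [← Polynomial.C_mul_X_pow_eq_monomial, map_mul, map_pow]
    exact A.mul_mem _ _ (hC c) (pow_mem hX n)

theorem finite_quotient_polynomial {k₀ : Type*} [Field k₀] [Finite k₀] {I : Ideal k₀[X]}
    (hI : I ≠ ⊥) : Finite (k₀[X] ⧸ I) := by
  obtain ⟨f, hfI, hf⟩ := Submodule.exists_mem_ne_zero_of_ne_bot hI
  have : Finite (k₀[X] ⧸ Ideal.span {f}) := by
    have : Module.Finite k₀ (AdjoinRoot f) := (AdjoinRoot.powerBasis hf).finite
    exact Module.finite_of_finite k₀ (M := AdjoinRoot f)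
  exact Finite.of_surjective _ (Ideal.Quotient.factor_surjective
    ((Ideal.span_singleton_le_iff_mem _).mpr hfI))

theorem finite_quotient_of_finite_polynomial {k₀ B : Type*} [Field k₀] [Finite k₀] [CommRing B]
    [IsDomain B] [Algebra k₀[X] B] [Module.Finite k₀[X] B] {I : Ideal B} (hI : I ≠ ⊥) :
    Finite (B ⧸ I) := by
  obtain ⟨x, hxI, hx⟩ := Submodule.exists_mem_ne_zero_of_ne_bot hI
  have hne : I.under k₀[X] ≠ ⊥ :=
    Ideal.comap_ne_bot_of_integral_mem hx hxI (Algebra.IsIntegral.isIntegral x)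
  have := finite_quotient_polynomial hne
  exact Module.finite_of_finite (k₀[X] ⧸ I.under k₀[X])

/-- The places of `L` at which `t` is integral are the maximal ideals of a Dedekind subring of `L`
with finite residue fields. -/
def HasAffineChart {L : Type*} [Field L] (t : L) : Prop :=
  ∃ B : Subring L, IsDedekindDomain B ∧ IsFractionRing B L ∧ ¬ IsField B ∧
    (∀ P : HeightOneSpectrum B, Finite (B ⧸ P.asIdeal)) ∧
    ∀ A : ValuationSubring L, t ∈ A → ∀ b : B, (b : L) ∈ A

namespace HasAffineChart

variable {L : Type*} [Field L] {t : L}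

theorem finite_setOf_ord_ne_zero (ht : HasAffineChart t) (f : L) :
    {v : Place L | v.OrdGE t 0 ∧ v.ord f ≠ 0}.Finite := by
  obtain ⟨B, _, _, -, -, hB⟩ := ht
  exact (NonsquareDiophantine.finite_setOf_ord_ne_zero B f).subset
    fun v ⟨hvt, hvf⟩ => ⟨hB v.valuationSubring hvt, hvf⟩

theorem exists_residue_representatives (ht : HasAffineChart t) {v : Place L} (hv : v.OrdGE t 0) :
    ∃ S : Finset L, ∀ x, v.OrdGE x 0 → ∃ s ∈ S, v.OrdGE (x - s) 1 := by
  obtain ⟨B, _, _, -, _, hB⟩ := ht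
  obtain ⟨P, rfl⟩ := exists_ofPrime_eq (B := B) v (hB v.valuationSubring hv)
  exact exists_residue_representatives_ofPrime P

theorem exists_place_le (ht : HasAffineChart t) {A : ValuationSubring L} (hA : A ≠ ⊤)
    (htA : t ∈ A) : ∃ v : Place L, ∀ x, v.OrdGE x 0 → x ∈ A := by
  obtain ⟨B, _, _, -, -, hB⟩ := ht
  obtain ⟨P, hP⟩ := exists_ofPrime_le (B := B) A hA (hB A htA)
  exact ⟨_, hP⟩

theorem nonempty_place (ht : HasAffineChart t) : Nonempty (Place L) := by
  obtain ⟨B, _, _, hB, -, -⟩ := ht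
  obtain ⟨P, hP, hPprime⟩ := Ring.not_isField_iff_exists_prime.mp hB
  exact ⟨Place.ofPrime L ⟨P, hPprime, hP⟩⟩

end HasAffineChart

section RatFunc

variable (k₀ L : Type*) [Field k₀] [Field L] [Algebra (RatFunc k₀) L]
  [FiniteDimensional (RatFunc k₀) L] [Algebra.IsSeparable (RatFunc k₀) L]

theorem hasAffineChart_algebraMap_X [Finite k₀] :
    HasAffineChart (algebraMap (RatFunc k₀) L RatFunc.X) := by
  let : Algebra k₀[X] L :=
    ((algebraMap (RatFunc k₀) L).comp (algebraMap k₀[X] (RatFunc k₀))).toAlgebra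
  have : IsScalarTower k₀[X] (RatFunc k₀) L := IsScalarTower.of_algebraMap_eq fun _ => rfl
  have : IsNoetherian k₀[X] (integralClosure k₀[X] L) :=
    IsIntegralClosure.isNoetherian _ (RatFunc k₀) L _
  refine ⟨(integralClosure k₀[X] L).toSubring,
    IsIntegralClosure.isDedekindDomain k₀[X] (RatFunc k₀) L (integralClosure k₀[X] L),
    integralClosure.isFractionRing_of_finite_extension (RatFunc k₀) L,
    FunctionField.ringOfIntegers.not_isField k₀ L,
    fun P => finite_quotient_of_finite_polynomial (k₀ := k₀) (B := integralClosure k₀[X] L)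
      P.ne_bot,
    fun A hA b => mem_valuationSubring_of_isIntegral
      (algebraMap_polynomial_mem_valuationSubring (k₀ := k₀) ?_) b.2⟩
  rwa [IsScalarTower.algebraMap_apply k₀[X] (RatFunc k₀), RatFunc.algebraMap_X]

theorem exists_ringEquiv_ratFunc_X_eq_inv :
    ∃ e : RatFunc k₀ ≃+* RatFunc k₀, e RatFunc.X = RatFunc.X⁻¹ := by
  have hinj : Function.Injective (Polynomial.aeval (R := k₀) (RatFunc.X⁻¹ : RatFunc k₀)) := by
    rw [← transcendental_iff_injective]
    exact fun h => RatFunc.transcendental_X (inv_inv (RatFunc.X : RatFunc k₀) ▸ h.inv)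
  let g : RatFunc k₀ →ₐ[k₀] RatFunc k₀ := IsFractionRing.liftAlgHom hinj
  have hg : g RatFunc.X = RatFunc.X⁻¹ := by
    rw [← RatFunc.algebraMap_X, IsFractionRing.liftAlgHom_apply, IsFractionRing.lift_algebraMap]
    exact (Polynomial.aeval_X _).trans (by rw [RatFunc.algebraMap_X])
  have hgg : g.comp g = AlgHom.id k₀ _ := by
    refine IsLocalization.algHom_ext (nonZeroDivisors k₀[X]) (Polynomial.algHom_ext ?_)
    change g (g (algebraMap k₀[X] (RatFunc k₀) Polynomial.X)) =
      algebraMap k₀[X] (RatFunc k₀) Polynomial.X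
    rw [RatFunc.algebraMap_X, hg, map_inv₀, hg, inv_inv]
  exact ⟨(AlgEquiv.ofAlgHom g g hgg hgg).toRingEquiv, hg⟩

theorem exists_algebra_ratFunc_algebraMap_X_eq_inv {t : L}
    (ht : algebraMap (RatFunc k₀) L RatFunc.X = t) :
    ∃ _ : Algebra (RatFunc k₀) L, FiniteDimensional (RatFunc k₀) L ∧
      Algebra.IsSeparable (RatFunc k₀) L ∧ algebraMap (RatFunc k₀) L RatFunc.X = t⁻¹ := by
  obtain ⟨e, he⟩ := exists_ringEquiv_ratFunc_X_eq_inv k₀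
  let alg : Algebra (RatFunc k₀) L := inferInstance
  let alg' : Algebra (RatFunc k₀) L := (alg.algebraMap.comp (e : RatFunc k₀ →+* _)).toAlgebra
  have hcomp : alg'.algebraMap.comp (e.symm : RatFunc k₀ →+* RatFunc k₀) =
      (RingEquiv.refl L : L →+* L).comp alg.algebraMap :=
    RingHom.ext fun x => congrArg alg.algebraMap (e.apply_symm_apply x)
  exact ⟨alg', @Module.Finite.of_equiv_equiv _ _ _ _ _ _ _ _ alg alg' e.symm (.refl L) hcomp _,
    @Algebra.IsSeparable.of_equiv_equiv _ _ _ _ _ _ _ _ alg alg' e.symm (.refl L) hcomp _,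
    ht ▸ (congrArg alg.algebraMap he).trans (map_inv₀ alg.algebraMap _)⟩

theorem hasAffineChart_inv_algebraMap_X [Finite k₀] :
    HasAffineChart (algebraMap (RatFunc k₀) L RatFunc.X)⁻¹ := by
  obtain ⟨_, _, _, hX⟩ := exists_algebra_ratFunc_algebraMap_X_eq_inv k₀ L rfl
  exact hX ▸ hasAffineChart_algebraMap_X k₀ L

end RatFunc

section Constants

variable {k₀ L : Type*} [Field k₀] [Finite k₀] [Field L] [Algebra k₀ L]

theorem Place.ord_eq_zero_of_isIntegral (v : Place L) {x : L} (hx : IsIntegral k₀ x) :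
    v.ord x = 0 := by
  obtain rfl | hx₀ := eq_or_ne x 0
  · exact v.ord_zero
  have hpos (y : L) (hy : y ≠ 0) (hintegral : IsIntegral k₀ y) : 0 ≤ v.ord y :=
    (Place.mem_valuationSubring.mp
      (mem_valuationSubring_of_isIntegral_int _ (isIntegral_int_of_finite hintegral))).le hy
  have := hpos x⁻¹ (inv_ne_zero hx₀) hx.inv
  rw [v.ord_inv] at this
  have := hpos x hx₀ hx
  lia

omit [Finite k₀] in
theorem isIntegral_of_forall_ordGE
    (hplace : ∀ A : ValuationSubring L, A ≠ ⊤ → ∃ v : Place L, ∀ x, v.OrdGE x 0 → x ∈ A)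
    {f : L} (hf : ∀ v : Place L, v.OrdGE f 0) : IsIntegral k₀ f := by
  refine isIntegral_trans (A := (⊥ : Subalgebra k₀ L)) f ?_
  suffices f ∈ (integralClosure (Subring.closure
      ((⊥ : Subalgebra k₀ L).toSubring : Set L)) L).toSubring by
    rwa [Subring.closure_eq] at this
  rw [← iInf_valuationSubring_superset, Subring.mem_iInf]
  rintro ⟨A, -⟩
  obtain rfl | hA := eq_or_ne A ⊤
  · exact ValuationSubring.mem_top f
  · obtain ⟨v, hv⟩ := hplace A hA
    exact hv f (hf v)

omit [Finite k₀] [Algebra k₀ L] in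
theorem finite_of_forall_ord_eq_zero {k : Subfield L} {v : Place L}
    (hk : ∀ x ∈ k, v.ord x = 0) {S : Finset L}
    (hS : ∀ x, v.OrdGE x 0 → ∃ s ∈ S, v.OrdGE (x - s) 1) : Finite k := by
  have hge (x : k) : v.OrdGE (x : L) 0 := Or.inr (hk x x.2).ge
  choose s hsS hs using hS
  refine Finite.of_injective (fun x : k => (⟨s x (hge x), hsS x (hge x)⟩ : S)) fun x y hxy => ?_
  have hdiff := (hs x (hge x)).sub (hs y (hge y))
  rw [show s x (hge x) = s y (hge y) from congrArg Subtype.val hxy, sub_sub_sub_cancel_right]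
    at hdiff
  by_contra hne
  have := hdiff.le (sub_ne_zero.mpr (Subtype.coe_injective.ne hne))
  have := hk _ (sub_mem x.2 y.2)
  lia

end Constants

theorem exists_isGlobalFunctionField_of_hasAffineChart (k₀ : Type*) {L : Type*} [Field k₀]
    [Finite k₀] [Field L] [Algebra k₀ L] {t : L} (ht : HasAffineChart t)
    (ht' : HasAffineChart t⁻¹) : ∃ (k : Subfield L) (_ : Finite k), IsGlobalFunctionField k L := by
  have hcover (v : Place L) : v.OrdGE t 0 ∨ v.OrdGE t⁻¹ 0 := v.valuationSubring.mem_or_inv_mem t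
  have hres (v : Place L) : ∃ S : Finset L, ∀ x, v.OrdGE x 0 → ∃ s ∈ S, v.OrdGE (x - s) 1 :=
    (hcover v).elim ht.exists_residue_representatives ht'.exists_residue_representatives
  have hplace (A : ValuationSubring L) (hA : A ≠ ⊤) : ∃ v : Place L, ∀ x, v.OrdGE x 0 → x ∈ A :=
    (A.mem_or_inv_mem t).elim (ht.exists_place_le hA) (ht'.exists_place_le hA)
  have hintegral (x : L) : x ∈ algebraicClosure k₀ L ↔ IsIntegral k₀ x :=
    mem_algebraicClosure_iff.trans isAlgebraic_iff_isIntegral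
  obtain ⟨v⟩ := ht.nonempty_place
  obtain ⟨S, hS⟩ := hres v
  have hfinite : Finite (algebraicClosure k₀ L).toSubfield :=
    finite_of_forall_ord_eq_zero (fun x hx => v.ord_eq_zero_of_isIntegral ((hintegral x).mp hx)) hS
  refine ⟨(algebraicClosure k₀ L).toSubfield, hfinite, fun f _ => ?_, hres, hplace,
    fun f hf => ?_, ⟨v⟩⟩
  · exact ((ht.finite_setOf_ord_ne_zero f).union (ht'.finite_setOf_ord_ne_zero f)).subset
      fun w hw => (hcover w).imp (⟨·, hw⟩) (⟨·, hw⟩)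
  · exact ⟨⟨f, (hintegral f).mpr (isIntegral_of_forall_ordGE hplace hf)⟩, rfl⟩

/-- `L` is a finite separable extension of the field of rational functions over `k₀`, for some
embedding of the latter into `L`. -/
def IsFiniteSeparableOverRatFunc (k₀ L : Type*) [Field k₀] [Field L] : Prop :=
  ∃ _ : Algebra (RatFunc k₀) L,
    FiniteDimensional (RatFunc k₀) L ∧ Algebra.IsSeparable (RatFunc k₀) L

theorem IsFiniteSeparableOverRatFunc.exists_isGlobalFunctionField {k₀ L : Type*} [Field k₀]
    [Finite k₀] [Field L] (h : IsFiniteSeparableOverRatFunc k₀ L) :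
    ∃ (k : Subfield L) (_ : Finite k), IsGlobalFunctionField k L := by
  obtain ⟨_, _, _⟩ := h
  let : Algebra k₀ L := ((algebraMap (RatFunc k₀) L).comp RatFunc.C).toAlgebra
  exact exists_isGlobalFunctionField_of_hasAffineChart k₀ (hasAffineChart_algebraMap_X k₀ L)
    (hasAffineChart_inv_algebraMap_X k₀ L)

/-! ### Quadratic extensions -/

theorem nonempty_sqrtExt_quadraticAlgebra {M : Type*} [Field M] {a : M} (h2 : (2 : M) ≠ 0)
    (ha : ¬ IsSquare a) [Fact (∀ r : M, r ^ 2 ≠ a + 0 * r)] :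
    Nonempty (SqrtExt M (QuadraticAlgebra M a 0) a) := by
  refine ⟨{
    root := ⟨0, 1⟩
    root_mul_self := ?_
    exists_eq_add_mul_root := fun z => ⟨z.re, z.im, ?_⟩
    not_isSquare := ha
    two_ne_zero := h2
    σ := starRingEnd _
    σ_algebraMap := fun x => ?_
    σ_root := ?_ }⟩
  · ext <;> simp
  · ext <;> simp
  · change star (algebraMap M (QuadraticAlgebra M a 0) x) = _
    ext <;> simp
  · change star (⟨0, 1⟩ : QuadraticAlgebra M a 0) = _
    ext <;> simp

theorem exists_sqrtExt {M : Type u} [Field M] {a : M} (h2 : (2 : M) ≠ 0) (ha : ¬ IsSquare a) :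
    ∃ (N : Type u) (_ : Field N) (_ : Algebra M N), Nonempty (SqrtExt M N a) := by
  have : Fact (∀ r : M, r ^ 2 ≠ a + 0 * r) :=
    ⟨fun r hr => ha ⟨r, by rw [← pow_two, hr, zero_mul, add_zero]⟩⟩
  exact ⟨_, _, _, nonempty_sqrtExt_quadraticAlgebra h2 ha⟩

namespace SqrtExt

variable {M N : Type*} [Field M] [Field N] [Algebra M N] {a : M} (Q : SqrtExt M N a)
include Q

theorem moduleFinite : Module.Finite M N := by
  classical
  refine ⟨⟨{1, Q.root}, eq_top_iff.mpr fun z _ => ?_⟩⟩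
  obtain ⟨x, y, rfl⟩ := Q.exists_eq_add_mul_root z
  rw [Finset.coe_insert, Finset.coe_singleton, Submodule.mem_span_pair]
  exact ⟨x, y, by simp only [Algebra.smul_def, mul_one]⟩

theorem algebraIsSeparable : Algebra.IsSeparable M N := by
  have ha : a ≠ 0 := by
    rintro rfl
    exact Q.not_isSquare IsSquare.zero
  have hroot : Q.root ∈ separableClosure M N := by
    have hsep : (Polynomial.X ^ 2 - Polynomial.C a).Separable :=
      Polynomial.separable_X_pow_sub_C _ (mod_cast Q.two_ne_zero) ha
    refine mem_separableClosure_iff.mpr (hsep.of_dvd (minpoly.dvd _ _ ?_))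
    simp [pow_two, Q.root_mul_self]
  refine ⟨fun z => mem_separableClosure_iff.mp ?_⟩
  obtain ⟨x, y, rfl⟩ := Q.exists_eq_add_mul_root z
  exact add_mem (IntermediateField.algebraMap_mem _ _)
    (mul_mem (IntermediateField.algebraMap_mem _ _) hroot)

theorem isFiniteSeparableOverRatFunc {k₀ : Type*} [Field k₀]
    (h : IsFiniteSeparableOverRatFunc k₀ M) : IsFiniteSeparableOverRatFunc k₀ N := by
  obtain ⟨_, _, _⟩ := h
  have := Q.moduleFinite
  have := Q.algebraIsSeparable
  let : Algebra (RatFunc k₀) N := ((algebraMap M N).comp (algebraMap (RatFunc k₀) M)).toAlgebra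
  have : IsScalarTower (RatFunc k₀) M N := IsScalarTower.of_algebraMap_eq fun _ => rfl
  exact ⟨inferInstance, Module.Finite.trans M N, Algebra.IsSeparable.trans (RatFunc k₀) M N⟩

end SqrtExt

/-! ### Norm forms over global function fields -/

section Place

variable {L : Type*} [Field L] {v : Place L} {b : L}

theorem Place.IsNonresidue.ne_zero (hb : v.IsNonresidue b) : b ≠ 0 := by
  rintro rfl
  exact hb 0 (Or.inl (by simp))

theorem Place.IsNonresidue.even_ord_mul_self_sub (hb : v.IsNonresidue b) (hb₀ : v.ord b = 0)
    (t : L) : Even (v.ord (t * t - b)) := by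
  obtain ⟨hne, hlt⟩ := Place.not_ordGE_iff.mp (hb t)
  by_cases ht : v.OrdGE t 0
  · have hge : v.OrdGE (t * t - b) 0 := by simpa using (ht.mul ht).sub (Or.inr hb₀.ge)
    have := hge.le hne
    exact ⟨0, by lia⟩
  · obtain ⟨ht₀, htneg⟩ := Place.not_ordGE_iff.mp ht
    have hord := (Place.ord_add_eq_of_lt (v := v) (mul_ne_zero ht₀ ht₀)
      (y := -b) (by rw [v.ord_mul _ _ ht₀ ht₀, v.ord_neg]; lia)).2
    rw [sub_eq_add_neg, hord, v.ord_mul _ _ ht₀ ht₀]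
    exact Even.add_self _

theorem Place.IsNonresidue.even_ord_sq_sub_mul_sq (hb : v.IsNonresidue b) (hb₀ : v.ord b = 0)
    (y z : L) : Even (v.ord (y ^ 2 - b * z ^ 2)) := by
  obtain rfl | hz := eq_or_ne z 0
  · rw [zero_pow two_ne_zero, mul_zero, sub_zero, v.ord_pow]
    exact even_two_mul _
  have hfactor : y ^ 2 - b * z ^ 2 = z ^ 2 * (y / z * (y / z) - b) := by field_simp
  rw [hfactor, v.ord_mul _ _ (pow_ne_zero _ hz) (Place.not_ordGE_iff.mp (hb _)).1, v.ord_pow]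
  exact (even_two_mul _).add (hb.even_ord_mul_self_sub hb₀ _)

theorem Place.IsNonresidue.even_ord_of_mul_eq (hb : v.IsNonresidue b) (hb₀ : v.ord b = 0)
    {g T y z : L} (hT : T ≠ 0) (hTeven : Even (v.ord T)) (h : g * T = y ^ 2 - b * z ^ 2) :
    Even (v.ord g) := by
  obtain rfl | hg := eq_or_ne g 0
  · exact v.ord_zero ▸ Even.zero
  have heven := hb.even_ord_sq_sub_mul_sq hb₀ y z
  rw [← h, v.ord_mul _ _ hg hT, Int.even_add] at heven
  exact heven.mpr hTeven

theorem isSquare_mul_of_not_isSquare {F : Type*} [Field F] [Finite F] {x y : F}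
    (hx : ¬ IsSquare x) (hy : ¬ IsSquare y) : IsSquare (x * y) := by
  have := Fintype.ofFinite F
  have hchar : ringChar F ≠ 2 := fun h => hx (FiniteField.isSquare_of_char_two h x)
  have hpow {u : F} (hu : ¬ IsSquare u) : u ≠ 0 ∧ u ^ (Fintype.card F / 2) = -1 := by
    have hu₀ : u ≠ 0 := fun h => hu (h ▸ IsSquare.zero)
    exact ⟨hu₀, (FiniteField.pow_dichotomy hchar hu₀).resolve_left
      (mt (FiniteField.isSquare_iff hchar hu₀).mpr hu)⟩
  obtain ⟨hx₀, hx⟩ := hpow hx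
  obtain ⟨hy₀, hy⟩ := hpow hy
  rw [FiniteField.isSquare_iff hchar (mul_ne_zero hx₀ hy₀), mul_pow, hx, hy, neg_one_mul, neg_neg]

theorem Place.not_isNonresidue_mul (k : Type*) [Field k] [Algebra k L] [Finite k]
    [Finite (v.ResidueField k)] {a : L} (ha₀ : v.OrdGE a 0) (hb₀ : v.OrdGE b 0)
    (ha : v.IsNonresidue a) (hb : v.IsNonresidue b) : ¬ v.IsNonresidue (a * b) := by
  have hab₀ : v.OrdGE (a * b) 0 := by simpa using ha₀.mul hb₀
  rw [v.isNonresidue_iff_not_isSquare (k := k) ha₀] at ha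
  rw [v.isNonresidue_iff_not_isSquare (k := k) hb₀] at hb
  rw [v.isNonresidue_iff_not_isSquare (k := k) hab₀, not_not]
  exact isSquare_mul_of_not_isSquare ha hb

end Place

/-- `ε` is a constant of the function field `L`, that is, integral at all places. -/
def IsConstant {L : Type*} [Field L] (ε : L) : Prop := ∀ v : Place L, v.OrdGE ε 0

theorem IsConstant.ord_eq_zero {k L : Type*} [Field k] [Finite k] [Field L] [Algebra k L]
    (hF : IsGlobalFunctionField k L) {ε : L} (hε : IsConstant ε) (v : Place L) : v.ord ε = 0 := by
  obtain ⟨c, rfl⟩ := hF.exists_algebraMap_eq ε hε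
  exact v.ord_algebraMap k c

theorem SqrtExt.isConstant_algebraMap {M N : Type*} [Field M] [Field N] [Algebra M N] {a : M}
    (Q : SqrtExt M N a) {ε : M} (hε : IsConstant ε) : IsConstant (algebraMap M N ε) :=
  fun w => (Q.ordGE_algebraMap_zero w ε).mpr (hε _)

section NormForm

variable {k₀ L : Type*} [Field k₀] [Finite k₀] [Field L] {ε : L}

theorem exists_eq_sq_sub_mul_sq_of_isSquare (h2 : (2 : L) ≠ 0) (hε₀ : ε ≠ 0) (hε : IsSquare ε)
    (f : L) : ∃ y z : L, f = y ^ 2 - ε * z ^ 2 := by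
  obtain ⟨s, rfl⟩ := hε
  have hs : s ≠ 0 := left_ne_zero_of_mul hε₀
  refine ⟨(f + 1) / 2, (f - 1) / (2 * s), ?_⟩
  field_simp
  ring

theorem IsFiniteSeparableOverRatFunc.exists_eq_sq_sub_mul_sq
    (hL : IsFiniteSeparableOverRatFunc k₀ L) (h2 : (2 : L) ≠ 0) (hε₀ : ε ≠ 0) (hε : IsConstant ε)
    {f : L} (hf : f ≠ 0) (heven : ∀ v : Place L, v.IsNonresidue ε → Even (v.ord f)) :
    ∃ y z : L, f = y ^ 2 - ε * z ^ 2 := by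
  by_cases hsq : IsSquare ε
  · exact exists_eq_sq_sub_mul_sq_of_isSquare h2 hε₀ hsq f
  obtain ⟨N, _, _, ⟨Q⟩⟩ := exists_sqrtExt h2 hsq
  obtain ⟨k, _, hF⟩ := hL.exists_isGlobalFunctionField
  obtain ⟨k', _, hN⟩ := (Q.isFiniteSeparableOverRatFunc hL).exists_isGlobalFunctionField
  obtain ⟨ε', rfl⟩ := hF.exists_algebraMap_eq ε hε
  refine Q.exists_eq_sq_sub_mul_sq_of_evenAtOddDegree hF hN hf fun v hv => heven v ?_
  have := hF.finite_residueField v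
  exact (v.isNonresidue_algebraMap_iff Q.constants_two_ne_zero Q.constants_not_isSquare).mpr hv

theorem exists_mul_sub_mul_sq_eq_of_eq (h2 : (2 : L) ≠ 0) (hε₀ : ε ≠ 0) (a : L) {g y z : L}
    (h : g = y ^ 2 - ε * z ^ 2) : ∃ A y z : L, g * (a - ε * A ^ 2) = y ^ 2 - ε * z ^ 2 := by
  refine ⟨(a / ε + 1) / 2, ε * z * ((a / ε - 1) / 2), y * ((a / ε - 1) / 2), ?_⟩
  rw [h]
  field_simp
  ring

theorem SqrtExt.eq_and_mul_eq_of_algebraMap_eq {M : Type*} [Field M] [Algebra L M] {a : L}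
    (Q : SqrtExt L M a) {g y₀ y₁ z₀ z₁ : L}
    (h : algebraMap L M g = (algebraMap L M y₀ + algebraMap L M y₁ * Q.root) ^ 2 -
      algebraMap L M ε * (algebraMap L M z₀ + algebraMap L M z₁ * Q.root) ^ 2) :
    g = y₀ ^ 2 + y₁ ^ 2 * a - ε * (z₀ ^ 2 + z₁ ^ 2 * a) ∧ y₀ * y₁ = ε * (z₀ * z₁) := by
  have hcoord : algebraMap L M g + algebraMap L M 0 * Q.root =
      algebraMap L M (y₀ ^ 2 + y₁ ^ 2 * a - ε * (z₀ ^ 2 + z₁ ^ 2 * a)) +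
        algebraMap L M (2 * (y₀ * y₁ - ε * (z₀ * z₁))) * Q.root := by
    rw [map_zero, zero_mul, add_zero, h]
    simp only [map_add, map_sub, map_mul, map_pow, map_ofNat, ← Q.root_mul_self]
    ring
  obtain ⟨hg, hcross⟩ := Q.coord_unique hcoord
  exact ⟨hg, sub_eq_zero.mp ((mul_eq_zero.mp hcross.symm).resolve_left Q.two_ne_zero)⟩

theorem SqrtExt.exists_mul_sub_mul_sq_eq {M : Type*} [Field M] [Algebra L M] {a : L}
    (Q : SqrtExt L M a) (hε₀ : ε ≠ 0) {g : L} {y z : M}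
    (h : algebraMap L M g = y ^ 2 - algebraMap L M ε * z ^ 2) :
    ∃ A y z : L, g * (a - ε * A ^ 2) = y ^ 2 - ε * z ^ 2 := by
  obtain ⟨y₀, y₁, rfl⟩ := Q.exists_eq_add_mul_root y
  obtain ⟨z₀, z₁, rfl⟩ := Q.exists_eq_add_mul_root z
  obtain ⟨rfl, hcross⟩ := Q.eq_and_mul_eq_of_algebraMap_eq h
  by_cases hy₁ : y₁ = 0
  · subst hy₁
    by_cases hz₁ : z₁ = 0
    · subst hz₁
      exact exists_mul_sub_mul_sq_eq_of_eq Q.two_ne_zero hε₀ a (y := y₀) (z := z₀) (by ring)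
    · obtain rfl : z₀ = 0 := by simpa [hε₀, hz₁] using hcross
      refine ⟨y₀ / (ε * z₁), 0, z₁ * (a - ε * (y₀ / (ε * z₁)) ^ 2), ?_⟩
      field_simp
      ring
  · refine ⟨z₀ / y₁, y₁ * (a - ε * (z₀ / y₁) ^ 2), z₁ * (a - ε * (z₀ / y₁) ^ 2), ?_⟩
    obtain rfl : y₀ = ε * (z₀ * z₁) / y₁ := eq_div_of_mul_eq hy₁ hcross
    field_simp
    ring

theorem SqrtExt.even_ramificationIdx_mul_ord {M : Type*} [Field M] [Algebra L M] {a : L}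
    (Q : SqrtExt L M a) (w : Place M) : Even (Q.ramificationIdx w * (Q.restrict w).ord a) := by
  rw [← Q.ord_algebraMap, ← Q.root_mul_self, w.ord_mul _ _ Q.root_ne_zero Q.root_ne_zero]
  exact Even.add_self _

theorem SqrtExt.even_ord_algebraMap_of_odd_imp {M : Type*} [Field M] [Algebra L M] {a g : L}
    (Q : SqrtExt L M a) {w : Place M}
    (h : Odd ((Q.restrict w).ord g) → Odd ((Q.restrict w).ord a)) :
    Even (w.ord (algebraMap L M g)) := by
  have hroot := Q.even_ramificationIdx_mul_ord w
  rw [Q.ord_algebraMap, Int.even_mul]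
  rw [Int.even_mul] at hroot
  simp only [← Int.not_even_iff_odd] at h
  tauto

/- If `g` becomes a norm from `L(√a, √ε)` to `L(√a)`, then `g` times a norm from `L(√(ε * a))`
to `L` is a norm from `L(√ε)`. Over `L(√a)` the local conditions for `g` to be a norm hold. -/
theorem IsFiniteSeparableOverRatFunc.exists_mul_sub_mul_sq_eq
    (hL : IsFiniteSeparableOverRatFunc k₀ L) (h2 : (2 : L) ≠ 0) (hε₀ : ε ≠ 0) (hε : IsConstant ε)
    {a g : L} (ha : a ≠ 0) (hg : g ≠ 0)
    (hodd : ∀ v : Place L, v.IsNonresidue ε → Odd (v.ord g) → Odd (v.ord a)) :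
    ∃ A y z : L, g * (a - ε * A ^ 2) = y ^ 2 - ε * z ^ 2 := by
  by_cases hsq : IsSquare a
  · obtain ⟨s, rfl⟩ := hsq
    have hs : s ≠ 0 := left_ne_zero_of_mul ha
    obtain ⟨y, z, hyz⟩ := hL.exists_eq_sq_sub_mul_sq h2 hε₀ hε hg fun v hv => by
      by_contra hgodd
      have := hodd v hv (Int.not_even_iff_odd.mp hgodd)
      rw [v.ord_mul _ _ hs hs] at this
      exact Int.not_even_iff_odd.mpr this (Even.add_self _)
    exact exists_mul_sub_mul_sq_eq_of_eq h2 hε₀ _ hyz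
  · obtain ⟨M, _, _, ⟨Q⟩⟩ := exists_sqrtExt h2 hsq
    obtain ⟨y, z, hyz⟩ := (Q.isFiniteSeparableOverRatFunc hL).exists_eq_sq_sub_mul_sq
      Q.ext_two_ne_zero ((map_ne_zero _).mpr hε₀) (Q.isConstant_algebraMap hε)
      ((map_ne_zero (algebraMap L M)).mpr hg)
      fun w hw => Q.even_ord_algebraMap_of_odd_imp (hodd _ (Q.isNonresidue_restrict hw))
    exact Q.exists_mul_sub_mul_sq_eq hε₀ hyz

end NormForm

/-! ### The local conditions at an odd set of places -/

theorem IsGlobalFunctionField.isNonresidue_iff_odd_deg {k L : Type*} [Field k] [Finite k] [Field L]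
    [Algebra k L] (hF : IsGlobalFunctionField k L) (h2 : (2 : L) ≠ 0) {ε : L} (hε : IsConstant ε)
    (hsq : ¬ IsSquare ε) (v : Place L) : v.IsNonresidue ε ↔ Odd (v.deg k) := by
  have := hF.finite_residueField v
  obtain ⟨ε, rfl⟩ := hF.exists_algebraMap_eq ε hε
  refine v.isNonresidue_algebraMap_iff (fun h => h2 ?_) fun h => hsq (h.map _)
  rw [← map_ofNat (algebraMap k L), h, map_zero]

theorem Place.IsNonresidue.not_isSquare {L : Type*} [Field L] {v : Place L} {ε : L}
    (h : v.IsNonresidue ε) : ¬ IsSquare ε := by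
  rintro ⟨s, rfl⟩
  exact h s (Or.inl (sub_self _))

section Quadratic

variable {k K L : Type*} [Field k] [Finite k] [Field K] [Algebra k K] [Field L] [Algebra K L]
  {x ε : K}

/-- The extension `K(√x)` presented with the square root `√x / π` of `x / π ^ 2`. -/
def SqrtExt.rescale (Q : SqrtExt K L x) {π : K} (hπ : π ≠ 0) : SqrtExt K L (x / (π * π)) where
  root := Q.root / algebraMap K L π
  root_mul_self := by rw [div_mul_div_comm, Q.root_mul_self, map_div₀, map_mul]
  exists_eq_add_mul_root z := by
    obtain ⟨u, w, rfl⟩ := Q.exists_eq_add_mul_root z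
    have := (map_ne_zero (algebraMap K L)).mpr hπ
    refine ⟨u, w * π, ?_⟩
    rw [map_mul]
    field_simp
  not_isSquare := by
    rintro ⟨s, hs⟩
    refine Q.not_isSquare ⟨s * π, ?_⟩
    rw [div_eq_iff (mul_ne_zero hπ hπ)] at hs
    rw [hs, mul_mul_mul_comm]
  two_ne_zero := Q.two_ne_zero
  σ := Q.σ
  σ_algebraMap := Q.σ_algebraMap
  σ_root := by rw [map_div₀, Q.σ_root, Q.σ_algebraMap, neg_div]

theorem SqrtExt.restrict_rescale (Q : SqrtExt K L x) {π : K} (hπ : π ≠ 0) (w : Place L) :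
    (Q.rescale hπ).restrict w = Q.restrict w :=
  (Q.rescale hπ).restrict_eq fun _ => (Q.ordGE_algebraMap_zero w _).mp

/- If `√x` is a unit at a place fixed by `σ`, then `x` is a nonresidue below it. Hence `x * ε` is a
residue there, and so is `ε = (x * ε) / (√x) ^ 2` above it. -/
theorem SqrtExt.not_isNonresidue_of_conjPlace_eq (hF : IsGlobalFunctionField k K)
    (Q : SqrtExt K L x) (hε : IsConstant ε) {w : Place L} (h2 : w.ord 2 = 0)
    (hx : (Q.restrict w).ord x = 0) (hw : Q.conjPlace w = w) :
    ¬ w.IsNonresidue (algebraMap K L ε) := by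
  intro hnon
  have := hF.finite_residueField (Q.restrict w)
  have hxw : w.ord (algebraMap K L x) = 0 := by rw [Q.ord_algebraMap, hx, mul_zero]
  have hmul := Place.not_isNonresidue_mul k (Or.inr hx.ge) (hε _)
    (Q.isNonresidue_restrict_of_conjPlace_eq h2 hxw hw) (Q.isNonresidue_restrict hnon)
  obtain ⟨y, hy⟩ : ∃ y, (Q.restrict w).OrdGE (y * y - x * ε) 1 := by
    simpa only [Place.IsNonresidue, not_forall, not_not] using hmul
  rw [← Q.ordGE_algebraMap_one] at hy
  have hroot := Q.root_ne_zero
  have hunit : w.OrdGE (algebraMap K L x)⁻¹ 0 := Or.inr (by rw [w.ord_inv, hxw, neg_zero])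
  have hquot : algebraMap K L y / Q.root * (algebraMap K L y / Q.root) - algebraMap K L ε =
      algebraMap K L (y * y - x * ε) * (algebraMap K L x)⁻¹ := by
    rw [map_sub, map_mul, map_mul, ← Q.root_mul_self]
    field_simp
  refine hnon (algebraMap K L y / Q.root) ?_
  rw [hquot]
  simpa only [add_zero] using hy.mul hunit

theorem SqrtExt.conjPlace_ne_of_isNonresidue (hF : IsGlobalFunctionField k K) (Q : SqrtExt K L x)
    (hε : IsConstant ε) {w : Place L} (h2 : w.ord 2 = 0) (hw : w.IsNonresidue (algebraMap K L ε))
    (hram : Odd (Q.ramificationIdx w)) : Q.conjPlace w ≠ w := by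
  intro hconj
  have hx : x ≠ 0 := fun h => Q.not_isSquare (h ▸ IsSquare.zero)
  obtain ⟨m, hm⟩ := (Int.even_mul.mp (Q.even_ramificationIdx_mul_ord w)).resolve_left
    (Int.not_even_iff_odd.mpr hram)
  obtain ⟨π, hπ, hordπ⟩ := (Q.restrict w).exists_ord_eq m
  refine (Q.rescale hπ).not_isNonresidue_of_conjPlace_eq hF hε h2 ?_ hconj hw
  rw [Q.restrict_rescale, Place.ord_div _ hx (mul_ne_zero hπ hπ), Place.ord_mul _ _ _ hπ hπ,
    hordπ, hm, sub_self]

theorem SqrtExt.exists_forall_odd_ord_iff {k₀ : Type*} [Field k₀] [Finite k₀]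
    (hK : IsFiniteSeparableOverRatFunc k₀ K) (Q : SqrtExt K L x) (hε : IsConstant ε)
    (v₀ : Place K) : ∃ f : L, f ≠ 0 ∧ ∀ w : Place L, w.IsNonresidue (algebraMap K L ε) →
      (Odd (w.ord f) ↔ Q.restrict w = v₀ ∧ Odd (Q.ramificationIdx w)) := by
  obtain ⟨k, _, hF⟩ := hK.exists_isGlobalFunctionField
  obtain ⟨k', _, hN⟩ := (Q.isFiniteSeparableOverRatFunc hK).exists_isGlobalFunctionField
  by_cases hex : ∃ w : Place L,
      w.IsNonresidue (algebraMap K L ε) ∧ Q.restrict w = v₀ ∧ Odd (Q.ramificationIdx w)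
  · obtain ⟨w, hw, hwv, hram⟩ := hex
    have h2 : w.ord 2 = 0 := by
      rw [← map_ofNat (algebraMap k' L)]
      exact w.ord_algebraMap k' 2
    obtain ⟨g, hg, hodd⟩ := hN.exists_forall_odd_ord_iff
      (Q.conjPlace_ne_of_isNonresidue hF hε h2 hw hram).symm (Q.deg_conjPlace hN w).symm
    refine ⟨g, hg, fun w' hw' => ?_⟩
    rw [hodd w' ((hN.isNonresidue_iff_odd_deg Q.ext_two_ne_zero (Q.isConstant_algebraMap hε)
      hw'.not_isSquare w').mp hw')]
    constructor
    · rintro (rfl | rfl)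
      · exact ⟨hwv, hram⟩
      · rw [Q.restrict_conjPlace, Q.ramificationIdx_conjPlace]
        exact ⟨hwv, hram⟩
    · rintro ⟨hw'v, -⟩
      exact Q.eq_or_eq_conjPlace (hwv.trans hw'v.symm)
  · push Not at hex
    refine ⟨1, one_ne_zero, fun w hw => iff_of_false (by simp [w.ord_one]) ?_⟩
    rintro ⟨hwv, hram⟩
    exact Int.not_odd_iff_even.mpr (by simpa using hex w hw hwv) hram

end Quadratic

/-! ### The diophantine system -/

/-- The system of equations that detects nonsquares: for parameters as in `SystemParams` it is
solvable in every quadratic extension of `K`, but not in `K`. -/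
def NonsquareSystem {R : Type*} [CommRing R] (ε δ c e : R) : Prop :=
  ∃ f f' A₁ y₁ z₁ A₂ y₂ z₂ A₃ y₃ z₃ : R, f * f' = 1 ∧
    f * (δ - ε * A₁ ^ 2) = y₁ ^ 2 - ε * z₁ ^ 2 ∧
    f * (ε * δ - ε * A₂ ^ 2) = y₂ ^ 2 - ε * z₂ ^ 2 ∧
    c * f * (e - ε * A₃ ^ 2) = y₃ ^ 2 - ε * z₃ ^ 2

theorem NonsquareSystem.map {R S : Type*} [CommRing R] [CommRing S] (g : R →+* S) {ε δ c e : R}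
    (h : NonsquareSystem ε δ c e) : NonsquareSystem (g ε) (g δ) (g c) (g e) := by
  obtain ⟨f, f', A₁, y₁, z₁, A₂, y₂, z₂, A₃, y₃, z₃, hf, h₁, h₂, h₃⟩ := h
  refine ⟨g f, g f', g A₁, g y₁, g z₁, g A₂, g y₂, g z₂, g A₃, g y₃, g z₃, ?_, ?_, ?_, ?_⟩
  · rw [← map_mul, hf, map_one]
  · simpa using congrArg g h₁
  · simpa using congrArg g h₂
  · simpa using congrArg g h₃

/-- Parameters for `NonsquareSystem`: `ε` is a nonsquare constant, and among the places at which
`ε` is a nonresidue, `δ`, `c` and `e` single out `v₀` by parity conditions. -/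
structure SystemParams {K : Type*} [Field K] (ε δ c e : K) (v₀ : Place K) : Prop where
  isConstant : IsConstant ε
  isNonresidue : v₀.IsNonresidue ε
  δ_ne_zero : δ ≠ 0
  c_ne_zero : c ≠ 0
  e_ne_zero : e ≠ 0
  odd_ord_δ : Odd (v₀.ord δ)
  odd_ord_c : Odd (v₀.ord c)
  odd_ord_e : ∀ v : Place K, v ≠ v₀ → Odd (v.ord c) → Odd (v.ord e)
  ordGE_e_sub_one : ∀ v : Place K, Odd (v.ord δ) → v.OrdGE (e - 1) 1
  even_ord_c : ∀ v : Place K, v ≠ v₀ → Odd (v.ord δ) → Even (v.ord c)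

section Place

variable {L : Type*} [Field L] {v : Place L} {ε : L}

theorem Place.IsNonresidue.div (hε : v.IsNonresidue ε) (hε₀ : v.ord ε = 0) {u c : L} (hu : u ≠ 0)
    (hu₀ : v.ord u = 0) (hc : v.OrdGE (c * c - u) 1) : v.IsNonresidue (u / ε) := by
  intro d hd
  have hquot : v.ord (u / ε) = 0 := by rw [v.ord_div hu hε.ne_zero, hu₀, hε₀, sub_zero]
  obtain ⟨hdd, hord⟩ := Place.ord_eq_of_ordGE_sub (v := v) (y := d * d)
    (div_ne_zero hu hε.ne_zero) (by rw [hquot, zero_add, ← neg_sub]; exact hd.neg)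
  have hd₀ : d ≠ 0 := left_ne_zero_of_mul hdd
  have hinv : v.OrdGE (d * d)⁻¹ 0 := Or.inr (by rw [v.ord_inv, hord, hquot, neg_zero])
  have hε' : v.OrdGE ε 0 := Or.inr hε₀.ge
  have hfactor : c / d * (c / d) - ε = (c * c - u - ε * (d * d - u / ε)) * (d * d)⁻¹ := by
    have := hε.ne_zero
    field_simp
    ring
  refine hε (c / d) ?_
  rw [hfactor]
  simpa using (hc.sub (by simpa using hε'.mul hd)).mul hinv

theorem Place.IsNonresidue.even_ord_sub_mul_sq {b π a : L} (hb : v.IsNonresidue b)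
    (hb₀ : v.ord b = 0) (hε : ε ≠ 0) (hε₀ : v.ord ε = 0) (hπ : π ≠ 0) (ha : a = ε * b * (π * π))
    (A : L) : a - ε * A ^ 2 ≠ 0 ∧ Even (v.ord (a - ε * A ^ 2)) := by
  have hfactor : a - ε * A ^ 2 = -ε * (π * π) * (A / π * (A / π) - b) := by
    rw [ha]
    field_simp
    ring
  have hne : A / π * (A / π) - b ≠ 0 := (Place.not_ordGE_iff.mp (hb _)).1
  have hε' : -ε * (π * π) ≠ 0 := mul_ne_zero (neg_ne_zero.mpr hε) (mul_ne_zero hπ hπ)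
  rw [hfactor, v.ord_mul _ _ hε' hne, v.ord_mul _ _ (neg_ne_zero.mpr hε) (mul_ne_zero hπ hπ),
    v.ord_mul _ _ hπ hπ, v.ord_neg, hε₀, zero_add]
  exact ⟨mul_ne_zero hε' hne, (Even.add_self _).add (hb.even_ord_mul_self_sub hb₀ _)⟩

theorem Place.IsNonresidue.even_ord_of_mul_sub_eq (hε : v.IsNonresidue ε) (hε₀ : v.ord ε = 0)
    {δ f A₁ y₁ z₁ A₂ y₂ z₂ : L} (hδ : δ ≠ 0) (heven : Even (v.ord δ))
    (h₁ : f * (δ - ε * A₁ ^ 2) = y₁ ^ 2 - ε * z₁ ^ 2)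
    (h₂ : f * (ε * δ - ε * A₂ ^ 2) = y₂ ^ 2 - ε * z₂ ^ 2) : Even (v.ord f) := by
  have hεne := hε.ne_zero
  obtain ⟨m, hm⟩ := heven
  obtain ⟨π, hπ, hordπ⟩ := v.exists_ord_eq m
  have hππ := mul_ne_zero hπ hπ
  have hu : δ / (π * π) ≠ 0 := div_ne_zero hδ hππ
  have hu₀ : v.ord (δ / (π * π)) = 0 := by
    rw [v.ord_div hδ hππ, v.ord_mul _ _ hπ hπ, hordπ, hm, sub_self]
  by_cases hnon : v.IsNonresidue (δ / (π * π))
  · obtain ⟨hT, hTeven⟩ := hnon.even_ord_sub_mul_sq (a := ε * δ) hu₀ hεne hε₀ hπ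
      (by field_simp) A₂
    exact hε.even_ord_of_mul_eq hε₀ hT hTeven h₂
  · obtain ⟨s, hs⟩ : ∃ s, v.OrdGE (s * s - δ / (π * π)) 1 := by
      simpa only [Place.IsNonresidue, not_forall, not_not] using hnon
    obtain ⟨hT, hTeven⟩ := (hε.div hε₀ hu hu₀ hs).even_ord_sub_mul_sq (a := δ)
      (by rw [v.ord_div hu hεne, hu₀, hε₀, sub_zero]) hεne hε₀ hπ (by field_simp) A₁
    exact hε.even_ord_of_mul_eq hε₀ hT hTeven h₁

theorem Place.IsNonresidue.even_ord_of_mul_sub_eq_of_ordGE (hε : v.IsNonresidue ε)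
    (hε₀ : v.ord ε = 0) {g e A y z : L} (he : v.OrdGE (e - 1) 1)
    (h : g * (e - ε * A ^ 2) = y ^ 2 - ε * z ^ 2) : Even (v.ord g) := by
  have hεne := hε.ne_zero
  have he' : v.OrdGE (1 - e) 1 := by simpa using he.neg
  obtain ⟨hene, hord⟩ := Place.ord_eq_of_ordGE_sub (v := v) (x := 1) (y := e) one_ne_zero
    (by rwa [v.ord_one, zero_add])
  rw [v.ord_one] at hord
  obtain ⟨hT, hTeven⟩ := (hε.div (c := 1) hε₀ hene hord (by rwa [mul_one])).even_ord_sub_mul_sq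
    (a := e) (by rw [v.ord_div hene hεne, hord, hε₀, sub_zero]) hεne hε₀ one_ne_zero
    (by field_simp) A
  exact hε.even_ord_of_mul_eq hε₀ hT hTeven h

end Place

theorem IsGlobalFunctionField.not_forall_odd_ord_iff_eq {k L : Type*} [Field k] [Finite k]
    [Field L] [Algebra k L] (hF : IsGlobalFunctionField k L) {f : L} {v₀ : Place L}
    (hv₀ : Odd (v₀.deg k)) : ¬ ∀ v : Place L, Odd (v.deg k) → (Odd (v.ord f) ↔ v = v₀) := by
  classical
  intro h
  have hdeg := hF.degree_divisor f
  have hodd : Odd (v₀.ord f) := (h v₀ hv₀).mpr rfl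
  have hmem : v₀ ∈ (hF.divisor f).support := by
    rw [Finsupp.mem_support_iff, hF.divisor_apply]
    exact fun h0 => Int.not_odd_zero (h0 ▸ hodd)
  rw [degree, Finsupp.linearCombination_apply, Finsupp.sum,
    ← Finset.add_sum_erase _ _ hmem] at hdeg
  have heven : Even (∑ v ∈ (hF.divisor f).support.erase v₀,
      hF.divisor f v • (v.deg k : ℤ)) := by
    refine Finset.even_sum _ fun v hv => ?_
    rw [hF.divisor_apply, smul_eq_mul, Int.even_mul]
    by_cases hvdeg : Odd (v.deg k)
    · exact Or.inl (Int.not_odd_iff_even.mp ((h v hvdeg).not.mpr (Finset.ne_of_mem_erase hv)))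
    · exact Or.inr ((Int.even_coe_nat _).mpr (Nat.not_odd_iff_even.mp hvdeg))
  have hterm : Odd (hF.divisor f v₀ • (v₀.deg k : ℤ)) := by
    rw [hF.divisor_apply, smul_eq_mul]
    exact hodd.mul (mod_cast hv₀)
  exact Int.not_odd_zero (hdeg ▸ hterm.add_even heven)

namespace SystemParams

variable {k₀ K : Type*} [Field k₀] [Finite k₀] [Field K] {ε δ c e : K} {v₀ : Place K}

/- Take `f` of odd order exactly at the places over `v₀` where `ε` is a nonresidue and the
ramification is odd. -/
theorem nonsquareSystem_algebraMap (h : SystemParams ε δ c e v₀) {L : Type*} [Field L]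
    [Algebra K L] {x : K} (hK : IsFiniteSeparableOverRatFunc k₀ K) (Q : SqrtExt K L x) :
    NonsquareSystem (algebraMap K L ε) (algebraMap K L δ) (algebraMap K L c)
      (algebraMap K L e) := by
  have map_ne {y : K} : y ≠ 0 → algebraMap K L y ≠ 0 := (map_ne_zero _).mpr
  obtain ⟨k, _, hF⟩ := hK.exists_isGlobalFunctionField
  have hL := Q.isFiniteSeparableOverRatFunc hK
  obtain ⟨f, hf, hodd⟩ := Q.exists_forall_odd_ord_iff hK h.isConstant v₀
  have hε := map_ne h.isNonresidue.ne_zero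
  have solve {a g : L} := hL.exists_mul_sub_mul_sq_eq Q.ext_two_ne_zero hε
    (Q.isConstant_algebraMap h.isConstant) (a := a) (g := g)
  have odd_ord_δ (w : Place L) (hw : w.IsNonresidue (algebraMap K L ε)) (hwf : Odd (w.ord f)) :
      Odd (w.ord (algebraMap K L δ)) := by
    obtain ⟨hwv, hram⟩ := (hodd w hw).mp hwf
    rw [Q.ord_algebraMap, hwv]
    exact hram.mul h.odd_ord_δ
  have odd_ord_e (w : Place L) (hw : w.IsNonresidue (algebraMap K L ε))
      (hwcf : Odd (w.ord (algebraMap K L c * f))) : Odd (w.ord (algebraMap K L e)) := by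
    have hwf := hodd w hw
    rw [w.ord_mul _ _ (map_ne h.c_ne_zero) hf, Q.ord_algebraMap, Int.odd_add, Int.odd_mul,
      ← Int.not_odd_iff_even, hwf] at hwcf
    rw [Q.ord_algebraMap]
    have hne : Q.restrict w ≠ v₀ := by
      intro hwv
      have := hwv ▸ h.odd_ord_c
      tauto
    obtain ⟨hram, hc⟩ := hwcf.mpr fun h => hne h.1
    exact hram.mul (h.odd_ord_e _ hne hc)
  obtain ⟨A₁, y₁, z₁, h₁⟩ := solve (map_ne h.δ_ne_zero) hf odd_ord_δ
  obtain ⟨A₂, y₂, z₂, h₂⟩ := solve (mul_ne_zero hε (map_ne h.δ_ne_zero)) hf fun w hw hwf => by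
    rw [w.ord_mul _ _ hε (map_ne h.δ_ne_zero), Q.ord_algebraMap w ε,
      h.isConstant.ord_eq_zero hF, mul_zero, zero_add]
    exact odd_ord_δ w hw hwf
  obtain ⟨A₃, y₃, z₃, h₃⟩ := solve (map_ne h.e_ne_zero) (mul_ne_zero (map_ne h.c_ne_zero) hf)
    odd_ord_e
  exact ⟨f, f⁻¹, A₁, y₁, z₁, A₂, y₂, z₂, A₃, y₃, z₃, mul_inv_cancel₀ hf, h₁, h₂, h₃⟩

theorem odd_ord_iff (h : SystemParams ε δ c e v₀) {f A₁ y₁ z₁ A₂ y₂ z₂ A₃ y₃ z₃ : K}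
    (hf : f ≠ 0) {v : Place K} (hε : v.IsNonresidue ε) (hε₀ : v.ord ε = 0)
    (h₁ : f * (δ - ε * A₁ ^ 2) = y₁ ^ 2 - ε * z₁ ^ 2)
    (h₂ : f * (ε * δ - ε * A₂ ^ 2) = y₂ ^ 2 - ε * z₂ ^ 2)
    (h₃ : c * f * (e - ε * A₃ ^ 2) = y₃ ^ 2 - ε * z₃ ^ 2) : Odd (v.ord f) ↔ v = v₀ := by
  by_cases hδ : Odd (v.ord δ)
  · have hcf := hε.even_ord_of_mul_sub_eq_of_ordGE hε₀ (h.ordGE_e_sub_one v hδ) h₃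
    rw [v.ord_mul _ _ h.c_ne_zero hf, Int.even_add] at hcf
    rw [← Int.not_even_iff_odd, ← hcf, Int.not_even_iff_odd]
    constructor
    · intro hc
      by_contra hne
      exact Int.not_odd_iff_even.mpr (h.even_ord_c v hne hδ) hc
    · rintro rfl
      exact h.odd_ord_c
  · have hne : v ≠ v₀ := by
      rintro rfl
      exact hδ h.odd_ord_δ
    have heven := hε.even_ord_of_mul_sub_eq hε₀ h.δ_ne_zero (Int.not_odd_iff_even.mp hδ) h₁ h₂
    exact iff_of_false (Int.not_odd_iff_even.mpr heven) hne

/- A solution `f` would have odd order at exactly one place of odd degree, contradicting that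
principal divisors have degree `0`. -/
theorem not_nonsquareSystem (h : SystemParams ε δ c e v₀) (h2 : (2 : K) ≠ 0)
    (hK : IsFiniteSeparableOverRatFunc k₀ K) : ¬ NonsquareSystem ε δ c e := by
  obtain ⟨k, _, hF⟩ := hK.exists_isGlobalFunctionField
  have nonresidue_iff :=
    hF.isNonresidue_iff_odd_deg h2 h.isConstant h.isNonresidue.not_isSquare
  rintro ⟨f, f', A₁, y₁, z₁, A₂, y₂, z₂, A₃, y₃, z₃, hf, h₁, h₂, h₃⟩
  refine hF.not_forall_odd_ord_iff_eq (f := f) ((nonresidue_iff v₀).mp h.isNonresidue)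
    fun v hv => ?_
  exact h.odd_ord_iff (left_ne_zero_of_mul_eq_one hf) ((nonresidue_iff v).mpr hv)
    (h.isConstant.ord_eq_zero hF v) h₁ h₂ h₃

end SystemParams

section Existence

variable {k K : Type*} [Field K]

theorem Place.exists_forall_ord_eq (S : Finset (Place K)) {a : Place K → K}
    (ha : ∀ v, a v ≠ 0) :
    ∃ x : K, ∀ v ∈ S, x ≠ 0 ∧ v.ord x = v.ord (a v) ∧ v.OrdGE (x - a v) 1 := by
  obtain ⟨n, hn⟩ : ∃ n : ℤ, 1 ≤ n ∧ ∀ v ∈ S, v.ord (a v) + 1 ≤ n := by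
    refine ⟨1 + ∑ v ∈ S, |v.ord (a v)|, ?_, fun v hv => ?_⟩
    · linarith [Finset.sum_nonneg fun (v : Place K) (_ : v ∈ S) => abs_nonneg (v.ord (a v))]
    · have := Finset.single_le_sum (f := fun v : Place K => |v.ord (a v)|)
        (fun _ _ => abs_nonneg _) hv
      linarith [le_abs_self (v.ord (a v))]
  obtain ⟨x, hx⟩ := Place.weak_approximation S a n
  refine ⟨x, fun v hv => ?_⟩
  obtain ⟨hx₀, hord⟩ := Place.ord_eq_of_ordGE_sub (v := v) (y := x) (ha v)
    (by rw [← neg_sub]; exact ((hx v hv).mono (hn.2 v hv)).neg)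
  exact ⟨hx₀, hord, (hx v hv).mono hn.1⟩

theorem exists_systemParams [Field k] [Finite k] [Algebra k K] (hF : IsGlobalFunctionField k K)
    {ε : K} (hε : IsConstant ε) {v₀ : Place K} (hv₀ : v₀.IsNonresidue ε) :
    ∃ δ c e, SystemParams ε δ c e v₀ := by
  classical
  obtain ⟨δ, hδ, hordδ⟩ := v₀.exists_ord_eq 1
  choose π hπ hordπ using fun v : Place K => v.exists_ord_eq 1
  let S := (hF.finite_support δ hδ).toFinset
  have mem_S {v : Place K} (hv : Odd (v.ord δ)) : v ∈ S :=
    (Set.Finite.mem_toFinset _).mpr fun h => Int.not_odd_zero (h ▸ hv)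
  have hv₀δ : Odd (v₀.ord δ) := hordδ ▸ odd_one
  obtain ⟨c, hc⟩ := Place.exists_forall_ord_eq S (a := fun v => if v = v₀ then δ else 1)
    fun v => by split_ifs <;> simp [hδ]
  obtain ⟨hc₀, hordc, -⟩ := hc v₀ (mem_S hv₀δ)
  rw [if_pos rfl, hordδ] at hordc
  have ord_c {v : Place K} (hvS : v ∈ S) (hv : v ≠ v₀) : v.ord c = 0 := by
    rw [(hc v hvS).2.1, if_neg hv, v.ord_one]
  let T := (hF.finite_support c hc₀).toFinset
  obtain ⟨e, he⟩ := Place.exists_forall_ord_eq (S ∪ T) (a := fun v => if v ∈ S then 1 else π v)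
    fun v => by split_ifs <;> simp [hπ]
  refine ⟨δ, c, e, hε, hv₀, hδ, hc₀, (he v₀ (Finset.mem_union_left _ (mem_S hv₀δ))).1, hv₀δ,
    hordc ▸ odd_one, fun v hv hvc => ?_, fun v hvδ => ?_, fun v hv hvδ => ?_⟩
  · have hvS : v ∉ S := fun h => Int.not_odd_zero (ord_c h hv ▸ hvc)
    have hvT : v ∈ T := (Set.Finite.mem_toFinset _).mpr fun h => Int.not_odd_zero (h ▸ hvc)
    rw [(he v (Finset.mem_union_right _ hvT)).2.1, if_neg hvS, hordπ]
    exact odd_one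
  · simpa only [if_pos (mem_S hvδ)] using (he v (Finset.mem_union_left _ (mem_S hvδ))).2.2
  · exact ord_c (mem_S hvδ) hv ▸ Even.zero

end Existence

/-! ### Systems of polynomial equations -/

section DiophantineSystem

open MvPolynomial

/-- `S ⊆ K ^ ι` is the projection of the zero locus of a finite system of polynomials: the variant
of `IsDiophantine` with several equations and arbitrary finite types of unknowns. -/
def IsDiophantineSystem {ι K : Type*} [CommRing K] (S : Set (ι → K)) : Prop :=
  ∃ (κ τ : Type) (_ : Fintype κ) (_ : Fintype τ) (p : τ → MvPolynomial (ι ⊕ κ) K),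
    ∀ a, a ∈ S ↔ ∃ y : κ → K, ∀ t, eval (Sum.elim a y) (p t) = 0

section Operations

variable {ι ι' K : Type*}

theorem IsDiophantineSystem.preimage [CommRing K] {S : Set (ι → K)} (hS : IsDiophantineSystem S)
    (g : ι → MvPolynomial ι' K) :
    IsDiophantineSystem {a : ι' → K | (fun i => eval a (g i)) ∈ S} := by
  obtain ⟨κ, τ, _, _, p, hp⟩ := hS
  refine ⟨κ, τ, ‹_›, ‹_›, fun t =>
    bind₁ (Sum.elim (fun i => rename Sum.inl (g i)) (fun k => X (Sum.inr k))) (p t), fun a => ?_⟩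
  have eval_bind (y : κ → K) (t : τ) : eval (Sum.elim a y)
      (bind₁ (Sum.elim (fun i => rename Sum.inl (g i)) (fun k => X (Sum.inr k))) (p t)) =
        eval (Sum.elim (fun i => eval a (g i)) y) (p t) := by
    rw [← coe_aeval_eq_eval, ← coe_aeval_eq_eval]
    simp only [RingHom.coe_coe, aeval_bind₁]
    congr 2
    ext (i | k) <;> simp [aeval_rename, Function.comp_def]
  simp only [eval_bind]
  exact hp _

theorem IsDiophantineSystem.union [Field K] {S T : Set (ι → K)} (hS : IsDiophantineSystem S)
    (hT : IsDiophantineSystem T) : IsDiophantineSystem (S ∪ T) := by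
  obtain ⟨κ, τ, _, _, p, hp⟩ := hS
  obtain ⟨κ', τ', _, _, p', hp'⟩ := hT
  refine ⟨κ ⊕ κ', τ × τ', inferInstance, inferInstance, fun t =>
    rename (Sum.map id Sum.inl) (p t.1) * rename (Sum.map id Sum.inr) (p' t.2), fun a => ?_⟩
  simp only [map_mul, mul_eq_zero, eval_rename, Sum.elim_comp_map, Function.comp_id, Prod.forall,
    Set.mem_union, hp, hp']
  constructor
  · rintro (⟨y, hy⟩ | ⟨y, hy⟩)
    · exact ⟨Sum.elim y 0, fun t _ => Or.inl (hy t)⟩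
    · exact ⟨Sum.elim 0 y, fun _ t' => Or.inr (hy t')⟩
  · rintro ⟨y, hy⟩
    by_contra! h
    obtain ⟨t, ht⟩ := h.1 (y ∘ Sum.inl)
    obtain ⟨t', ht'⟩ := h.2 (y ∘ Sum.inr)
    exact (hy t t').elim ht ht'

theorem isDiophantineSystem_mul_sq [Field K] (ε : K) :
    IsDiophantineSystem {a : Unit → K | ∃ y ≠ 0, a () = ε * (y * y)} := by
  refine ⟨Fin 2, Fin 2, inferInstance, inferInstance,
    ![X (Sum.inl ()) - C ε * (X (Sum.inr 0) * X (Sum.inr 0)),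
      X (Sum.inr 0) * X (Sum.inr 1) - 1], fun a => ?_⟩
  simp only [Set.mem_ofPred_eq, Fin.forall_fin_two, Matrix.cons_val_zero, Matrix.cons_val_one,
    map_sub, map_mul, map_one, eval_C, eval_X, Sum.elim_inl, Sum.elim_inr, sub_eq_zero]
  constructor
  · rintro ⟨y, hy, h⟩
    exact ⟨![y, y⁻¹], h, mul_inv_cancel₀ hy⟩
  · rintro ⟨y, h, hy⟩
    exact ⟨y 0, left_ne_zero_of_mul_eq_one hy, h⟩

end Operations

section RestrictScalars

variable {σ K M : Type*} [CommRing M]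

theorem exists_eval_eq_linearMap_eval [CommRing K] [Algebra K M] (φ : M →ₗ[K] K)
    (P : MvPolynomial σ M) :
    ∃ q : MvPolynomial σ K, ∀ b, φ (eval (algebraMap K M ∘ b) P) = eval b q := by
  induction P using MvPolynomial.induction_on' with
  | monomial m c =>
    refine ⟨monomial m (φ c), fun b => ?_⟩
    have h : (m.prod fun i n => algebraMap K M (b i) ^ n) =
        algebraMap K M (m.prod fun i n => b i ^ n) := by
      simp only [Finsupp.prod, map_prod, map_pow]
    simp only [eval_monomial, Function.comp_apply, h]
    rw [mul_comm, ← Algebra.smul_def, map_smul, smul_eq_mul, mul_comm]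
  | add p q hp hq =>
    obtain ⟨p', hp'⟩ := hp
    obtain ⟨q', hq'⟩ := hq
    exact ⟨p' + q', fun b => by simp only [map_add, hp', hq']⟩

/- Weil restriction: write each unknown, and each equation, in coordinates. -/
theorem IsDiophantineSystem.restrictScalars [Field K] [Algebra K M] [Module.Finite K M]
    {ι : Type*} {S : Set (ι → M)} (hS : IsDiophantineSystem S) :
    IsDiophantineSystem {a : ι → K | algebraMap K M ∘ a ∈ S} := by
  obtain ⟨κ, τ, _, _, p, hp⟩ := hS
  let B := Module.finBasis K M
  let g : ι ⊕ κ → MvPolynomial (ι ⊕ κ × Fin (Module.finrank K M)) M :=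
    Sum.elim (fun i => X (Sum.inl i)) fun k => ∑ l, C (B l) * X (Sum.inr (k, l))
  choose q hq using fun (t : τ) (l : Fin (Module.finrank K M)) =>
    exists_eval_eq_linearMap_eval (B.coord l) (bind₁ g (p t))
  have eval_q (a : ι → K) (y : κ × Fin (Module.finrank K M) → K) (t l) :
      eval (Sum.elim a y) (q t l) = B.coord l
        (eval (Sum.elim (algebraMap K M ∘ a) fun k => ∑ l, y (k, l) • B l) (p t)) := by
    rw [← hq, ← coe_aeval_eq_eval, ← coe_aeval_eq_eval]
    simp only [RingHom.coe_coe, aeval_bind₁]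
    congr 3
    ext (i | k) <;> simp [g, Algebra.smul_def, mul_comm]
  refine ⟨κ × Fin _, τ × Fin _, inferInstance, inferInstance, fun t => q t.1 t.2, fun a => ?_⟩
  simp only [Prod.forall, eval_q, ← B.forall_coord_eq_zero_iff, Set.mem_ofPred_eq, hp]
  constructor
  · rintro ⟨z, hz⟩
    refine ⟨fun kl => B.repr (z kl.1) kl.2, ?_⟩
    simpa only [B.sum_repr] using hz
  · rintro ⟨y, hy⟩
    exact ⟨_, hy⟩

end RestrictScalars

section SingleEquation

variable {K : Type*} [Field K] {d : K}

theorem sub_mul_mul_self_eq_zero_iff (hd : ¬ IsSquare d) {u v : K} :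
    u * u - d * (v * v) = 0 ↔ u = 0 ∧ v = 0 := by
  refine ⟨fun h => ?_, fun ⟨hu, hv⟩ => by simp [hu, hv]⟩
  have hv : v = 0 := by
    by_contra hv
    refine hd ⟨u / v, ?_⟩
    rw [div_mul_div_comm, sub_eq_zero.mp h, mul_div_cancel_right₀ _ (mul_ne_zero hv hv)]
  subst hv
  exact ⟨by simpa using h, rfl⟩

theorem exists_eval_eq_zero_iff_forall (hd : ¬ IsSquare d) {σ τ : Type*}
    (p : τ → MvPolynomial σ K) (T : Finset τ) :
    ∃ P : MvPolynomial σ K, ∀ b, eval b P = 0 ↔ ∀ t ∈ T, eval b (p t) = 0 := by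
  classical
  induction T using Finset.induction_on with
  | empty => exact ⟨0, by simp⟩
  | insert t T _ ih =>
    obtain ⟨P, hP⟩ := ih
    refine ⟨p t * p t - C d * (P * P), fun b => ?_⟩
    simp only [map_sub, map_mul, eval_C, sub_mul_mul_self_eq_zero_iff hd, hP,
      Finset.forall_mem_insert]

theorem IsDiophantineSystem.isDiophantine (hd : ¬ IsSquare d) {ι : Type*} [Fintype ι]
    {S : Set (ι → K)} (hS : IsDiophantineSystem S) : IsDiophantine S := by
  obtain ⟨κ, τ, _, _, p, hp⟩ := hS
  obtain ⟨P, hP⟩ := exists_eval_eq_zero_iff_forall hd p Finset.univ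
  let e := Fintype.equivFin κ
  refine ⟨Fintype.card κ, rename (Sum.map id e) P, fun a => ?_⟩
  simp only [eval_rename, Sum.elim_comp_map, Function.comp_id, hP, Finset.mem_univ, true_imp_iff,
    hp]
  exact (e.arrowCongr (Equiv.refl K)).exists_congr fun y => by simp [Function.comp_def]

end SingleEquation

/-! ### The system over a quadratic algebra -/

section Quadratic

/-- The differences of the two sides of the equations of `NonsquareSystem`, as functions of the
eleven unknowns. -/
def nonsquareEquations {R : Type*} [CommRing R] (ε δ c e : R) (z : Fin 11 → R) : Fin 4 → R :=
  ![z 0 * z 1 - 1,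
    z 0 * (δ - ε * z 2 ^ 2) - (z 3 ^ 2 - ε * z 4 ^ 2),
    z 0 * (ε * δ - ε * z 5 ^ 2) - (z 6 ^ 2 - ε * z 7 ^ 2),
    c * z 0 * (e - ε * z 8 ^ 2) - (z 9 ^ 2 - ε * z 10 ^ 2)]

theorem nonsquareSystem_iff {R : Type*} [CommRing R] {ε δ c e : R} :
    NonsquareSystem ε δ c e ↔ ∃ z, ∀ j, nonsquareEquations ε δ c e z j = 0 := by
  constructor
  · rintro ⟨f, f', A₁, y₁, z₁, A₂, y₂, z₂, A₃, y₃, z₃, hf, h₁, h₂, h₃⟩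
    refine ⟨![f, f', A₁, y₁, z₁, A₂, y₂, z₂, A₃, y₃, z₃], fun j => ?_⟩
    fin_cases j
    exacts [sub_eq_zero.mpr hf, sub_eq_zero.mpr h₁, sub_eq_zero.mpr h₂, sub_eq_zero.mpr h₃]
  · rintro ⟨z, hz⟩
    exact ⟨z 0, z 1, z 2, z 3, z 4, z 5, z 6, z 7, z 8, z 9, z 10, sub_eq_zero.mp (hz 0),
      sub_eq_zero.mp (hz 1), sub_eq_zero.mp (hz 2), sub_eq_zero.mp (hz 3)⟩

theorem map_nonsquareEquations {R S : Type*} [CommRing R] [CommRing S] (g : R →+* S)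
    (ε δ c e : R) (z : Fin 11 → R) (j : Fin 4) :
    g (nonsquareEquations ε δ c e z j) =
      nonsquareEquations (g ε) (g δ) (g c) (g e) (g ∘ z) j := by
  fin_cases j <;> simp [nonsquareEquations]

/-- The ring homomorphism `R[√x] → S[√y]` induced by `g : R → S` with `g x = y`. -/
def quadraticMap {R S : Type*} [CommRing R] [CommRing S] (g : R →+* S) {x : R} {y : S}
    (h : g x = y) : QuadraticAlgebra R x 0 →+* QuadraticAlgebra S y 0 where
  toFun z := ⟨g z.re, g z.im⟩
  map_one' := QuadraticAlgebra.ext (map_one g) (map_zero g)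
  map_zero' := by ext <;> simp
  map_mul' z w := by ext <;> simp [← h]
  map_add' z w := by ext <;> simp

/- Evaluate the equations at a generic point of the generic quadratic algebra; the real and
imaginary parts are the polynomials sought. -/
theorem isDiophantineSystem_nonsquareSystem {K : Type*} [CommRing K] (ε δ c e : K) :
    IsDiophantineSystem {a : Unit → K | NonsquareSystem
      (algebraMap K (QuadraticAlgebra K (a ()) 0) ε) (algebraMap K _ δ) (algebraMap K _ c)
      (algebraMap K _ e)} := by
  let A := MvPolynomial (Unit ⊕ (Fin 11 ⊕ Fin 11)) K
  let R := QuadraticAlgebra A (X (Sum.inl ())) 0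
  let Z : Fin 11 → R := fun i => ⟨X (Sum.inr (Sum.inl i)), X (Sum.inr (Sum.inr i))⟩
  let E : Fin 4 → R :=
    nonsquareEquations (algebraMap K R ε) (algebraMap K R δ) (algebraMap K R c) (algebraMap K R e) Z
  refine ⟨Fin 11 ⊕ Fin 11, Fin 4 ⊕ Fin 4, inferInstance, inferInstance,
    Sum.elim (fun j => (E j).re) (fun j => (E j).im), fun a => ?_⟩
  have specialize (y : Fin 11 ⊕ Fin 11 → K) (j : Fin 4) :
      (⟨eval (Sum.elim a y) (E j).re, eval (Sum.elim a y) (E j).im⟩ :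
        QuadraticAlgebra K (a ()) 0) =
      nonsquareEquations (algebraMap K _ ε) (algebraMap K _ δ) (algebraMap K _ c)
        (algebraMap K _ e) (fun i => ⟨y (Sum.inl i), y (Sum.inr i)⟩) j := by
    let g : R →+* QuadraticAlgebra K (a ()) 0 :=
      quadraticMap (eval (Sum.elim a y)) (by rw [eval_X, Sum.elim_inl])
    have g_algebraMap (r : K) : g (algebraMap K R r) = algebraMap K _ r :=
      QuadraticAlgebra.ext (eval_C r) (map_zero _)
    have g_Z : g ∘ Z = fun i => ⟨y (Sum.inl i), y (Sum.inr i)⟩ :=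
      funext fun i => QuadraticAlgebra.ext (eval_X _) (eval_X _)
    have := map_nonsquareEquations g (algebraMap K R ε) (algebraMap K R δ) (algebraMap K R c)
      (algebraMap K R e) Z j
    rwa [g_algebraMap, g_algebraMap, g_algebraMap, g_algebraMap, g_Z] at this
  simp only [Set.mem_ofPred_eq, nonsquareSystem_iff, Sum.forall, Sum.elim_inl, Sum.elim_inr,
    ← forall_and]
  constructor
  · rintro ⟨z, hz⟩
    exact ⟨Sum.elim (fun i => (z i).re) fun i => (z i).im, fun j =>
      QuadraticAlgebra.ext_iff.mp ((specialize (Sum.elim _ _) j).trans (hz j))⟩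
  · rintro ⟨y, hy⟩
    exact ⟨_, fun j => (specialize y j).symm.trans (QuadraticAlgebra.ext_iff.mpr (hy j))⟩

end Quadratic

end DiophantineSystem

/-! ### Constants -/

section Constants

variable {k K : Type*} [Field k] [Finite k] [Field K] [Algebra k K]

theorem IsGlobalFunctionField.finite_setOf_isConstant (hF : IsGlobalFunctionField k K) :
    {x : K | IsConstant x}.Finite :=
  (Set.finite_range (algebraMap k K)).subset hF.exists_algebraMap_eq

theorem IsGlobalFunctionField.exists_isConstant_not_isSquare (hF : IsGlobalFunctionField k K)
    (h2 : (2 : K) ≠ 0) : ∃ ε : K, IsConstant ε ∧ ¬ IsSquare ε := by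
  have hk : (2 : k) ≠ 0 := fun h => h2 (by rw [← map_ofNat (algebraMap k K), h, map_zero])
  obtain ⟨a, ha⟩ := FiniteField.exists_nonsquare (ringChar_ne_two hk)
  refine ⟨algebraMap k K a, fun v => v.ordGE_algebraMap k a, ?_⟩
  rintro ⟨s, hs⟩
  obtain ⟨b, rfl⟩ := hF.exists_algebraMap_eq s fun v => or_iff_not_imp_left.mpr fun hs₀ => by
    have := congrArg v.ord hs
    rw [v.ord_mul _ _ hs₀ hs₀, v.ord_algebraMap k a] at this
    lia
  exact ha ⟨b, (algebraMap k K).injective (by rw [hs, map_mul])⟩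

/- Distinct constants are distinct modulo every place. -/
theorem IsGlobalFunctionField.ncard_isConstant_le_card (hF : IsGlobalFunctionField k K)
    {v : Place K} {S : Finset K} (hS : ∀ x, v.OrdGE x 0 → ∃ s ∈ S, v.OrdGE (x - s) 1) :
    {x : K | IsConstant x}.ncard ≤ S.card := by
  choose! f hfS hf using fun (x : K) (hx : IsConstant x) => hS x (hx v)
  rw [← Set.ncard_coe_finset]
  refine Set.ncard_le_ncard_of_injOn f hfS (fun x hx y hy hxy => ?_) S.finite_toSet
  by_contra hne
  have hsub : v.OrdGE (x - y) 1 := by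
    have := (hf x hx).sub (hf y hy)
    rwa [hxy, sub_sub_sub_cancel_right] at this
  have hconst : IsConstant (x - y) := fun w => by simpa only [min_self] using (hx w).sub (hy w)
  have := hsub.le (sub_ne_zero.mpr hne)
  rw [hconst.ord_eq_zero hF] at this
  lia

end Constants

namespace SqrtExt

variable {M N : Type*} [Field M] [Field N] [Algebra M N] {a : M} (Q : SqrtExt M N a)
include Q

/- At a split place both residue fields agree: approximate `x` at `w` and `0` at the conjugate
place, and take the trace. -/
theorem exists_residue_representatives_of_conjPlace_ne {w : Place N} (hw : Q.conjPlace w ≠ w)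
    {S : Finset M} (hS : ∀ x, (Q.restrict w).OrdGE x 0 →
      ∃ s ∈ S, (Q.restrict w).OrdGE (x - s) 1) :
    ∃ S' : Finset N, S'.card ≤ S.card ∧
      ∀ x, w.OrdGE x 0 → ∃ s ∈ S', w.OrdGE (x - s) 1 := by
  classical
  refine ⟨S.image (algebraMap M N), Finset.card_image_le, fun x hx => ?_⟩
  obtain ⟨z, hz⟩ := Place.weak_approximation {w, Q.conjPlace w} (fun v => if v = w then x else 0) 1
  have hzw : w.OrdGE (z - x) 1 := by simpa using hz w (by simp)
  have hσz : w.OrdGE (Q.σ z) 1 := by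
    simpa [hw, Q.conjPlace_ordGE] using hz (Q.conjPlace w) (by simp)
  obtain ⟨t, ht⟩ := Q.exists_add_σ_eq z
  have hxt : w.OrdGE (x - algebraMap M N t) 1 := by
    rw [show x - algebraMap M N t = -(z - x) - Q.σ z by rw [← ht]; ring]
    exact hzw.neg.sub hσz
  have ht₀ : w.OrdGE (algebraMap M N t) 0 := by
    have := hx.sub (hxt.mono zero_le_one)
    rwa [sub_sub_cancel] at this
  obtain ⟨s, hs, hts⟩ := hS t ((Q.ordGE_algebraMap_zero w t).mp ht₀)
  refine ⟨algebraMap M N s, Finset.mem_image_of_mem _ hs, ?_⟩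
  rw [← Q.ordGE_algebraMap_one, map_sub] at hts
  simpa only [sub_add_sub_cancel] using hxt.add hts

theorem ncard_isConstant_lt (ha : IsConstant a) (hfin : {x : N | IsConstant x}.Finite) :
    {x : M | IsConstant x}.ncard < {x : N | IsConstant x}.ncard := by
  have hroot : IsConstant Q.root := fun w => Or.inr <| by
    have := congrArg w.ord Q.root_mul_self
    rw [w.ord_mul _ _ Q.root_ne_zero Q.root_ne_zero] at this
    have hle := (Q.isConstant_algebraMap ha w).le
      (Q.root_mul_self ▸ mul_self_ne_zero.mpr Q.root_ne_zero)
    lia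
  have hssub : algebraMap M N '' {x | IsConstant x} ⊂ {x | IsConstant x} := by
    refine (Set.ssubset_iff_of_subset ?_).mpr ⟨Q.root, hroot, ?_⟩
    · exact Set.image_subset_iff.mpr fun x hx => Q.isConstant_algebraMap hx
    · rintro ⟨s, -, hs⟩
      exact Q.not_isSquare ⟨s, (algebraMap M N).injective (by
        rw [map_mul, hs, Q.root_mul_self])⟩
  have := Set.ncard_lt_ncard hssub hfin
  rwa [Set.ncard_image_of_injective _ (algebraMap M N).injective] at this

theorem not_isSquare_iff (x : M) :
    ¬ IsSquare x ↔ ¬ IsSquare (algebraMap M N x) ∨ ∃ y ≠ 0, x = a * (y * y) := by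
  constructor
  · refine fun hx => or_iff_not_imp_left.mpr fun h => ?_
    obtain ⟨s, hs⟩ := not_not.mp h
    obtain ⟨u, w, rfl⟩ := Q.exists_eq_add_mul_root s
    obtain ⟨hre, him⟩ := Q.coord_unique (show algebraMap M N x + algebraMap M N 0 * Q.root =
        algebraMap M N (u * u + w * w * a) + algebraMap M N (2 * (u * w)) * Q.root by
      simp only [hs, map_zero, zero_mul, add_zero, map_add, map_mul, map_ofNat, ← Q.root_mul_self]
      ring)
    rcases mul_eq_zero.mp ((mul_eq_zero.mp him.symm).resolve_left Q.two_ne_zero) with rfl | rfl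
    · have hxw : x = a * (w * w) := by rw [hre]; ring
      exact ⟨w, fun hw => hx ⟨0, by rw [hxw, hw]; ring⟩, hxw⟩
    · exact absurd ⟨u, by rw [hre]; ring⟩ hx
  · rintro (h | ⟨y, hy, rfl⟩) hsq
    · exact h (hsq.map _)
    · exact Q.not_isSquare (by simpa [hy] using hsq.div (IsSquare.mul_self y))

end SqrtExt

/-! ### Descent along constant quadratic extensions -/

section Descent

variable {k₀ K : Type*} [Field k₀] [Finite k₀]

theorem SystemParams.not_isSquare_iff [Field K] {ε δ c e : K} {v₀ : Place K}
    (h : SystemParams ε δ c e v₀) (h2 : (2 : K) ≠ 0) (hK : IsFiniteSeparableOverRatFunc k₀ K)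
    (x : K) : ¬ IsSquare x ↔
      NonsquareSystem (algebraMap K (QuadraticAlgebra K x 0) ε) (algebraMap K _ δ)
        (algebraMap K _ c) (algebraMap K _ e) := by
  constructor
  · intro hx
    have : Fact (∀ r : K, r ^ 2 ≠ x + 0 * r) :=
      ⟨fun r hr => hx ⟨r, by rw [← pow_two, hr, zero_mul, add_zero]⟩⟩
    obtain ⟨Q⟩ := nonempty_sqrtExt_quadraticAlgebra h2 hx
    exact h.nonsquareSystem_algebraMap hK Q
  · rintro hS ⟨s, hs⟩
    let φ : QuadraticAlgebra K x 0 →ₐ[K] K := QuadraticAlgebra.lift ⟨s, by simp [hs]⟩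
    refine h.not_nonsquareSystem h2 hK ?_
    simpa only [RingHom.coe_coe, AlgHom.commutes, Algebra.algebraMap_self, RingHom.id_apply]
      using hS.map (φ : QuadraticAlgebra K x 0 →+* K)

theorem SystemParams.isDiophantineSystem_not_isSquare [Field K] {ε δ c e : K} {v₀ : Place K}
    (h : SystemParams ε δ c e v₀) (h2 : (2 : K) ≠ 0) (hK : IsFiniteSeparableOverRatFunc k₀ K) :
    IsDiophantineSystem {a : Unit → K | ¬ IsSquare (a ())} := by
  simpa only [h.not_isSquare_iff h2 hK] using isDiophantineSystem_nonsquareSystem ε δ c e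

theorem SqrtExt.isDiophantineSystem_not_isSquare {M N : Type*} [Field M] [Field N] [Algebra M N]
    {a : M} (Q : SqrtExt M N a) (h : IsDiophantineSystem {a : Unit → N | ¬ IsSquare (a ())}) :
    IsDiophantineSystem {a : Unit → M | ¬ IsSquare (a ())} := by
  have := Q.moduleFinite
  simp only [Q.not_isSquare_iff]
  exact (h.restrictScalars (K := M)).union (isDiophantineSystem_mul_sq a)

/- If a nonsquare constant `ε` has a root modulo `v`, pass to `K(√ε)`: the place `v` splits, so its
residue field, which bounds the number of constants, stays the same while the field of constants
grows. -/
theorem IsFiniteSeparableOverRatFunc.isDiophantineSystem_not_isSquare_of_lt (j : ℕ) :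
    ∀ {K : Type u} [Field K], IsFiniteSeparableOverRatFunc k₀ K → (2 : K) ≠ 0 →
      ∀ (v : Place K) (S : Finset K), (∀ x, v.OrdGE x 0 → ∃ s ∈ S, v.OrdGE (x - s) 1) →
        S.card < j + {x : K | IsConstant x}.ncard →
          IsDiophantineSystem {a : Unit → K | ¬ IsSquare (a ())} := by
  induction j with
  | zero =>
    intro K _ hK _ v S hS hlt
    obtain ⟨k, _, hF⟩ := hK.exists_isGlobalFunctionField
    have := hF.ncard_isConstant_le_card hS
    lia
  | succ j ih =>
    intro K _ hK h2 v S hS hlt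
    obtain ⟨k, _, hF⟩ := hK.exists_isGlobalFunctionField
    obtain ⟨ε, hε, hsq⟩ := hF.exists_isConstant_not_isSquare h2
    by_cases hv : v.IsNonresidue ε
    · obtain ⟨δ, c, e, h⟩ := exists_systemParams hF hε hv
      exact h.isDiophantineSystem_not_isSquare h2 hK
    · obtain ⟨L, _, _, ⟨Q⟩⟩ := exists_sqrtExt h2 hsq
      have hL := Q.isFiniteSeparableOverRatFunc hK
      obtain ⟨k', _, hN⟩ := hL.exists_isGlobalFunctionField
      obtain ⟨w, rfl⟩ := Q.exists_restrict_eq hN v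
      have hw2 : w.ord 2 = 0 := by simpa only [map_ofNat] using w.ord_algebraMap k' (2 : k')
      have hsplit : Q.conjPlace w ≠ w := fun h => hv (Q.isNonresidue_restrict_of_conjPlace_eq hw2
        ((Q.isConstant_algebraMap hε).ord_eq_zero hN _) h)
      obtain ⟨S', hcard, hS'⟩ := Q.exists_residue_representatives_of_conjPlace_ne hsplit hS
      have hgrow := Q.ncard_isConstant_lt hε hN.finite_setOf_isConstant
      exact Q.isDiophantineSystem_not_isSquare
        (ih hL Q.ext_two_ne_zero w S' hS' (by lia))

theorem IsFiniteSeparableOverRatFunc.isDiophantineSystem_not_isSquare {K : Type u} [Field K]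
    (hK : IsFiniteSeparableOverRatFunc k₀ K) (h2 : (2 : K) ≠ 0) :
    IsDiophantineSystem {a : Unit → K | ¬ IsSquare (a ())} := by
  obtain ⟨k, _, hF⟩ := hK.exists_isGlobalFunctionField
  obtain ⟨v⟩ := hF.nonempty_place
  obtain ⟨S, hS⟩ := hF.exists_residue_representatives v
  exact hK.isDiophantineSystem_not_isSquare_of_lt (S.card + 1) h2 v S hS (by lia)

end Descent

/-! ### Reduction to the separable case -/

theorem isSquare_pow_iff_of_odd {F : Type*} [Field F] {n : ℕ} (hn : Odd n) {x : F} :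
    IsSquare (x ^ n) ↔ IsSquare x := by
  refine ⟨fun h => ?_, fun h => h.pow n⟩
  obtain ⟨r, rfl⟩ := hn
  rcases eq_or_ne x 0 with rfl | hx
  · exact IsSquare.zero
  · simpa [pow_succ, hx] using h.div ((even_two_mul r).isSquare_pow x)

open IntermediateField in
theorem finite_of_isIntegralElem_of_forall_mem_subfield {A B : Type*} [Field A] [Field B]
    (f : A →+* B) {x : B} (hx : f.IsIntegralElem x)
    (h : ∀ T : Subfield B, f.fieldRange ≤ T → x ∈ T → T = ⊤) : f.Finite := by
  let := f.toAlgebra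
  have hfin : FiniteDimensional A A⟮x⟯ := adjoin.finiteDimensional hx
  have htop : A⟮x⟯ = ⊤ := by
    apply toSubfield_injective
    refine h _ ?_ (mem_adjoin_simple_self A x)
    rintro _ ⟨a, rfl⟩
    exact A⟮x⟯.algebraMap_mem a
  rw [htop] at hfin
  exact Module.Finite.equiv topEquiv.toLinearEquiv

theorem finite_iterateFrobenius_ratFunc (k : Type*) [Field k] (p n : ℕ) [ExpChar k p]
    [PerfectRing k p] [ExpChar (RatFunc k) p] : (iterateFrobenius (RatFunc k) p n).Finite := by
  refine finite_of_isIntegralElem_of_forall_mem_subfield _ (x := RatFunc.X) ?_ fun T hT hX => ?_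
  · refine ⟨Polynomial.X ^ p ^ n - Polynomial.C RatFunc.X,
      Polynomial.monic_X_pow_sub_C _ (expChar_pow_pos k p n).ne', ?_⟩
    simp [iterateFrobenius_def]
  · let E : IntermediateField k (RatFunc k) := T.toIntermediateField fun a => by
      obtain ⟨b, rfl⟩ := (bijective_iterateFrobenius k p n).2 a
      rw [iterateFrobenius_def, map_pow]
      exact hT ⟨algebraMap k _ b, iterateFrobenius_def ..⟩
    have hE : E = ⊤ := top_le_iff.mp (RatFunc.adjoin_X (K := k) ▸
      IntermediateField.adjoin_simple_le_iff.mpr hX)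
    exact congrArg IntermediateField.toSubfield hE

theorem finite_isPurelyInseparable_iterateFrobenius {F S K : Type*} [Field F] [Field S] [Field K]
    [Algebra F S] [Algebra S K] [Algebra F K] [IsScalarTower F S K] [Module.Finite F S]
    [IsPurelyInseparable.HasExponent S K] {p n : ℕ} [ExpChar F p] [ExpChar S p]
    (hn : IsPurelyInseparable.exponent S K ≤ n) (hF : (iterateFrobenius F p n).Finite) :
    (IsPurelyInseparable.iterateFrobenius S K p hn).Finite := by
  apply RingHom.Finite.of_comp_finite (f := algebraMap F K)
  have hcomp : (IsPurelyInseparable.iterateFrobenius S K p hn).comp (algebraMap F K) =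
      (algebraMap F S).comp (iterateFrobenius F p n) := by
    ext1 x
    apply (algebraMap S K).injective
    rw [RingHom.comp_apply, IsPurelyInseparable.algebraMap_iterateFrobenius, RingHom.comp_apply,
      iterateFrobenius_def, ← IsScalarTower.algebraMap_apply F S K, map_pow]
  rw [hcomp]
  exact (RingHom.finite_algebraMap.mpr ‹_›).comp hF

theorem isSquare_isPurelyInseparable_iterateFrobenius_iff {S K : Type*} [Field S] [Field K]
    [Algebra S K] [IsPurelyInseparable.HasExponent S K] {p n : ℕ} [ExpChar S p] (hp : Odd p)
    (hn : IsPurelyInseparable.exponent S K ≤ n) (x : K) :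
    IsSquare (IsPurelyInseparable.iterateFrobenius S K p hn x) ↔ IsSquare x := by
  refine ⟨fun h => ?_, fun h => h.map _⟩
  have := h.map (algebraMap S K)
  rwa [IsPurelyInseparable.algebraMap_iterateFrobenius,
    isSquare_pow_iff_of_odd (hp.pow (n := n))] at this

theorem IsDiophantineSystem.comap_of_finite {ι K S : Type*} [Field K] [CommRing S]
    {φ : K →+* S} (hφ : φ.Finite) {A : Set (ι → S)} (hA : IsDiophantineSystem A) :
    IsDiophantineSystem {a : ι → K | φ ∘ a ∈ A} := by
  let := φ.toAlgebra
  have : Module.Finite K S := hφ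
  exact hA.restrictScalars

/- Let `S` be the separable closure of `Fq(t)` in `K`. A power of Frobenius maps `K` into `S`,
making `S` finite over `K`, and it preserves and reflects squares as its exponent is odd. -/
theorem isDiophantineSystem_not_isSquare (Fq K : Type*) [Field Fq] [Fintype Fq] [Field K]
    [Algebra (RatFunc Fq) K] [FunctionField Fq K] (hq : Odd (Fintype.card Fq)) :
    IsDiophantineSystem {a : Unit → K | ¬ IsSquare (a ())} := by
  obtain ⟨p, _⟩ := CharP.exists Fq
  obtain ⟨m, hprime, hcard⟩ := FiniteField.card Fq p
  have : Fact p.Prime := ⟨hprime⟩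
  have hp : Odd p := (Nat.odd_pow_iff m.ne_zero).mp (hcard ▸ hq)
  let S := separableClosure (RatFunc Fq) K
  have : CharP (RatFunc Fq) p :=
    charP_of_injective_algebraMap (algebraMap Fq (RatFunc Fq)).injective p
  have : CharP S p := charP_of_injective_algebraMap (algebraMap (RatFunc Fq) S).injective p
  have h2 : (2 : S) ≠ 0 := Ring.two_ne_zero (ringChar.eq S p ▸ hp.ne_two_of_dvd_nat dvd_rfl)
  have hS : IsFiniteSeparableOverRatFunc Fq S := ⟨inferInstance, inferInstance, inferInstance⟩
  simpa only [Set.mem_ofPred_eq, Function.comp_apply,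
    isSquare_isPurelyInseparable_iterateFrobenius_iff hp] using
    (hS.isDiophantineSystem_not_isSquare h2).comap_of_finite
      (finite_isPurelyInseparable_iterateFrobenius (K := K) le_rfl
        (finite_iterateFrobenius_ratFunc Fq p _))

end NonsquareDiophantine

/-- Over a global function field `K` of odd characteristic, the set of pairs
`(a₁, a₂) ∈ (Kˣ)²` such that `−a₁a₂` is not a square in `K` is diophantine over `K`. -/
theorem nonsquare_product_diophantine_functionField
    (Fq K : Type*) [Field Fq] [Fintype Fq] [Field K] [Algebra (RatFunc Fq) K]
    [FunctionField Fq K] (hq : Odd (Fintype.card Fq)) :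
    IsDiophantine {a : Fin 2 → K |
      a 0 ≠ 0 ∧ a 1 ≠ 0 ∧ ¬ ∃ s : K, -(a 0 * a 1) = s ^ 2} := by
  have mem_iff (a : Fin 2 → K) : (a 0 ≠ 0 ∧ a 1 ≠ 0 ∧ ¬ ∃ s : K, -(a 0 * a 1) = s ^ 2) ↔
      ¬ IsSquare (-(a 0 * a 1)) := by
    rw [← isSquare_iff_exists_sq]
    refine ⟨fun h => h.2.2, fun h => ⟨?_, ?_, h⟩⟩ <;> exact fun h₀ => h (by simp [h₀])
  simp only [mem_iff]
  by_cases hd : ∃ d : K, ¬ IsSquare d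
  · obtain ⟨d, hd⟩ := hd
    have h := (NonsquareDiophantine.isDiophantineSystem_not_isSquare Fq K hq).preimage
      (fun _ => -(MvPolynomial.X (0 : Fin 2) * MvPolynomial.X 1))
    simpa using h.isDiophantine hd
  · push Not at hd
    exact ⟨0, 1, fun a => by simp [hd]⟩
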